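/- Let X ⊂ P^n be a non-singular cubic hypersurface with n ≥ 7. Then for generic x ∈ X (that is, for all x in a dense open subset of X) the cone C_x^1 = C_x(F_1(X)), the union of all lines contained in X that pass through x, is geometrically integral and has degree 6 (and dimension n − 3). -/

import Mathlib

noncomputable section

abbrev KK : Type := AlgebraicClosure ℚ

abbrev Pn (N : ℕ) := Projectivization KK (Fin (N + 1) → KK)

/-- The common zero set in projective space of a family of polynomials
(membership tested on the chosen representative). -/
def projZeros {N : ℕ} (S : Set (MvPolynomial (Fin (N + 1)) KK)) : Set (Pn N) :=
  {x | ∀ f ∈ S, MvPolynomial.eval x.rep f = 0}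

/-- Zariski-closed subsets of projective space: common zero sets of families of forms. -/
def ProjClosed {N : ℕ} (V : Set (Pn N)) : Prop :=
  ∃ S : Set (MvPolynomial (Fin (N + 1)) KK),
    (∀ f ∈ S, ∃ d, f.IsHomogeneous d) ∧ V = projZeros S

def ProjIrred {N : ℕ} (V : Set (Pn N)) : Prop :=
  V.Nonempty ∧ ∀ C₁ C₂ : Set (Pn N), ProjClosed C₁ → ProjClosed C₂ →
    V ⊆ C₁ ∪ C₂ → V ⊆ C₁ ∨ V ⊆ C₂

/-- A (geometrically integral) projective variety: an irreducible Zariski-closed set. -/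
def ProjVariety {N : ℕ} (V : Set (Pn N)) : Prop := ProjClosed V ∧ ProjIrred V

/-- Dimension of a subset of projective space: Krull dimension of the poset of
irreducible closed subsets contained in it. The empty set has dimension `⊥`. -/
def projDim {N : ℕ} (V : Set (Pn N)) : WithBot ENat :=
  Order.krullDim {W : Set (Pn N) // ProjVariety W ∧ W ⊆ V}

/-- The set of projective points lying on a linear subspace. -/
def planeSet {N : ℕ} (W : Submodule KK (Fin (N + 1) → KK)) : Set (Pn N) :=
  {x | x.rep ∈ W}

/-- Degree of a subset of projective space: the largest (finite) number of points
in a linear section. -/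
def projDeg {N : ℕ} (V : Set (Pn N)) : ℕ :=
  sSup {k : ℕ | ∃ W : Submodule KK (Fin (N + 1) → KK),
    (V ∩ planeSet W).Finite ∧ (V ∩ planeSet W).ncard = k}

/-- The hypersurface cut out by a form. -/
def hyp {n : ℕ} (F : MvPolynomial (Fin (n + 1)) KK) : Set (Pn n) :=
  {x | MvPolynomial.eval x.rep F = 0}

/-- A form over the algebraic closure is non-singular if its partial derivatives
have no common non-trivial zero. -/
def NonsingularK {n : ℕ} (F : MvPolynomial (Fin (n + 1)) KK) : Prop :=
  ∀ z : Fin (n + 1) → KK,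
    (∀ i, MvPolynomial.eval z (MvPolynomial.pderiv i F) = 0) → z = 0

/-- The Fano set of (projective) m-planes contained in X, as linear subspaces of
dimension m+1. -/
def Fano (m n : ℕ) (X : Set (Pn n)) : Set (Submodule KK (Fin (n + 1) → KK)) :=
  {W | Module.finrank KK W = m + 1 ∧ planeSet W ⊆ X}

/-- Closed subsets of the Grassmannian of m-planes in Pⁿ, described via Stiefel
coordinates: Z is closed iff the set of (m+1)-tuples of vectors which, when
linearly independent, span a member of Z, is Zariski-closed in affine space. -/
def GrClosed (m n : ℕ) (Z : Set (Submodule KK (Fin (n + 1) → KK))) : Prop :=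
  (∀ W ∈ Z, Module.finrank KK W = m + 1) ∧
  ∃ S : Set (MvPolynomial (Fin (m + 1) × Fin (n + 1)) KK),
    {v : Fin (m + 1) → Fin (n + 1) → KK |
      LinearIndependent KK v → Submodule.span KK (Set.range v) ∈ Z}
    = {v | ∀ f ∈ S, MvPolynomial.eval (fun p => v p.1 p.2) f = 0}

def GrIrred (m n : ℕ) (Z : Set (Submodule KK (Fin (n + 1) → KK))) : Prop :=
  Z.Nonempty ∧ ∀ C₁ C₂ : Set (Submodule KK (Fin (n + 1) → KK)),
    GrClosed m n C₁ → GrClosed m n C₂ → Z ⊆ C₁ ∪ C₂ → Z ⊆ C₁ ∨ Z ⊆ C₂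

/-- A (geometrically integral) subvariety of the Grassmannian. -/
def GrVariety (m n : ℕ) (Z : Set (Submodule KK (Fin (n + 1) → KK))) : Prop :=
  GrClosed m n Z ∧ GrIrred m n Z

/-- Dimension of a subset of the Grassmannian of m-planes in Pⁿ. -/
def grDim (m n : ℕ) (Z : Set (Submodule KK (Fin (n + 1) → KK))) : WithBot ENat :=
  Order.krullDim {W : Set (Submodule KK (Fin (n + 1) → KK)) // GrVariety m n W ∧ W ⊆ Z}

/-- D(Z): the union of the planes parametrised by Z. -/
def DSet {n : ℕ} (Z : Set (Submodule KK (Fin (n + 1) → KK))) : Set (Pn n) :=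
  {x | ∃ Λ ∈ Z, x.rep ∈ Λ}

/-- A primitive integer vector: the gcd of its coordinates is 1. -/
def IsPrimitiveVec {n : ℕ} (x : Fin n → ℤ) : Prop := Finset.univ.gcd x = 1

/-- Height of an integer vector: the maximum modulus of its coordinates. -/
def heightVec {n : ℕ} (x : Fin n → ℤ) : ℝ :=
  ((Finset.univ.sup fun i => (x i).natAbs : ℕ) : ℝ)

def coeK {n : ℕ} (x : Fin n → ℤ) : Fin n → KK := fun i => ((x i : ℤ) : KK)

def coeQ {n : ℕ} (x : Fin n → ℤ) : Fin n → ℚ := fun i => ((x i : ℤ) : ℚ)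

/-- The number of rational points of height at most B on a subset V of projective
space, counted via primitive integer vectors (each projective rational point
corresponds to exactly two primitive vectors). -/
def NV {n : ℕ} (V : Set (Pn n)) (B : ℝ) : ℕ :=
  Set.ncard {x : Fin (n + 1) → ℤ | IsPrimitiveVec x ∧ heightVec x ≤ B ∧
    ∃ h : coeK x ≠ 0, Projectivization.mk KK (coeK x) h ∈ V}

/-- An integer form is non-singular if its partial derivatives have no common
non-trivial zero over the algebraic closure of ℚ. -/
def NonsingularZ {n : ℕ} (F : MvPolynomial (Fin (n + 1)) ℤ) : Prop :=
  ∀ z : Fin (n + 1) → KK,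
    (∀ i, MvPolynomial.aeval z (MvPolynomial.pderiv i F) = 0) → z = 0

/-- Base change of an integer polynomial to the algebraic closure of ℚ. -/
def mapK {n : ℕ} (F : MvPolynomial (Fin (n + 1)) ℤ) : MvPolynomial (Fin (n + 1)) KK :=
  MvPolynomial.map (Int.castRingHom KK) F

/-- The Plücker height of the rational m-plane spanned by the integer vectors v:
the maximum modulus of the (m+1)×(m+1) minors, divided by their gcd. -/
def pluckerHeight {m n : ℕ} (v : Fin (m + 1) → Fin (n + 1) → ℤ) : ℕ :=
  (Finset.univ.sup fun s : Fin (m + 1) → Fin (n + 1) =>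
    (Matrix.det (Matrix.of fun i j => v i (s j))).natAbs) /
  (Finset.univ.gcd fun s : Fin (m + 1) → Fin (n + 1) =>
    (Matrix.det (Matrix.of fun i j => v i (s j))).natAbs)

def betaExp (k : ℕ) : ℝ := if k ≤ 3 then 0 else 1/4

def sigmaExp (n k : ℕ) : ℝ :=
  if (k : ℝ) ≤ ((n : ℝ) - 1) / 2 then (k : ℝ) + 1 else (k : ℝ) + betaExp k

def tauExp (n k : ℕ) : ℝ :=
  if (k : ℝ) < ((n : ℝ) - 1) / 2 then (k : ℝ) + 1 else (k : ℝ) + betaExp k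

/-- E: the union of the (n-1)/2-planes contained in X (for n odd; empty for n even). -/
def bigE {n : ℕ} (X : Set (Pn n)) : Set (Pn n) :=
  {x | n % 2 = 1 ∧ ∃ W : Submodule KK (Fin (n + 1) → KK),
    Module.finrank KK W = (n - 1) / 2 + 1 ∧ planeSet W ⊆ X ∧ x ∈ planeSet W}

/-- The cone of lines contained in X passing through x. -/
def coneOfLines {n : ℕ} (X : Set (Pn n)) (x : Pn n) : Set (Pn n) :=
  {y | ∃ L : Submodule KK (Fin (n + 1) → KK),
    Module.finrank KK L = 2 ∧ planeSet L ⊆ X ∧ x.rep ∈ L ∧ y.rep ∈ L}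

/-!
Write the cubic form as `F y = T y y y` with `T` symmetric trilinear. The coefficients of
`F (x + t v)` show that `v` spans with a point `x` of `X` a line in `X` if and only if
`T x x v = T x v v = T v v v = 0`. So the cone of lines is cut out by three forms, and `x` is taken
such that the quadratic form `T x` is non-degenerate. Such points exist: otherwise `X` would lie in
its Hessian, whereas at a point of `X` where the rank of `T x` is maximal and deficient, moving
along a tangent direction raises the rank, because `T z z = 0` only for `z = 0`.

For isotropic `e₀`, `e₁` in the tangent hyperplane with `2 T x e₀ e₁ = 1`, the map
`u ↦ e₀ - T x u u • e₁ + u` parametrises an open part of the tangent quadric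
`T x x v = T x v v = 0`. In this chart the cubic becomes a polynomial of degree six whose leading
form is a non-zero multiple of the cube of the quadric. A proper factorisation of this sextic would
write `F` on the tangent quadric as a linear form times a quadratic form, and a dimension count
then gives a singular point of `X`. So the sextic is prime and the cone is irreducible. The sextic
is also separable on a generic line, which yields a plane section of the cone with at least six
points. That there are never more follows by projecting the intersection of a conic and a cubic to
a line.
-/

namespace CubicCone

open MvPolynomial Module

section PolynomialFunctions

variable {K : Type*} [Field K] {U W : Type*} [AddCommGroup U] [Module K U]
  [AddCommGroup W] [Module K W]

/-- The algebra of polynomial functions on a vector space, generated by the linear functionals.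
It allows polynomial arguments without a choice of coordinates. -/
def polyFun (K : Type*) [Field K] (U : Type*) [AddCommGroup U] [Module K U] :
    Subalgebra K (U → K) :=
  Algebra.adjoin K (Set.range fun ℓ : U →ₗ[K] K => (ℓ : U → K))

theorem linear_mem_polyFun (ℓ : U →ₗ[K] K) : (fun u => ℓ u) ∈ polyFun K U :=
  Algebra.subset_adjoin ⟨ℓ, rfl⟩

theorem const_mem_polyFun (c : K) : (fun _ => c : U → K) ∈ polyFun K U :=
  (polyFun K U).algebraMap_mem c

theorem id_mem_polyFun : (fun t => t : K → K) ∈ polyFun K K :=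
  linear_mem_polyFun (LinearMap.id : K →ₗ[K] K)

theorem sum_mem_polyFun {ι : Type*} {s : Finset ι} {f : ι → U → K}
    (hf : ∀ i ∈ s, f i ∈ polyFun K U) : (fun u => ∑ i ∈ s, f i u) ∈ polyFun K U := by
  simpa only [← Finset.sum_apply] using (polyFun K U).sum_mem hf

theorem comp_mem_polyFun {f : U → K} (hf : f ∈ polyFun K U) {φ : W → U}
    (hφ : ∀ ℓ : U →ₗ[K] K, (fun w => ℓ (φ w)) ∈ polyFun K W) :
    (fun w => f (φ w)) ∈ polyFun K W := by
  induction hf using Algebra.adjoin_induction with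
  | mem f hf => obtain ⟨ℓ, rfl⟩ := hf; exact hφ ℓ
  | algebraMap c => exact const_mem_polyFun c
  | add f g _ _ hf hg => exact (polyFun K W).add_mem hf hg
  | mul f g _ _ hf hg => exact (polyFun K W).mul_mem hf hg

theorem comp_linear_mem_polyFun {f : U → K} (hf : f ∈ polyFun K U) (L : W →ₗ[K] U) :
    (fun w => f (L w)) ∈ polyFun K W :=
  comp_mem_polyFun hf fun ℓ => linear_mem_polyFun (ℓ ∘ₗ L)

theorem comp_line_mem_polyFun {f : U → K} (hf : f ∈ polyFun K U) (y u : U) :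
    (fun t : K => f (y + t • u)) ∈ polyFun K K :=
  comp_mem_polyFun hf fun ℓ => by
    simp only [map_add, map_smul, smul_eq_mul]
    exact (polyFun K K).add_mem (const_mem_polyFun _)
      ((polyFun K K).mul_mem id_mem_polyFun (const_mem_polyFun _))

theorem bilinear_mem_polyFun [FiniteDimensional K U] (B : U →ₗ[K] U →ₗ[K] K) :
    (fun u => B u u) ∈ polyFun K U := by
  let b := finBasis K U
  have expand (u : U) : B u u = ∑ i, b.coord i u * B (b i) u := by
    simpa [b.sum_repr] using congr($(map_sum B (fun i => b.repr u i • b i) .univ) u)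
  simp only [expand]
  exact sum_mem_polyFun fun i _ =>
    (polyFun K U).mul_mem (linear_mem_polyFun (b.coord i)) (linear_mem_polyFun (B (b i)))

theorem trilinear_mem_polyFun [FiniteDimensional K U] (T : U →ₗ[K] U →ₗ[K] U →ₗ[K] K) :
    (fun u => T u u u) ∈ polyFun K U := by
  let b := finBasis K U
  have expand (u : U) : T u u u = ∑ i, b.coord i u * T (b i) u u := by
    simpa [b.sum_repr] using congr($(map_sum T (fun i => b.repr u i • b i) .univ) u u)
  simp only [expand]
  exact sum_mem_polyFun fun i _ =>
    (polyFun K U).mul_mem (linear_mem_polyFun (b.coord i)) (bilinear_mem_polyFun (T (b i)))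

theorem eval_mem_polyFun {ι : Type*} (p : MvPolynomial ι K) :
    (fun y : ι → K => eval y p) ∈ polyFun K (ι → K) := by
  induction p using MvPolynomial.induction_on with
  | C a => simpa only [eval_C] using const_mem_polyFun a
  | add p q hp hq =>
    simp only [map_add]
    exact (polyFun K _).add_mem hp hq
  | mul_X p i hp =>
    simp only [map_mul, eval_X]
    exact (polyFun K _).mul_mem hp (linear_mem_polyFun (LinearMap.proj (φ := fun _ => K) i))

theorem exists_eval_eq {ι : Type*} [Finite ι] {f : (ι → K) → K} (hf : f ∈ polyFun K (ι → K)) :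
    ∃ p : MvPolynomial ι K, ∀ y, eval y p = f y := by
  classical
  have := Fintype.ofFinite ι
  induction hf using Algebra.adjoin_induction with
  | mem f hf =>
    obtain ⟨ℓ, rfl⟩ := hf
    refine ⟨∑ i, C (ℓ fun j => if i = j then 1 else 0) * X i, fun y => ?_⟩
    simp [LinearMap.pi_apply_eq_sum_univ ℓ y, mul_comm]
  | algebraMap c => exact ⟨C c, fun y => eval_C c⟩
  | add f g _ _ hf hg =>
    obtain ⟨p, hp⟩ := hf
    obtain ⟨q, hq⟩ := hg
    exact ⟨p + q, fun y => by simp [hp, hq]⟩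
  | mul f g _ _ hf hg =>
    obtain ⟨p, hp⟩ := hf
    obtain ⟨q, hq⟩ := hg
    exact ⟨p * q, fun y => by simp [hp, hq]⟩

theorem exists_polynomial_eval_line {f : U → K} (hf : f ∈ polyFun K U) (y u : U) :
    ∃ p : Polynomial K, ∀ t, p.eval t = f (y + t • u) := by
  induction hf using Algebra.adjoin_induction with
  | mem f hf =>
    obtain ⟨ℓ, rfl⟩ := hf
    exact ⟨.C (ℓ y) + .C (ℓ u) * .X, fun t => by simpa using mul_comm _ _⟩
  | algebraMap c => exact ⟨.C c, fun t => Polynomial.eval_C⟩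
  | add f g _ _ hf hg =>
    obtain ⟨p, hp⟩ := hf
    obtain ⟨q, hq⟩ := hg
    exact ⟨p + q, fun t => by simp [hp, hq]⟩
  | mul f g _ _ hf hg =>
    obtain ⟨p, hp⟩ := hf
    obtain ⟨q, hq⟩ := hg
    exact ⟨p * q, fun t => by simp [hp, hq]⟩

/-- Irreducibility of a set for the Zariski topology, in terms of its non-empty open subsets: two
polynomial functions that are not identically zero on `S` have a common non-zero on `S`. -/
def PolyIrreducible (K : Type*) [Field K] {U : Type*} [AddCommGroup U] [Module K U]
    (S : Set U) : Prop :=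
  ∀ g ∈ polyFun K U, ∀ h ∈ polyFun K U,
    (∃ v ∈ S, g v ≠ 0) → (∃ w ∈ S, h w ≠ 0) → ∃ v ∈ S, g v ≠ 0 ∧ h v ≠ 0

theorem polyIrreducible_univ [Infinite K] : PolyIrreducible K (Set.univ : Set U) := by
  rintro g hg h hh ⟨v, -, hv⟩ ⟨w, -, hw⟩
  obtain ⟨p, hp⟩ := exists_polynomial_eval_line hg v (w - v)
  obtain ⟨q, hq⟩ := exists_polynomial_eval_line hh v (w - v)
  have hp0 : p ≠ 0 := by rintro rfl; exact hv (by simpa using (hp 0).symm)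
  have hq0 : q ≠ 0 := by rintro rfl; exact hw (by simpa using (hq 1).symm)
  obtain ⟨t, ht⟩ : ∃ t, (p * q).eval t ≠ 0 := by
    contrapose! hp0
    exact (mul_eq_zero.mp (Polynomial.funext fun t => by simp [hp0])).resolve_right hq0
  rw [Polynomial.eval_mul, hp, hq] at ht
  exact ⟨_, trivial, left_ne_zero_of_mul ht, right_ne_zero_of_mul ht⟩

theorem PolyIrreducible.image {S : Set U} (hS : PolyIrreducible K S) (L : U →ₗ[K] W) :
    PolyIrreducible K (L '' S) := by
  rintro g hg h hh ⟨_, ⟨v, hv, rfl⟩, hgv⟩ ⟨_, ⟨w, hw, rfl⟩, hhw⟩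
  obtain ⟨u, hu, hgu, hhu⟩ := hS _ (comp_linear_mem_polyFun hg L) _
    (comp_linear_mem_polyFun hh L) ⟨v, hv, hgv⟩ ⟨w, hw, hhw⟩
  exact ⟨L u, ⟨u, hu, rfl⟩, hgu, hhu⟩

end PolynomialFunctions

section Nullstellensatz

variable {K : Type*} [Field K] [IsAlgClosed K]

theorem squarefree_dvd_of_forall_eval_eq_zero {ι : Type*} [Finite ι] {f g : MvPolynomial ι K}
    (hf : Squarefree f) (h : ∀ y, eval y f = 0 → eval y g = 0) : f ∣ g := by
  have mem_radical : g ∈ (Ideal.span {f}).radical := by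
    rw [← vanishingIdeal_zeroLocus_eq_radical (K := K), mem_vanishingIdeal_iff]
    intro y hy
    rw [aeval_eq_eval] at *
    exact h y (by simpa [aeval_eq_eval] using hy f (Ideal.mem_span_singleton_self f))
  obtain ⟨N, hN⟩ := mem_radical
  exact hf.isRadical N g (Ideal.mem_span_singleton.mp hN)

theorem polyIrreducible_zeros {ι : Type*} [Finite ι] {f : MvPolynomial ι K} (hf : Prime f) :
    PolyIrreducible K {y | eval y f = 0} := by
  rintro g hg h hh ⟨v, hv, hgv⟩ ⟨w, hw, hhw⟩
  obtain ⟨p, hp⟩ := exists_eval_eq hg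
  obtain ⟨q, hq⟩ := exists_eval_eq hh
  by_contra! hgh
  have vanish : ∀ y, eval y f = 0 → eval y (p * q) = 0 := fun y hy => by
    rw [map_mul, hp, hq, mul_eq_zero, or_iff_not_imp_left]
    exact hgh y hy
  rcases hf.dvd_or_dvd (squarefree_dvd_of_forall_eval_eq_zero hf.irreducible.squarefree vanish)
    with ⟨r, rfl⟩ | ⟨r, rfl⟩
  · exact hgv (by rw [← hp, map_mul, hv, zero_mul])
  · exact hhw (by rw [← hq, map_mul, hw, zero_mul])

theorem exists_height_vanishingIdeal_singleton_eq (N : ℕ) :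
    ∃ a : Fin N → K, (vanishingIdeal K {a} : Ideal (MvPolynomial (Fin N) K)).height = N := by
  have dim : ringKrullDim (MvPolynomial (Fin N) K) = N := by
    rw [MvPolynomial.ringKrullDim_of_isNoetherianRing]
    simp
  have : FiniteRingKrullDim (MvPolynomial (Fin N) K) := by
    rw [finiteRingKrullDim_iff_ne_bot_and_top, dim]
    exact ⟨by simp, fun h => ENat.natCast_ne_top N (WithBot.coe_injective h)⟩
  obtain ⟨M, hM, height⟩ := Ideal.exists_isMaximal_height (R := MvPolynomial (Fin N) K)
  obtain ⟨a, rfl⟩ := isMaximal_iff_eq_vanishingIdeal_singleton.mp hM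
  exact ⟨a, by exact_mod_cast height.trans dim⟩

theorem le_card_of_isolated_zero {N : ℕ} {ι : Type*} [Fintype ι] {a : Fin N → K}
    (ha : (vanishingIdeal K {a} : Ideal (MvPolynomial (Fin N) K)).height = N)
    (g : ι → MvPolynomial (Fin N) K) (hg : ∀ y, (∀ j, eval y (g j) = 0) ↔ y = a) :
    N ≤ Fintype.card ι := by
  have mem_zeroLocus (J : Ideal (MvPolynomial (Fin N) K)) (hJ : Ideal.span (Set.range g) ≤ J) :
      zeroLocus K J ⊆ {a} := fun y hy => (hg y).mp fun j => by
    simpa [aeval_eq_eval] using hy (g j) (hJ (Ideal.subset_span ⟨j, rfl⟩))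
  have minimal : vanishingIdeal K {a} ∈ (Ideal.span (Set.range g)).minimalPrimes := by
    have maximal := isMaximal_iff_eq_vanishingIdeal_singleton.mpr ⟨a, rfl⟩
    refine ⟨⟨maximal.isPrime, Ideal.span_le.mpr ?_⟩, fun J ⟨_, hJ⟩ _ => ?_⟩
    · rintro _ ⟨j, rfl⟩
      simpa [mem_vanishingIdeal_iff, aeval_eq_eval] using (hg a).mpr rfl j
    · rw [← IsPrime.vanishingIdeal_zeroLocus (K := K) J]
      exact vanishingIdeal_anti_mono (mem_zeroLocus J hJ)
  have height_le := Ideal.height_le_card_of_mem_minimalPrimes_span (Set.finite_range g) minimal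
  rw [ha, Nat.cast_le] at height_le
  rw [← Nat.card_eq_fintype_card]
  exact height_le.trans (Finite.card_range_le g)

variable {U : Type*} [AddCommGroup U] [Module K U]

theorem exists_eq_mul_of_squarefree {κ : Type*} [Finite κ] (e : (κ → K) ≃ₗ[K] U) {f : U → K}
    {p : MvPolynomial κ K} (hp : Squarefree p) (hpf : ∀ y, eval y p = f (e y)) {g : U → K}
    (hg : g ∈ polyFun K U) (h : ∀ u, f u = 0 → g u = 0) :
    ∃ m ∈ polyFun K U, ∀ u, g u = f u * m u := by
  obtain ⟨q, hq⟩ := exists_eval_eq (comp_linear_mem_polyFun hg e.toLinearMap)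
  obtain ⟨r, rfl⟩ := squarefree_dvd_of_forall_eval_eq_zero hp fun y hy => by
    rw [hq]
    exact h _ (by rw [← hy, hpf]; rfl)
  refine ⟨_, comp_linear_mem_polyFun (eval_mem_polyFun r) e.symm.toLinearMap, fun u => ?_⟩
  have hu := hq (e.symm u)
  rw [map_mul, hpf] at hu
  simpa using hu.symm

theorem exists_ne_zero_forall_eq_zero {ι : Type*} [Fintype ι] [FiniteDimensional K U]
    (hι : Fintype.card ι < finrank K U) (g : ι → U → K) (hg : ∀ i, g i ∈ polyFun K U)
    (hg0 : ∀ i, g i 0 = 0) : ∃ u, u ≠ 0 ∧ ∀ i, g i u = 0 := by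
  obtain ⟨a, ha⟩ := exists_height_vanishingIdeal_singleton_eq (K := K) (finrank K U)
  let e := (finBasis K U).equivFun.symm
  have translate i : (fun y => g i (e (y - a))) ∈ polyFun K (Fin (finrank K U) → K) :=
    comp_mem_polyFun (hg i) fun ℓ => by
      simp only [map_sub]
      exact (polyFun K _).sub_mem (linear_mem_polyFun (ℓ ∘ₗ e.toLinearMap)) (const_mem_polyFun _)
  choose p hp using fun i => exists_eval_eq (translate i)
  by_contra! isolated
  refine hι.not_ge (le_card_of_isolated_zero ha p fun y => ⟨fun hy => ?_, ?_⟩)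
  · by_contra hya
    obtain ⟨i, hi⟩ := isolated (e (y - a)) (by simpa [sub_eq_zero] using hya)
    exact hi (by rw [← hp, hy])
  · rintro rfl i
    rw [hp, sub_self, map_zero, hg0]

end Nullstellensatz

section Scaling

variable {K : Type*} [Field K] {ι : Type*}

/-- The homomorphism `f(y) ↦ f(t y)`, with `t` the variable of the outer polynomial ring: its
coefficients are the homogeneous components of `f`. -/
def scaleHom (K : Type*) [Field K] (ι : Type*) :
    MvPolynomial ι K →ₐ[K] Polynomial (MvPolynomial ι K) :=
  aeval fun i => .C (X i) * .X

theorem scaleHom_of_isHomogeneous {d : ℕ} {f : MvPolynomial ι K} (hf : f.IsHomogeneous d) :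
    scaleHom K ι f = .C f * .X ^ d := by
  conv_lhs => rw [f.as_sum]
  conv_rhs => rw [f.as_sum]
  simp only [map_sum, Finset.sum_mul]
  refine Finset.sum_congr rfl fun m hm => ?_
  rw [scaleHom, aeval_monomial, hf.degree_eq_sum_deg_support hm]
  simp only [mul_pow, Finsupp.prod, Finset.prod_mul_distrib, Finset.prod_pow_eq_pow_sum]
  rw [← mul_assoc, monomial_eq, Finsupp.prod]
  simp only [map_mul, map_prod, map_pow]
  rfl

theorem scaleHom_coeff (f : MvPolynomial ι K) (i : ℕ) :
    (scaleHom K ι f).coeff i = homogeneousComponent i f := by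
  conv_lhs => rw [← sum_homogeneousComponent f]
  simp only [map_sum, Polynomial.finsetSum_coeff,
    scaleHom_of_isHomogeneous (homogeneousComponent_isHomogeneous _ f),
    Polynomial.coeff_C_mul_X_pow, Finset.sum_ite_eq, Finset.mem_range]
  split_ifs with h
  · rfl
  · exact (homogeneousComponent_eq_zero i f (by omega)).symm

theorem eval_one_scaleHom (f : MvPolynomial ι K) : (scaleHom K ι f).eval 1 = f := by
  induction f using MvPolynomial.induction_on with
  | C a => simp [scaleHom, Polynomial.algebraMap_apply]
  | add p q hp hq => simp only [map_add, Polynomial.eval_add, hp, hq]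
  | mul_X p i hp =>
    rw [map_mul, Polynomial.eval_mul, hp]
    simp [scaleHom]

theorem scaleHom_ne_zero {f : MvPolynomial ι K} (hf : f ≠ 0) : scaleHom K ι f ≠ 0 := by
  contrapose! hf
  rw [← eval_one_scaleHom f, hf, Polynomial.eval_zero]

theorem coeff_zero_scaleHom (f : MvPolynomial ι K) :
    (scaleHom K ι f).coeff 0 = C (eval 0 f) := by
  rw [scaleHom_coeff, homogeneousComponent_zero, ← constantCoeff_eq, eval_zero]

theorem isUnit_of_natDegree_scaleHom_eq_zero {f : MvPolynomial ι K} (hf : f ≠ 0)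
    (h : (scaleHom K ι f).natDegree = 0) : IsUnit f := by
  have const := eval_one_scaleHom f
  rw [Polynomial.eq_C_of_natDegree_eq_zero h, coeff_zero_scaleHom, Polynomial.eval_C] at const
  rw [← const] at hf ⊢
  exact (IsUnit.mk0 _ fun h0 => hf (by rw [h0, C_0])).map C

theorem eval_zero_eq_zero_of_dvd_isHomogeneous {d : ℕ} {p a : MvPolynomial ι K} (hp0 : p ≠ 0)
    (hp : p.IsHomogeneous d) (hap : a ∣ p) (ha : ¬IsUnit a) : eval 0 a = 0 := by
  obtain ⟨b, rfl⟩ := hap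
  have hA := scaleHom_ne_zero (left_ne_zero_of_mul hp0)
  have hB := scaleHom_ne_zero (right_ne_zero_of_mul hp0)
  have factor : scaleHom K ι a * scaleHom K ι b = .C (a * b) * .X ^ d := by
    rw [← map_mul, scaleHom_of_isHomogeneous hp]
  have degree : (scaleHom K ι a).natDegree + (scaleHom K ι b).natDegree = d := by
    rw [← Polynomial.natDegree_mul hA hB, factor, Polynomial.natDegree_C_mul_X_pow _ _ hp0]
  have trailing :
      (scaleHom K ι a).natTrailingDegree + (scaleHom K ι b).natTrailingDegree = d := by
    rw [← Polynomial.natTrailingDegree_mul hA hB, factor,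
      Polynomial.natTrailingDegree_mul_X_pow (Polynomial.C_ne_zero.mpr hp0),
      Polynomial.natTrailingDegree_C, zero_add]
  have b_le := Polynomial.natTrailingDegree_le_natDegree (scaleHom K ι b)
  by_contra ha0
  have trailing_a : (scaleHom K ι a).natTrailingDegree = 0 := by
    apply Polynomial.natTrailingDegree_eq_zero_of_constantCoeff_ne_zero
    rwa [Polynomial.constantCoeff_apply, coeff_zero_scaleHom, map_ne_zero]
  exact ha (isUnit_of_natDegree_scaleHom_eq_zero (left_ne_zero_of_mul hp0) (by omega))

theorem eval_scaleHom (f : MvPolynomial ι K) (y : ι → K) (t : K) :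
    ((scaleHom K ι f).map (eval y)).eval t = eval (t • y) f := by
  induction f using MvPolynomial.induction_on with
  | C a => simp [scaleHom, Polynomial.algebraMap_apply]
  | add p q hp hq => simp only [map_add, Polynomial.map_add, Polynomial.eval_add, hp, hq]
  | mul_X p i hp =>
    rw [map_mul, Polynomial.map_mul, Polynomial.eval_mul, hp]
    simp [scaleHom, mul_comm t]

theorem exists_isHomogeneous_eval_eq [Infinite K] [Finite ι] {f : (ι → K) → K}
    (hf : f ∈ polyFun K (ι → K)) {d : ℕ} (hd : ∀ (t : K) y, f (t • y) = t ^ d * f y) :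
    ∃ p : MvPolynomial ι K, p.IsHomogeneous d ∧ ∀ y, eval y p = f y := by
  obtain ⟨p, hp⟩ := exists_eval_eq hf
  suffices homogeneousComponent d p = p from
    ⟨p, this ▸ homogeneousComponent_isHomogeneous d p, hp⟩
  refine MvPolynomial.funext fun y => ?_
  have scale : (scaleHom K ι p).map (eval y) = .C (f y) * .X ^ d :=
    Polynomial.funext fun t => by simp only [eval_scaleHom, hp, hd, Polynomial.eval_mul,
      Polynomial.eval_C, Polynomial.eval_pow, Polynomial.eval_X, mul_comm]
  simpa [scaleHom_coeff, hp] using congr(($scale).coeff d)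

end Scaling

section CubicForms

variable {K : Type*} [Field K] {V : Type*} [AddCommGroup V] [Module K V]
  {T : V →ₗ[K] V →ₗ[K] V →ₗ[K] K}

/-- Symmetry of a trilinear form `T`, which is then the polarisation of the cubic form
`v ↦ T v v v`. -/
structure IsSymmetric (T : V →ₗ[K] V →ₗ[K] V →ₗ[K] K) : Prop where
  swap_left (u v w : V) : T u v w = T v u w
  swap_right (u v w : V) : T u v w = T u w v

/-- Non-singularity of the cubic form `v ↦ T v v v`, whose gradient at `z` is `3 T z z`. -/
def IsNonsingular (T : V →ₗ[K] V →ₗ[K] V →ₗ[K] K) : Prop :=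
  ∀ z, T z z = 0 → z = 0

theorem IsSymmetric.rotate (hT : IsSymmetric T) (u v w : V) : T u v w = T w u v := by
  rw [hT.swap_right, hT.swap_left]

theorem IsSymmetric.apply_add (hT : IsSymmetric T) (v w : V) :
    T (v + w) (v + w) (v + w) = T v v v + 3 * T v v w + 3 * T v w w + T w w w := by
  simp only [map_add, LinearMap.add_apply]
  linear_combination hT.swap_right v w v - hT.rotate v v w + hT.swap_left w v w + hT.rotate w w v

theorem IsSymmetric.apply_add_smul (hT : IsSymmetric T) (v w : V) (t : K) :
    T (v + t • w) (v + t • w) (v + t • w) =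
      T v v v + 3 * T v v w * t + 3 * T v w w * t ^ 2 + T w w w * t ^ 3 := by
  rw [hT.apply_add]
  simp only [map_smul, LinearMap.smul_apply, smul_eq_mul]
  ring

variable [CharZero K]

theorem IsSymmetric.apply_eq_zero_of_eq_mul_add_mul (hT : IsSymmetric T) {U : Type*}
    [AddCommGroup U] [Module K U] (L : U →ₗ[K] V) {g₁ h₁ g₂ h₂ : U → K} (hg₁ : g₁ ∈ polyFun K U)
    (hh₁ : h₁ ∈ polyFun K U) (hg₂ : g₂ ∈ polyFun K U) (hh₂ : h₂ ∈ polyFun K U)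
    (h : ∀ u, T (L u) (L u) (L u) = g₁ u * h₁ u + g₂ u * h₂ u) {v : U} (hg₁v : g₁ v = 0)
    (hh₁v : h₁ v = 0) (hg₂v : g₂ v = 0) (hh₂v : h₂ v = 0) (w : U) : T (L v) (L v) (L w) = 0 := by
  obtain ⟨p₁, hp₁⟩ := exists_polynomial_eval_line hg₁ v w
  obtain ⟨q₁, hq₁⟩ := exists_polynomial_eval_line hh₁ v w
  obtain ⟨p₂, hp₂⟩ := exists_polynomial_eval_line hg₂ v w
  obtain ⟨q₂, hq₂⟩ := exists_polynomial_eval_line hh₂ v w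
  have expand : .C (T (L v) (L v) (L v)) + .C (3 * T (L v) (L v) (L w)) * .X +
      .C (3 * T (L v) (L w) (L w)) * .X ^ 2 + .C (T (L w) (L w) (L w)) * .X ^ 3 =
        p₁ * q₁ + p₂ * q₂ := Polynomial.funext fun t => by
    simp only [Polynomial.eval_add, Polynomial.eval_mul, Polynomial.eval_C, Polynomial.eval_X,
      Polynomial.eval_pow, hp₁, hq₁, hp₂, hq₂]
    rw [← hT.apply_add_smul, ← h, map_add L, map_smul L]
  have deriv := congr((Polynomial.derivative $expand).eval 0)
  simpa [hp₁, hq₁, hp₂, hq₂, hg₁v, hh₁v, hg₂v, hh₂v] using deriv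

variable [IsAlgClosed K] [FiniteDimensional K V]

theorem IsNonsingular.exists_eq_cubic_mul (hns : IsNonsingular T) (hT : IsSymmetric T)
    (hV : 1 < finrank K V) {g : V → K} (hg : g ∈ polyFun K V) (h : ∀ v, T v v v = 0 → g v = 0) :
    ∃ m ∈ polyFun K V, ∀ v, g v = T v v v * m v := by
  let e := (finBasis K V).equivFun.symm
  obtain ⟨F, hF, heval⟩ := exists_isHomogeneous_eval_eq (d := 3)
    (comp_linear_mem_polyFun (trilinear_mem_polyFun T) e.toLinearMap) fun t y => by
      simp only [map_smul, LinearMap.smul_apply, smul_eq_mul]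
      ring
  have no_square (a b : MvPolynomial (Fin (finrank K V)) K) (hab : F = a * a * b) {y}
      (hy : eval y a = 0) : y = 0 := by
    have gradient := hT.apply_eq_zero_of_eq_mul_add_mul e.toLinearMap (eval_mem_polyFun a)
      (eval_mem_polyFun (a * b)) (zero_mem _) (zero_mem _)
      (fun u => by rw [← heval, hab]; simp [mul_assoc]) hy (by simp [hy]) rfl rfl
    exact e.map_eq_zero_iff.mp (hns _ (LinearMap.ext fun w => by simpa using gradient (e.symm w)))
  refine exists_eq_mul_of_squarefree e (p := F) (fun a => ?_) heval hg h
  rintro ⟨b, hab⟩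
  by_contra ha
  have hF0 : F ≠ 0 := by
    rintro rfl
    have : Nontrivial V := finrank_pos_iff.mp (by omega : 0 < finrank K V)
    obtain ⟨v, hv⟩ := exists_ne (0 : V)
    exact hv (e.symm.map_eq_zero_iff.mp (no_square 0 0 (by simp) (map_zero _)))
  have ha0 : eval 0 a = 0 := eval_zero_eq_zero_of_dvd_isHomogeneous hF0 hF
    ⟨a * b, by rw [hab, mul_assoc]⟩ ha
  obtain ⟨y, hy0, hy⟩ := exists_ne_zero_forall_eq_zero (K := K) (ι := Unit) (by simpa using hV)
    (fun _ y => eval y a) (fun _ => eval_mem_polyFun a) fun _ => ha0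
  exact hy0 (no_square a b hab (hy ()))

end CubicForms

section Hessian

variable {K : Type*} [Field K] {V : Type*} [AddCommGroup V] [Module K V]

theorem prod_mem_polyFun {ι : Type*} {s : Finset ι} {f : ι → V → K}
    (hf : ∀ i ∈ s, f i ∈ polyFun K V) : (fun u => ∏ i ∈ s, f i u) ∈ polyFun K V := by
  simpa only [← Finset.prod_apply] using (polyFun K V).prod_mem hf

theorem det_mem_polyFun {r : ℕ} {M : V → Matrix (Fin r) (Fin r) K}
    (hM : ∀ i j, (fun v => M v i j) ∈ polyFun K V) : (fun v => (M v).det) ∈ polyFun K V := by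
  simp only [Matrix.det_apply']
  exact sum_mem_polyFun fun σ _ =>
    (polyFun K V).mul_mem (const_mem_polyFun _) (prod_mem_polyFun fun i _ => hM _ i)

theorem apply_zero_of_forall_ne_zero [Infinite K] {f : K → K} (hf : f ∈ polyFun K K)
    (h : ∀ t ≠ 0, f t = 0) : f 0 = 0 := by
  by_contra h0
  obtain ⟨t, -, ht, ht0⟩ := polyIrreducible_univ f hf _ id_mem_polyFun
    ⟨0, trivial, h0⟩ ⟨1, trivial, one_ne_zero⟩
  exact ht (h t ht0)

/-- The minor of the Gram matrix of a bilinear form on two tuples of vectors. -/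
def gramDet {r : ℕ} (B : V →ₗ[K] V →ₗ[K] K) (a b : Fin r → V) : K :=
  (Matrix.of fun i j => B (a i) (b j)).det

theorem gramDet_cons_right {r : ℕ} (B : V →ₗ[K] V →ₗ[K] K) (a : Fin (r + 1) → V) (v : V)
    (b : Fin r → V) :
    gramDet B a (Fin.cons v b : Fin (r + 1) → V) =
      ∑ i : Fin (r + 1), (-1) ^ (i : ℕ) * B (a i) v * gramDet B (a ∘ i.succAbove) b :=
  Matrix.det_succ_column_zero _

theorem gramDet_cons_of_left_eq_zero {r : ℕ} {B : V →ₗ[K] V →ₗ[K] K} {a : Fin r → V} {v : V}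
    (h : ∀ i, B (a i) v = 0) (w : V) (b : Fin r → V) :
    gramDet B (Fin.cons w a : Fin (r + 1) → V) (Fin.cons v b : Fin (r + 1) → V) =
      B w v * gramDet B a b := by
  rw [gramDet_cons_right, Fin.sum_univ_succ]
  simp [h, gramDet]

theorem gramDet_eq_zero_of_apply_eq_zero {r : ℕ} {B : V →ₗ[K] V →ₗ[K] K} {a : Fin r → V}
    (b : Fin r → V) {i : Fin r} (h : B (a i) = 0) : gramDet B a b = 0 :=
  Matrix.det_eq_zero_of_row_eq_zero i fun j => by simp [h]

theorem eq_zero_of_gramDet_ne_zero [FiniteDimensional K V] {B : V →ₗ[K] V →ₗ[K] K}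
    {a b : Fin (finrank K V) → V} (hab : gramDet B a b ≠ 0) {v : V} (hv : ∀ w, B w v = 0) :
    v = 0 := by
  have independent : LinearIndependent K b := Fintype.linearIndependent_iff.mpr fun c hc => by
    refine congr_fun (Matrix.eq_zero_of_mulVec_eq_zero hab (v := c) (funext fun i => ?_))
    simpa [Matrix.mulVec, dotProduct, mul_comm] using congr(B (a i) $hc)
  let e := basisOfLinearIndependentOfCardEqFinrank' b independent (by simp)
  refine e.repr.map_eq_zero_iff.mp (Finsupp.ext fun j => ?_)
  refine congr_fun (Matrix.eq_zero_of_mulVec_eq_zero hab (v := e.repr v) (funext fun i => ?_)) j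
  rw [Pi.zero_apply, ← hv (a i)]
  conv_rhs => rw [← e.sum_repr v]
  simp [e, Matrix.mulVec, dotProduct, mul_comm]

variable {T : V →ₗ[K] V →ₗ[K] V →ₗ[K] K}

theorem gramDet_mem_polyFun {r : ℕ} (a b : Fin r → V) :
    (fun x => gramDet (T x) a b) ∈ polyFun K V :=
  det_mem_polyFun fun i j => linear_mem_polyFun ((T.flip (a i)).flip (b j))

variable [IsAlgClosed K]

/- `T v v` vanishes on the kernel of `T x x`, hence is a multiple of it; with `T x v = 0` this makes
some combination `s x + v` a singular point. -/
theorem eq_zero_of_apply_eq_zero_of_ker_le (hT : IsSymmetric T) (hns : IsNonsingular T) {x v : V}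
    (hx0 : x ≠ 0) (hxv : T x v = 0) (h : ∀ w, T x x w = 0 → T w v v = 0) : v = 0 := by
  obtain ⟨η, hη⟩ : ∃ η, T x x η ≠ 0 := by
    contrapose! hx0
    exact hns x (LinearMap.ext hx0)
  obtain ⟨s, hs⟩ := IsAlgClosed.exists_pow_nat_eq (-(T η v v / T x x η)) two_pos
  have multiple (w : V) : T w v v = T η v v / T x x η * T x x w := by
    have hw := h (T x x η • w - T x x w • η) (by simp [mul_comm])
    simp only [map_sub, map_smul, LinearMap.sub_apply, LinearMap.smul_apply, smul_eq_mul] at hw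
    field_simp
    linear_combination hw
  have singular : s • x + v = 0 := hns _ (LinearMap.ext fun w => by
    have hvx : T v x = 0 := LinearMap.ext fun u => by rw [hT.swap_left, hxv]
    simp only [map_add, map_smul, LinearMap.add_apply, LinearMap.smul_apply, smul_eq_mul, hxv, hvx,
      LinearMap.zero_apply]
    rw [hT.rotate v v w, multiple]
    linear_combination hs * T x x w)
  have hs0 : s * T x x η = 0 := by
    have := congr(T x $singular η)
    simpa [hxv] using this
  simpa [(mul_eq_zero.mp hs0).resolve_right hη] using singular

variable [CharZero K] [FiniteDimensional K V]

theorem apply_eq_zero_of_gramDet_cons_eq_zero (hT : IsSymmetric T) (hns : IsNonsingular T)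
    (hV : 1 < finrank K V) {r : ℕ} {a b : Fin r → V} {x v w : V} (hab : gramDet (T x) a b ≠ 0)
    (hx : T x x x = 0) (hxv : T x v = 0) (hw : T x x w = 0)
    (h : ∀ y, T y y y = 0 →
      gramDet (T y) (Fin.cons v a : Fin (r + 1) → V) (Fin.cons v b : Fin (r + 1) → V) = 0) :
    T w v v = 0 := by
  obtain ⟨m, hm, hdet⟩ := hns.exists_eq_cubic_mul hT hV (gramDet_mem_polyFun _ _) h
  let a' : Fin (r + 1) → V := Fin.cons v a
  -- On the tangent line `x + t w` the minor is `t * minor t`, whereas the cubic form is `O(t²)`.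
  let minor (t : K) : K :=
    ∑ i : Fin (r + 1), (-1) ^ (i : ℕ) * T w (a' i) v * gramDet (T (x + t • w)) (a' ∘ i.succAbove) b
  let rest (t : K) : K := (3 * T x w w * t + T w w w * t ^ 2) * m (x + t • w)
  have mul_minor (t : K) : t * minor t = t * rest t := by
    have hcubic := hdet (x + t • w)
    rw [hT.apply_add_smul, gramDet_cons_right, hx, hw] at hcubic
    have border (i) : T (x + t • w) (a' i) v = t * T w (a' i) v := by
      simp [hT.swap_right x (a' i) v, hxv]
    rw [Finset.mul_sum]
    refine (Finset.sum_congr rfl fun i _ => ?_).trans (hcubic.trans (by ring))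
    rw [border]
    ring
  have minor_zero : minor 0 - rest 0 = 0 := by
    refine apply_zero_of_forall_ne_zero (f := fun t => minor t - rest t) ?_ fun t ht =>
      sub_eq_zero.mpr (mul_left_cancel₀ ht (mul_minor t))
    refine (polyFun K K).sub_mem (sum_mem_polyFun fun i _ => (polyFun K K).mul_mem
      (const_mem_polyFun _) (comp_line_mem_polyFun (gramDet_mem_polyFun _ _) x w))
      ((polyFun K K).mul_mem ?_ (comp_line_mem_polyFun hm x w))
    exact (polyFun K K).add_mem ((polyFun K K).mul_mem (const_mem_polyFun _) id_mem_polyFun)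
      ((polyFun K K).mul_mem (const_mem_polyFun _) ((polyFun K K).pow_mem id_mem_polyFun 2))
  have vanish (i : Fin r) : gramDet (T x) (a' ∘ i.succ.succAbove) b = 0 := by
    have : NeZero r := ⟨i.pos.ne'⟩
    exact gramDet_eq_zero_of_apply_eq_zero b (i := 0) (by simp [a', hxv])
  have head : a' ∘ (0 : Fin (r + 1)).succAbove = a := funext fun i => by simp [a']
  simp only [minor, rest, Fin.sum_univ_succ, zero_smul, add_zero, vanish, head] at minor_zero
  simpa [a', hab] using minor_zero

theorem exists_gramDet_succ_ne_zero (hT : IsSymmetric T) (hns : IsNonsingular T)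
    (hV : 1 < finrank K V) {r : ℕ} (hr : r < finrank K V) {a b : Fin r → V} {x : V} (hx0 : x ≠ 0)
    (hx : T x x x = 0) (hab : gramDet (T x) a b ≠ 0) :
    ∃ y, y ≠ 0 ∧ T y y y = 0 ∧ ∃ a' b' : Fin (r + 1) → V, gramDet (T y) a' b' ≠ 0 := by
  by_contra! h
  have vanish (y : V) (hy : T y y y = 0) (a' b' : Fin (r + 1) → V) : gramDet (T y) a' b' = 0 := by
    rcases eq_or_ne y 0 with rfl | hy0
    · exact gramDet_eq_zero_of_apply_eq_zero _ (i := 0) (by simp)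
    · exact h y hy0 hy a' b'
  obtain ⟨v, hav, hv0⟩ := Submodule.exists_mem_ne_zero_of_ne_bot <|
    LinearMap.ker_ne_bot_of_finrank_lt (f := LinearMap.pi fun i => T x (a i)) (by simpa using hr)
  have hav (i) : T x (a i) v = 0 := congr_fun hav i
  have hxv : T x v = 0 := LinearMap.ext fun w => by
    rw [hT.swap_right]
    have border := vanish x hx (Fin.cons w a) (Fin.cons v b)
    rw [gramDet_cons_of_left_eq_zero hav] at border
    exact (mul_eq_zero.mp border).resolve_right hab
  refine hv0 (eq_zero_of_apply_eq_zero_of_ker_le hT hns hx0 hxv fun w hw => ?_)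
  exact apply_eq_zero_of_gramDet_cons_eq_zero hT hns hV hab hx hxv hw fun y hy => vanish y hy _ _

theorem exists_forall_apply_eq_zero_imp_eq_zero (hT : IsSymmetric T) (hns : IsNonsingular T)
    (hV : 1 < finrank K V) :
    ∃ x, x ≠ 0 ∧ T x x x = 0 ∧ ∀ v, T x v = 0 → v = 0 := by
  suffices ∀ r ≤ finrank K V,
      ∃ x, x ≠ 0 ∧ T x x x = 0 ∧ ∃ a b : Fin r → V, gramDet (T x) a b ≠ 0 by
    obtain ⟨x, hx0, hx, a, b, hab⟩ := this _ le_rfl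
    exact ⟨x, hx0, hx, fun v hv => eq_zero_of_gramDet_ne_zero hab fun w => by
      rw [hT.swap_right, hv, LinearMap.zero_apply]⟩
  intro r
  induction r with
  | zero =>
    intro _
    obtain ⟨x, hx0, hx⟩ := exists_ne_zero_forall_eq_zero (K := K) (ι := Unit) (by simpa using hV)
      (fun _ v => T v v v) (fun _ => trilinear_mem_polyFun T) (by simp)
    exact ⟨x, hx0, hx (), ![], ![], by simp [gramDet]⟩
  | succ r ih =>
    intro hr
    obtain ⟨x, hx0, hx, a, b, hab⟩ := ih (by omega)
    exact exists_gramDet_succ_ne_zero hT hns hV hr hx0 hx hab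

end Hessian

section Factorizations

variable {K : Type*} [Field K] [CharZero K]

section Quadratic

variable {U : Type*} [AddCommGroup U] [Module K U] {B : U →ₗ[K] U →ₗ[K] K}

theorem apply_eq_zero_of_eq_mul (hB : ∀ u v, B u v = B v u) {g h : U → K} (hg : g ∈ polyFun K U)
    (hh : h ∈ polyFun K U) (hgh : ∀ u, B u u = g u * h u) {v : U} (hgv : g v = 0) (hhv : h v = 0)
    (w : U) : B v w = 0 := by
  obtain ⟨p, hp⟩ := exists_polynomial_eval_line hg v w
  obtain ⟨q, hq⟩ := exists_polynomial_eval_line hh v w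
  have expand : .C (B v v) + .C (2 * B v w) * .X + .C (B w w) * .X ^ 2 = p * q :=
    Polynomial.funext fun t => by
      simp only [Polynomial.eval_add, Polynomial.eval_mul, Polynomial.eval_C, Polynomial.eval_X,
        Polynomial.eval_pow, hp, hq, ← hgh, map_add, map_smul, LinearMap.add_apply,
        LinearMap.smul_apply, smul_eq_mul, hB w v]
      ring
  have deriv := congr((Polynomial.derivative $expand).eval 0)
  simpa [hp, hq, hgv, hhv] using deriv

variable [IsAlgClosed K] [FiniteDimensional K U] {ℓ : U →ₗ[K] K}

theorem not_forall_apply_eq_mul (hB : ∀ u v, B u v = B v u)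
    (hℓ : ∀ v, B v = 0 → ℓ v = 0 → v = 0) (hU : 3 < finrank K U) {g h : U → K}
    (hg : g ∈ polyFun K U) (hh : h ∈ polyFun K U) (hg0 : g 0 = 0) (hh0 : h 0 = 0) :
    ¬ ∀ u, B u u = g u * h u := by
  intro hgh
  obtain ⟨u, hu0, hu⟩ := exists_ne_zero_forall_eq_zero (ι := Fin 3) (by simpa using hU)
    ![g, h, ℓ] (by simp [Fin.forall_fin_succ, hg, hh, linear_mem_polyFun])
    (by simp [Fin.forall_fin_succ, hg0, hh0])
  exact hu0 (hℓ u (LinearMap.ext (apply_eq_zero_of_eq_mul hB hg hh hgh (hu 0) (hu 1))) (hu 2))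

theorem exists_prime_eval_eq (hB : ∀ u v, B u v = B v u)
    (hℓ : ∀ v, B v = 0 → ℓ v = 0 → v = 0) (hU : 3 < finrank K U) {κ : Type*} [Finite κ]
    (e : (κ → K) ≃ₗ[K] U) :
    ∃ Q : MvPolynomial κ K, Prime Q ∧ Q.IsHomogeneous 2 ∧ ∀ y, eval y Q = B (e y) (e y) := by
  obtain ⟨Q, hQ, heval⟩ := exists_isHomogeneous_eval_eq (d := 2)
    (comp_linear_mem_polyFun (bilinear_mem_polyFun B) e.toLinearMap) fun t y => by
      simp only [map_smul, LinearMap.smul_apply, smul_eq_mul]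
      ring
  have not_factor (a b : MvPolynomial κ K) (ha : eval 0 a = 0) (hb : eval 0 b = 0) :
      Q ≠ a * b := by
    rintro rfl
    refine not_forall_apply_eq_mul hB hℓ hU
      (comp_linear_mem_polyFun (eval_mem_polyFun a) e.symm.toLinearMap)
      (comp_linear_mem_polyFun (eval_mem_polyFun b) e.symm.toLinearMap)
      (by simpa using ha) (by simpa using hb) fun u => ?_
    simpa using (heval (e.symm u)).symm
  have hQ0 : Q ≠ 0 := by simpa using not_factor 0 0
  refine ⟨Q, Irreducible.prime ⟨fun hunit => ?_, fun a b hab => ?_⟩, hQ, heval⟩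
  · exact (hunit.map (eval 0)).ne_zero (by simpa using heval 0)
  · by_contra! hnot
    exact not_factor a b (eval_zero_eq_zero_of_dvd_isHomogeneous hQ0 hQ ⟨b, hab⟩ hnot.1)
      (eval_zero_eq_zero_of_dvd_isHomogeneous hQ0 hQ ⟨a, hab.trans (mul_comm a b)⟩ hnot.2) hab

theorem exists_eq_quadratic_mul (hB : ∀ u v, B u v = B v u)
    (hℓ : ∀ v, B v = 0 → ℓ v = 0 → v = 0) (hU : 3 < finrank K U) {g : U → K}
    (hg : g ∈ polyFun K U) (h : ∀ u, B u u = 0 → g u = 0) :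
    ∃ m ∈ polyFun K U, ∀ u, g u = B u u * m u := by
  let e := (finBasis K U).equivFun.symm
  obtain ⟨Q, hQ, -, heval⟩ := exists_prime_eval_eq hB hℓ hU e
  exact exists_eq_mul_of_squarefree e hQ.irreducible.squarefree heval hg h

theorem polyIrreducible_quadric (hB : ∀ u v, B u v = B v u)
    (hℓ : ∀ v, B v = 0 → ℓ v = 0 → v = 0) (hU : 3 < finrank K U) :
    PolyIrreducible K {u | B u u = 0} := by
  let e := (finBasis K U).equivFun.symm
  obtain ⟨Q, hQ, -, heval⟩ := exists_prime_eval_eq hB hℓ hU e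
  convert (polyIrreducible_zeros hQ).image e.toLinearMap
  ext u
  simp only [Set.mem_ofPred_eq, Set.mem_image, heval]
  exact ⟨fun hu => ⟨e.symm u, by simpa using hu, by simp⟩, by rintro ⟨y, hy, rfl⟩; exact hy⟩

end Quadratic

theorem IsNonsingular.not_forall_eq_mul_add_mul [IsAlgClosed K] {V : Type*} [AddCommGroup V]
    [Module K V] [FiniteDimensional K V] {T : V →ₗ[K] V →ₗ[K] V →ₗ[K] K} (hns : IsNonsingular T)
    (hT : IsSymmetric T) {ξ : V →ₗ[K] K} {η : V} (hη : ξ η ≠ 0) (hV : 6 < finrank K V)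
    {g₁ h₁ g₂ h₂ : LinearMap.ker ξ → K} (hg₁ : g₁ ∈ polyFun K (LinearMap.ker ξ))
    (hh₁ : h₁ ∈ polyFun K (LinearMap.ker ξ)) (hg₂ : g₂ ∈ polyFun K (LinearMap.ker ξ))
    (hh₂ : h₂ ∈ polyFun K (LinearMap.ker ξ)) (hg₁0 : g₁ 0 = 0) (hh₁0 : h₁ 0 = 0)
    (hg₂0 : g₂ 0 = 0) (hh₂0 : h₂ 0 = 0) :
    ¬ ∀ v : LinearMap.ker ξ, T v v v = g₁ v * h₁ v + g₂ v * h₂ v := by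
  intro h
  have hker : 5 < finrank K (LinearMap.ker ξ) := by
    have := ξ.finrank_range_add_finrank_ker
    have := Submodule.finrank_le ξ.range
    rw [finrank_self] at this
    omega
  have hη_quad : (fun v : LinearMap.ker ξ => T η v v) ∈ polyFun K (LinearMap.ker ξ) :=
    bilinear_mem_polyFun ((T η).domRestrict₁₂ _ _)
  obtain ⟨u, hu0, hu⟩ := exists_ne_zero_forall_eq_zero (ι := Fin 5) (by simpa using hker)
    ![g₁, h₁, g₂, h₂, fun v => T η v v]
    (by simp [Fin.forall_fin_succ, hg₁, hh₁, hg₂, hh₂, hη_quad])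
    (by simp [Fin.forall_fin_succ, hg₁0, hh₁0, hg₂0, hh₂0])
  have tangent (w : LinearMap.ker ξ) : T u u w = 0 :=
    hT.apply_eq_zero_of_eq_mul_add_mul (LinearMap.ker ξ).subtype hg₁ hh₁ hg₂ hh₂ h
      (hu 0) (hu 1) (hu 2) (hu 3) w
  have normal : T u u η = 0 := (hT.rotate u u η).trans (hu 4)
  refine hu0 (Subtype.ext (hns u (LinearMap.ext fun w => ?_)))
  have hw := tangent ⟨ξ η • w - ξ w • η, by simp [mul_comm]⟩
  simpa [normal, hη] using hw

end Factorizations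

section GeneralPoint

variable {K : Type*} [Field K] {V : Type*} [AddCommGroup V] [Module K V]
  {T : V →ₗ[K] V →ₗ[K] V →ₗ[K] K} {x : V}

theorem apply_zero_eq_zero_of_eq_mul [Infinite K] {U : Type*} [AddCommGroup U] [Module K U]
    {f q m : U → K} (hm : m ∈ polyFun K U) (hq : ∀ (t : K) u, q (t • u) = t ^ 2 * q u)
    (hf : ∀ (t : K) u, f (t • u) = t ^ 3 * f u) (h : ∀ u, f u = q u * m u) {u : U}
    (hu : q u ≠ 0) : m 0 = 0 := by
  have key := apply_zero_of_forall_ne_zero (f := fun t => q u * m (t • u) - t * f u)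
    ((polyFun K K).sub_mem ((polyFun K K).mul_mem (const_mem_polyFun _)
      (by simpa using comp_line_mem_polyFun hm 0 u))
      ((polyFun K K).mul_mem id_mem_polyFun (const_mem_polyFun _))) fun t ht => by
    have := h (t • u)
    rw [hf, hq] at this
    exact mul_left_cancel₀ (pow_ne_zero 2 ht) (by linear_combination -this)
  simpa [hu] using key

theorem linearMap_eq_zero_of_eq_mul [Infinite K] {U : Type*} [AddCommGroup U] [Module K U]
    {f : U →ₗ[K] K} {q m : U → K} (hm : m ∈ polyFun K U)
    (hq : ∀ (t : K) u, q (t • u) = t ^ 2 * q u) (h : ∀ u, f u = q u * m u) : f = 0 := by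
  ext u
  have key := apply_zero_of_forall_ne_zero (f := fun t => f u - t * (q u * m (t • u)))
    ((polyFun K K).sub_mem (const_mem_polyFun _) ((polyFun K K).mul_mem id_mem_polyFun
      ((polyFun K K).mul_mem (const_mem_polyFun _)
        (by simpa using comp_line_mem_polyFun hm 0 u)))) fun t ht => by
    have := h (t • u)
    rw [map_smul, smul_eq_mul, hq] at this
    exact mul_left_cancel₀ ht (by linear_combination this)
  simpa using key

/-- The non-singular cubic hypersurface `T v v v = 0` has at its point `x` a polar quadric
`T x v v = 0` of maximal rank; this is the genericity condition under which the lines through `x`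
are studied. -/
structure IsGeneralPoint (T : V →ₗ[K] V →ₗ[K] V →ₗ[K] K) (x : V) : Prop where
  isSymmetric : IsSymmetric T
  isNonsingular : IsNonsingular T
  ne_zero : x ≠ 0
  apply_self : T x x x = 0
  eq_zero_of_polar_eq_zero : ∀ v, T x v = 0 → v = 0

/-- The tangent space at `x` of the cubic hypersurface `T v v v = 0`, as a linear subspace. -/
abbrev tangentSpace (T : V →ₗ[K] V →ₗ[K] V →ₗ[K] K) (x : V) : Submodule K V :=
  LinearMap.ker (T x x)

/-- The intersection of the tangent space and the polar quadric at `x`. -/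
def tangentQuadric (T : V →ₗ[K] V →ₗ[K] V →ₗ[K] K) (x : V) : Set V :=
  {v | T x x v = 0 ∧ T x v v = 0}

/-- The cone of lines through `x` in the cubic hypersurface `T v v v = 0`: the coefficients of
`T (s x + v) (s x + v) (s x + v)` as a polynomial in `s` vanish. -/
def lineCone (T : V →ₗ[K] V →ₗ[K] V →ₗ[K] K) (x : V) : Set V :=
  {v | v ∈ tangentQuadric T x ∧ T v v v = 0}

theorem smul_mem_tangentQuadric {v : V} (hv : v ∈ tangentQuadric T x) (t : K) :
    t • v ∈ tangentQuadric T x :=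
  ⟨by simp [hv.1], by simp [hv.2]⟩

theorem smul_mem_lineCone {v : V} (hv : v ∈ lineCone T x) (t : K) : t • v ∈ lineCone T x :=
  ⟨smul_mem_tangentQuadric hv.1 t, by simp [hv.2]⟩

namespace IsGeneralPoint

variable (hx : IsGeneralPoint T x)
include hx

theorem exists_apply_ne_zero : ∃ η, T x x η ≠ 0 := by
  have := hx.ne_zero
  contrapose! this
  exact hx.isNonsingular x (LinearMap.ext this)

theorem mem_span_of_forall_tangent {v : V} (hv : ∀ w ∈ tangentSpace T x, T x v w = 0) :
    v ∈ K ∙ x := by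
  obtain ⟨η, hη⟩ := hx.exists_apply_ne_zero
  refine Submodule.mem_span_singleton.mpr ⟨T x v η / T x x η, (sub_eq_zero.mp ?_).symm⟩
  refine hx.eq_zero_of_polar_eq_zero _ (LinearMap.ext fun w => ?_)
  have hw := hv (T x x η • w - T x x w • η) (by simp [mul_comm])
  simp only [map_sub, map_smul, LinearMap.sub_apply, LinearMap.smul_apply, smul_eq_mul,
    LinearMap.zero_apply] at hw ⊢
  field_simp
  linear_combination hw

theorem add_smul_mem_lineCone {v : V} (hv : v ∈ lineCone T x) (t : K) :
    v + t • x ∈ lineCone T x := by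
  obtain ⟨⟨h₁, h₂⟩, h₃⟩ := hv
  have hxvx : T x v x = 0 := by rw [hx.isSymmetric.swap_right, h₁]
  have hvvx : T v v x = 0 := by rw [hx.isSymmetric.rotate, h₂]
  have hvxx : T v x x = 0 := by rw [hx.isSymmetric.swap_left, hxvx]
  refine ⟨⟨?_, ?_⟩, ?_⟩
  · simp [h₁, hx.apply_self]
  · simp [h₁, h₂, hxvx, hx.apply_self]
  · rw [hx.isSymmetric.apply_add_smul]
    simp [h₃, hvvx, hvxx, hx.apply_self]

theorem exists_dual_eq_zero : ∃ ℓ : Dual K V,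
    ∀ v, (∀ w ∈ tangentSpace T x, T x v w = 0) → ℓ v = 0 → v = 0 := by
  obtain ⟨ℓ, hℓ⟩ : ∃ ℓ : Dual K V, ℓ x ≠ 0 := by
    have := hx.ne_zero
    contrapose! this
    exact (forall_dual_apply_eq_zero_iff K x).mp this
  refine ⟨ℓ, fun v hv hℓv => ?_⟩
  obtain ⟨t, rfl⟩ := Submodule.mem_span_singleton.mp (hx.mem_span_of_forall_tangent hv)
  have ht : t = 0 := by simpa [hℓ] using hℓv
  rw [ht, zero_smul]

variable [FiniteDimensional K V]

theorem finrank_tangentSpace : finrank K (tangentSpace T x) + 1 = finrank K V := by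
  obtain ⟨η, hη⟩ := hx.exists_apply_ne_zero
  have hT : T x x ≠ 0 := fun h => hη (by rw [h, LinearMap.zero_apply])
  have := (T x x).finrank_range_add_finrank_ker
  rwa [LinearMap.range_eq_top.mpr (LinearMap.surjective hT), finrank_top, finrank_self,
    add_comm] at this

variable [CharZero K]

theorem exists_polar_ne_zero (hV : 2 < finrank K V) : ∃ v : tangentSpace T x, T x v v ≠ 0 := by
  obtain ⟨v, hv⟩ : ∃ v : tangentSpace T x, (v : V) ∉ K ∙ x := by
    by_contra! h
    have := Submodule.finrank_mono (s := tangentSpace T x) (t := K ∙ x) fun v hv => h ⟨v, hv⟩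
    have := hx.finrank_tangentSpace
    have := finrank_span_singleton (K := K) hx.ne_zero
    omega
  by_contra! h
  refine hv (hx.mem_span_of_forall_tangent fun w hw => ?_)
  have hvw := h (v + ⟨w, hw⟩)
  have hww := h ⟨w, hw⟩
  simp only [Submodule.coe_add, map_add, LinearMap.add_apply, h v, hww,
    hx.isSymmetric.swap_right x w v] at hvw
  simpa [← two_mul] using hvw

variable [IsAlgClosed K]

theorem exists_eq_polar_mul (hV : 4 < finrank K V) {g : V → K} (hg : g ∈ polyFun K V)
    (h : ∀ v ∈ tangentQuadric T x, g v = 0) :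
    ∃ m ∈ polyFun K (tangentSpace T x), ∀ v : tangentSpace T x, g v = T x v v * m v := by
  have := hx.finrank_tangentSpace
  obtain ⟨ℓ, hℓ⟩ := hx.exists_dual_eq_zero
  exact exists_eq_quadratic_mul (B := (T x).domRestrict₁₂ _ _) (ℓ := ℓ ∘ₗ Submodule.subtype _)
    (fun v w => hx.isSymmetric.swap_right x v w)
    (fun v hv hℓv => Subtype.ext (hℓ v (fun w hw => congr($hv ⟨w, hw⟩)) hℓv)) (by omega)
    (comp_linear_mem_polyFun hg (Submodule.subtype _)) fun v hv => h v ⟨v.2, hv⟩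

theorem polyIrreducible_tangentQuadric (hV : 4 < finrank K V) :
    PolyIrreducible K (tangentQuadric T x) := by
  have := hx.finrank_tangentSpace
  obtain ⟨ℓ, hℓ⟩ := hx.exists_dual_eq_zero
  convert (polyIrreducible_quadric (B := (T x).domRestrict₁₂ _ _) (ℓ := ℓ ∘ₗ Submodule.subtype _)
    (fun v w => hx.isSymmetric.swap_right x v w)
    (fun v hv hℓv => Subtype.ext (hℓ v (fun w hw => congr($hv ⟨w, hw⟩)) hℓv))
    (by omega)).image (Submodule.subtype _)
  ext v
  exact ⟨fun hv => ⟨⟨v, hv.1⟩, hv.2, rfl⟩, by rintro ⟨w, hw, rfl⟩; exact ⟨w.2, hw⟩⟩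

theorem exists_mem_tangentQuadric_apply_ne_zero (hV : 4 < finrank K V) {v : V}
    (hv : v ∉ K ∙ x) : ∃ w ∈ tangentQuadric T x, T x w v ≠ 0 := by
  by_contra! h
  obtain ⟨m, hm, hmul⟩ := hx.exists_eq_polar_mul hV (linear_mem_polyFun ((T x).flip v)) h
  have zero := linearMap_eq_zero_of_eq_mul (f := (T x).flip v ∘ₗ Submodule.subtype _) hm
    (fun t u => by simp [pow_two, mul_assoc]) hmul
  refine hv (hx.mem_span_of_forall_tangent fun w hw => ?_)
  rw [hx.isSymmetric.swap_right]
  exact congr($zero ⟨w, hw⟩)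

theorem exists_mem_tangentQuadric_cubic_ne_mul (hV : 6 < finrank K V) {g h : V → K}
    (hg : g ∈ polyFun K V) (hh : h ∈ polyFun K V)
    (hg_smul : ∀ (t : K) v, g (t • v) = t * g v) (hh_smul : ∀ (t : K) v, h (t • v) = t ^ 2 * h v) :
    ∃ v ∈ tangentQuadric T x, T v v v ≠ g v * h v := by
  by_contra! hgh
  obtain ⟨η, hη⟩ := hx.exists_apply_ne_zero
  obtain ⟨v, hv⟩ := hx.exists_polar_ne_zero (by omega)
  obtain ⟨m, hm, hmul⟩ := hx.exists_eq_polar_mul (by omega)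
    ((polyFun K V).sub_mem (trilinear_mem_polyFun T) ((polyFun K V).mul_mem hg hh))
    fun v hv => sub_eq_zero.mpr (hgh v hv)
  have hm0 : m 0 = 0 := apply_zero_eq_zero_of_eq_mul hm
    (f := fun v : tangentSpace T x => T v v v - g v * h v) (fun t u => by
      simp only [Submodule.coe_smul, map_smul, LinearMap.smul_apply, smul_eq_mul]; ring)
    (fun t u => by
      simp only [Submodule.coe_smul, map_smul, LinearMap.smul_apply, smul_eq_mul, hg_smul,
        hh_smul]
      ring) hmul hv
  exact hx.isNonsingular.not_forall_eq_mul_add_mul hx.isSymmetric hη hV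
    (comp_linear_mem_polyFun hg (Submodule.subtype _))
    (comp_linear_mem_polyFun hh (Submodule.subtype _))
    (bilinear_mem_polyFun ((T x).domRestrict₁₂ _ _)) hm
    (by simpa using hg_smul 0 0) (by simpa using hh_smul 0 0) (map_zero _) hm0
    fun v => sub_eq_iff_eq_add'.mp (hmul v)

end IsGeneralPoint

end GeneralPoint

section Sextics

variable {K : Type*} [Field K] {ι : Type*}

theorem eval_smul_of_isHomogeneous {d : ℕ} {f : MvPolynomial ι K} (hf : f.IsHomogeneous d)
    (t : K) (y : ι → K) : eval (t • y) f = t ^ d * eval y f := by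
  rw [← eval_scaleHom, scaleHom_of_isHomogeneous hf, Polynomial.map_mul, Polynomial.eval_mul,
    mul_comm]
  simp

theorem eq_sum_homogeneousComponent_of_natDegree_le {n : ℕ} {f : MvPolynomial ι K}
    (hf : (scaleHom K ι f).natDegree ≤ n) :
    f = ∑ i ∈ Finset.range (n + 1), homogeneousComponent i f := by
  have := Polynomial.eval_eq_sum_range' (Nat.lt_succ_of_le hf) 1
  simpa only [eval_one_scaleHom, scaleHom_coeff, one_pow, mul_one] using this

theorem exists_isHomogeneous_eq_mul {d k : ℕ} {Q f : MvPolynomial ι K} (hQ : Q.IsHomogeneous d)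
    (hf : f.IsHomogeneous (d + k)) (h : Q ∣ f) : ∃ b, b.IsHomogeneous k ∧ f = Q * b := by
  obtain ⟨b, hb⟩ := h
  refine ⟨homogeneousComponent k b, homogeneousComponent_isHomogeneous k b, ?_⟩
  have := congr((scaleHom K ι $hb).coeff (d + k))
  rw [map_mul, scaleHom_of_isHomogeneous hf, scaleHom_of_isHomogeneous hQ, mul_assoc,
    Polynomial.coeff_C_mul, Polynomial.coeff_C_mul, add_comm d k, Polynomial.coeff_X_pow_mul,
    scaleHom_coeff] at this
  simpa using this

theorem exists_leadingCoeff_scaleHom_eq {d k : ℕ} {Q g : MvPolynomial ι K} (hQ : Prime Q)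
    (hQd : Q.IsHomogeneous d) (hg : (scaleHom K ι g).leadingCoeff ∣ Q ^ k) :
    ∃ i, ∃ α : K, α ≠ 0 ∧ (scaleHom K ι g).leadingCoeff = C α * Q ^ i ∧
      (scaleHom K ι g).natDegree = d * i := by
  obtain ⟨i, -, u, hu⟩ := (dvd_prime_pow hQ k).mp hg
  obtain ⟨α, hα, hαu⟩ := isUnit_iff_eq_C_of_isReduced.mp u⁻¹.isUnit
  have eq : (scaleHom K ι g).leadingCoeff = C α * Q ^ i := by
    rw [← hαu, ← hu, mul_comm, Units.mul_inv_cancel_right]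
  refine ⟨i, α, hα.ne_zero, eq,
    IsHomogeneous.inj_right (φ := (scaleHom K ι g).leadingCoeff) ?_ ?_ ?_⟩
  · rw [Polynomial.leadingCoeff, scaleHom_coeff]
    exact homogeneousComponent_isHomogeneous _ g
  · simpa [eq] using (isHomogeneous_C ι α).mul (hQd.pow i)
  · simp [eq, hα.ne_zero, hQ.ne_zero]

variable {Q p : MvPolynomial ι K} (hQ : Prime Q) (hQ2 : Q.IsHomogeneous 2) {κ : K} (hκ : κ ≠ 0)
  (hdeg : (scaleHom K ι p).natDegree ≤ 6) (h6 : homogeneousComponent 6 p = C κ * Q ^ 3)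

include hQ hκ hdeg h6 in
theorem natDegree_scaleHom_eq_six : (scaleHom K ι p).natDegree = 6 := by
  refine Polynomial.natDegree_eq_of_le_of_coeff_ne_zero hdeg ?_
  simp [scaleHom_coeff, h6, hκ, hQ.ne_zero]

include hQ hQ2 hκ hdeg h6

theorem exists_eq_mul_of_not_irreducible (hp : ¬ Irreducible p) : ∃ g h : MvPolynomial ι K,
    p = g * h ∧
    (∃ α : K, α ≠ 0 ∧ (scaleHom K ι g).natDegree = 2 ∧ homogeneousComponent 2 g = C α * Q) ∧
    ∃ β : K, β ≠ 0 ∧ (scaleHom K ι h).natDegree = 4 ∧ homogeneousComponent 4 h = C β * Q ^ 2 := by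
  have hp6 := natDegree_scaleHom_eq_six hQ hκ hdeg h6
  have hp_unit : ¬ IsUnit p := fun h => by
    obtain ⟨c, -, rfl⟩ := isUnit_iff_eq_C_of_isReduced.mp h
    simp [scaleHom_of_isHomogeneous (isHomogeneous_C ι c)] at hp6
  simp only [irreducible_iff, hp_unit, not_false_iff, true_and, not_forall, not_or] at hp
  obtain ⟨g, h, rfl, hg, hh⟩ := hp
  have hgh0 : scaleHom K ι g * scaleHom K ι h ≠ 0 := fun h0 => by simp [h0] at hp6
  have hlead : (scaleHom K ι g).leadingCoeff * (scaleHom K ι h).leadingCoeff = C κ * Q ^ 3 := by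
    rw [← Polynomial.leadingCoeff_mul, ← map_mul, Polynomial.leadingCoeff, hp6, scaleHom_coeff, h6]
  have hCκ : IsUnit (C κ : MvPolynomial ι K) := (IsUnit.mk0 κ hκ).map C
  obtain ⟨i, α, hα0, hα, hi⟩ := exists_leadingCoeff_scaleHom_eq hQ hQ2
    (hCκ.dvd_mul_left.mp (Dvd.intro _ hlead))
  obtain ⟨j, β, hβ0, hβ, hj⟩ := exists_leadingCoeff_scaleHom_eq hQ hQ2
    (hCκ.dvd_mul_left.mp (Dvd.intro_left _ hlead))
  have hi0 : i ≠ 0 := by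
    rintro rfl
    refine hg (isUnit_of_natDegree_scaleHom_eq_zero ?_ (by simpa using hi))
    rintro rfl
    simp at hgh0
  have hj0 : j ≠ 0 := by
    rintro rfl
    refine hh (isUnit_of_natDegree_scaleHom_eq_zero ?_ (by simpa using hj))
    rintro rfl
    simp at hgh0
  rw [map_mul, Polynomial.natDegree_mul (left_ne_zero_of_mul hgh0) (right_ne_zero_of_mul hgh0),
    hi, hj] at hp6
  rw [Polynomial.leadingCoeff, hi, scaleHom_coeff] at hα
  rw [Polynomial.leadingCoeff, hj, scaleHom_coeff] at hβ
  obtain ⟨rfl, rfl⟩ | ⟨rfl, rfl⟩ : i = 1 ∧ j = 2 ∨ i = 2 ∧ j = 1 := by omega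
  · exact ⟨g, h, rfl, ⟨α, hα0, hi, by simpa using hα⟩, β, hβ0, hj, hβ⟩
  · exact ⟨h, g, mul_comm _ _, ⟨β, hβ0, hj, by simpa using hβ⟩, α, hα0, hi, hα⟩

theorem exists_factors_of_not_irreducible (h5 : Q ^ 2 ∣ homogeneousComponent 5 p)
    (hp : ¬ Irreducible p) : ∃ (α a₀ β b₀ : K) (a₁ b₁ b₂ b₃ : MvPolynomial ι K),
      a₁.IsHomogeneous 1 ∧ b₁.IsHomogeneous 1 ∧ b₂.IsHomogeneous 2 ∧ b₃.IsHomogeneous 1 ∧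
      p = (C α * Q + a₁ + C a₀) * (C β * Q ^ 2 + Q * b₃ + b₂ + b₁ + C b₀) := by
  obtain ⟨g, h, rfl, ⟨α, hα0, hg, hα⟩, β, -, hh, hβ⟩ :=
    exists_eq_mul_of_not_irreducible hQ hQ2 hκ hdeg h6 hp
  have hg_sum := eq_sum_homogeneousComponent_of_natDegree_le hg.le
  have hh_sum := eq_sum_homogeneousComponent_of_natDegree_le hh.le
  simp only [Finset.sum_range_succ, Finset.range_zero, Finset.sum_empty, zero_add,
    homogeneousComponent_zero, hα, hβ] at hg_sum hh_sum
  have h3 : Q ∣ homogeneousComponent 3 h := by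
    have hfive : homogeneousComponent 5 (g * h) =
        homogeneousComponent 1 g * (C β * Q ^ 2) + C α * Q * homogeneousComponent 3 h := by
      have hg_high (i : ℕ) (hi : 2 < i) : homogeneousComponent i g = 0 := by
        rw [← scaleHom_coeff, Polynomial.coeff_eq_zero_of_natDegree_lt (hg.trans_lt hi)]
      have hh_high : homogeneousComponent 5 h = 0 := by
        rw [← scaleHom_coeff, Polynomial.coeff_eq_zero_of_natDegree_lt (by omega)]
      rw [← scaleHom_coeff, map_mul, Polynomial.coeff_mul,
        Finset.Nat.sum_antidiagonal_eq_sum_range_succ_mk]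
      simp [Finset.sum_range_succ, hg_high, hh_high, scaleHom_coeff, hα, hβ]
    rw [hfive, dvd_add_right (Dvd.intro_left _ (mul_assoc _ _ _)), pow_two, mul_comm (C α),
      mul_assoc, mul_dvd_mul_iff_left hQ.ne_zero] at h5
    exact ((IsUnit.mk0 α hα0).map C).dvd_mul_left.mp h5
  obtain ⟨b₃, hb₃, h3⟩ := exists_isHomogeneous_eq_mul (k := 1) hQ2
    (homogeneousComponent_isHomogeneous 3 h) h3
  refine ⟨α, coeff 0 g, β, coeff 0 h, homogeneousComponent 1 g, homogeneousComponent 1 h,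
    homogeneousComponent 2 h, b₃, homogeneousComponent_isHomogeneous 1 g,
    homogeneousComponent_isHomogeneous 1 h, homogeneousComponent_isHomogeneous 2 h, hb₃, ?_⟩
  rw [h3] at hh_sum
  linear_combination h * hg_sum + (C (coeff 0 g) + homogeneousComponent 1 g + C α * Q) * hh_sum

end Sextics

section Frames

variable {K : Type*} [Field K] {V : Type*} [AddCommGroup V] [Module K V]
  {T : V →ₗ[K] V →ₗ[K] V →ₗ[K] K} {x e₀ e₁ : V}

/-- A hyperbolic pair of the polar quadric at `x` whose second vector lies off the cubic. It
furnishes coordinates in which the tangent quadric is a graph and the cubic a sextic. -/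
structure IsFrame (T : V →ₗ[K] V →ₗ[K] V →ₗ[K] K) (x e₀ e₁ : V) : Prop where
  left_mem : e₀ ∈ tangentQuadric T x
  right_mem : e₁ ∈ tangentQuadric T x
  two_mul_apply : 2 * T x e₀ e₁ = 1
  cubic_ne_zero : T e₁ e₁ e₁ ≠ 0

/-- The orthogonal complement, in the tangent space at `x`, of the pair `e₀, e₁` with respect to
the polar quadric. -/
def frameSpace (T : V →ₗ[K] V →ₗ[K] V →ₗ[K] K) (x e₀ e₁ : V) : Submodule K V :=
  LinearMap.ker ((T x x).prod ((T x e₀).prod (T x e₁)))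

/-- The parametrisation of the tangent quadric away from `T x e₁ v = 0`, up to scaling, by the
frame space. -/
def chart (T : V →ₗ[K] V →ₗ[K] V →ₗ[K] K) (x e₀ e₁ u : V) : V :=
  e₀ - T x u u • e₁ + u

theorem mem_frameSpace {u : V} :
    u ∈ frameSpace T x e₀ e₁ ↔ T x x u = 0 ∧ T x e₀ u = 0 ∧ T x e₁ u = 0 := by
  simp [frameSpace]

theorem le_finrank_frameSpace_add_three [FiniteDimensional K V] :
    finrank K V ≤ finrank K (frameSpace T x e₀ e₁) + 3 := by
  let L := (T x x).prod ((T x e₀).prod (T x e₁))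
  have := L.finrank_range_add_finrank_ker
  have := L.range.finrank_le
  simp only [finrank_prod, finrank_self] at this
  have : finrank K (frameSpace T x e₀ e₁) = finrank K L.ker := rfl
  omega

theorem IsSymmetric.cubic_chart_smul [CharZero K] (hT : IsSymmetric T) (u : V) (t : K) :
    T (chart T x e₀ e₁ (t • u)) (chart T x e₀ e₁ (t • u)) (chart T x e₀ e₁ (t • u)) =
      T e₀ e₀ e₀ + 3 * T e₀ e₀ u * t + 3 * (T e₀ u u - T x u u * T e₀ e₀ e₁) * t ^ 2 +
      (T u u u - 6 * T x u u * T e₀ u e₁) * t ^ 3 +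
      3 * T x u u * (T x u u * T e₀ e₁ e₁ - T u u e₁) * t ^ 4 +
      3 * T x u u ^ 2 * T u e₁ e₁ * t ^ 5 + -T e₁ e₁ e₁ * T x u u ^ 3 * t ^ 6 := by
  have split : chart T x e₀ e₁ (t • u) = (e₀ + t • u) + (-(t ^ 2 * T x u u)) • e₁ := by
    simp only [chart, map_smul, LinearMap.smul_apply, smul_eq_mul]
    module
  rw [split, hT.apply_add_smul, hT.apply_add_smul]
  simp only [map_add, map_smul, LinearMap.add_apply, LinearMap.smul_apply, smul_eq_mul,
    hT.swap_left u e₀]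
  ring

theorem chart_mem_polyFun [FiniteDimensional K V] {f : V → K} (hf : f ∈ polyFun K V)
    (T : V →ₗ[K] V →ₗ[K] V →ₗ[K] K) (x e₀ e₁ : V) (r : K) :
    (fun u => f (r • chart T x e₀ e₁ u)) ∈ polyFun K V :=
  comp_mem_polyFun hf fun ℓ => by
    simp only [chart, map_smul, map_add, map_sub, smul_eq_mul]
    exact (polyFun K V).mul_mem (const_mem_polyFun r) ((polyFun K V).add_mem
      ((polyFun K V).sub_mem (const_mem_polyFun _) ((polyFun K V).mul_mem
        (bilinear_mem_polyFun (T x)) (const_mem_polyFun _))) (linear_mem_polyFun ℓ))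

namespace IsGeneralPoint

variable (hx : IsGeneralPoint T x)
include hx

theorem exists_isFrame [CharZero K] [IsAlgClosed K] [FiniteDimensional K V]
    (hV : 6 < finrank K V) {v w : V} (hv : v ∈ tangentQuadric T x) (hvx : v ∉ K ∙ x)
    (hwx : w ∉ K ∙ x) : ∃ e₀ e₁, IsFrame T x e₀ e₁ ∧ T x e₁ v ≠ 0 ∧ T x e₁ w ≠ 0 := by
  have hirr := hx.polyIrreducible_tangentQuadric (by omega)
  obtain ⟨a, ha, hac⟩ := hx.exists_mem_tangentQuadric_cubic_ne_mul hV (zero_mem _) (zero_mem _)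
    (fun t v => by simp) fun t v => by simp
  obtain ⟨b, hb, hbv⟩ := hx.exists_mem_tangentQuadric_apply_ne_zero (by omega) hvx
  obtain ⟨c, hc, hcw⟩ := hx.exists_mem_tangentQuadric_apply_ne_zero (by omega) hwx
  have hlin (v : V) := linear_mem_polyFun ((T x).flip v)
  obtain ⟨d, hd, hdv, hdw⟩ := hirr _ (hlin v) _ (hlin w) ⟨b, hb, hbv⟩ ⟨c, hc, hcw⟩
  obtain ⟨e₁, he₁, hcubic, he₁v⟩ := hirr _ (trilinear_mem_polyFun T) _
    ((polyFun K V).mul_mem (hlin v) (hlin w)) ⟨a, ha, by simpa using hac⟩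
    ⟨d, hd, mul_ne_zero hdv hdw⟩
  have h₁ : T x e₁ v ≠ 0 := left_ne_zero_of_mul he₁v
  refine ⟨(2 * T x e₁ v)⁻¹ • v, e₁, ⟨⟨?_, ?_⟩, he₁, ?_, hcubic⟩, h₁, right_ne_zero_of_mul he₁v⟩
  · simp [hv.1]
  · simp [hv.2]
  · rw [map_smul, LinearMap.smul_apply, hx.isSymmetric.swap_right x v, smul_eq_mul]
    field_simp

variable (he : IsFrame T x e₀ e₁)
include he

theorem chart_mem_tangentQuadric {u : V} (hu : u ∈ frameSpace T x e₀ e₁) :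
    chart T x e₀ e₁ u ∈ tangentQuadric T x := by
  obtain ⟨hxu, h₀, h₁⟩ := mem_frameSpace.mp hu
  have hsymm := hx.isSymmetric.swap_right x
  refine ⟨by simp [chart, hxu, he.left_mem.1, he.right_mem.1], ?_⟩
  simp only [chart, map_add, map_sub, map_smul, LinearMap.add_apply, LinearMap.sub_apply,
    LinearMap.smul_apply, smul_eq_mul, he.left_mem.2, he.right_mem.2, hsymm u, hsymm e₁ e₀, h₀,
    h₁]
  linear_combination -T x u u * he.two_mul_apply

theorem two_mul_apply_right_chart {u : V} (hu : u ∈ frameSpace T x e₀ e₁) :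
    2 * T x e₁ (chart T x e₀ e₁ u) = 1 := by
  obtain ⟨-, -, h₁⟩ := mem_frameSpace.mp hu
  simpa [chart, h₁, he.right_mem.2, hx.isSymmetric.swap_right x e₁ e₀] using he.two_mul_apply

omit hx in
theorem two_mul_apply_left_chart {u : V} (hu : u ∈ frameSpace T x e₀ e₁) :
    2 * T x e₀ (chart T x e₀ e₁ u) = -T x u u := by
  simp only [chart, map_add, map_sub, map_smul, smul_eq_mul, he.left_mem.2,
    (mem_frameSpace.mp hu).2.1]
  linear_combination -T x u u * he.two_mul_apply

theorem sub_mem_frameSpace {v : V} (hv : v ∈ tangentSpace T x) :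
    v - (2 * T x e₁ v) • e₀ - (2 * T x e₀ v) • e₁ ∈ frameSpace T x e₀ e₁ := by
  have hv : T x x v = 0 := hv
  refine mem_frameSpace.mpr ⟨by simp [hv, he.left_mem.1, he.right_mem.1], ?_, ?_⟩
  · simp only [map_sub, map_smul, smul_eq_mul, he.left_mem.2]
    linear_combination -T x e₀ v * he.two_mul_apply
  · simp only [map_sub, map_smul, smul_eq_mul, he.right_mem.2,
      hx.isSymmetric.swap_right x e₁ e₀]
    linear_combination -T x e₁ v * he.two_mul_apply

theorem exists_eq_smul_chart {v : V} (hv : v ∈ tangentQuadric T x) (h : 2 * T x e₁ v ≠ 0) :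
    ∃ u ∈ frameSpace T x e₀ e₁, v = (2 * T x e₁ v) • chart T x e₀ e₁ u := by
  refine ⟨_, (frameSpace T x e₀ e₁).smul_mem (2 * T x e₁ v)⁻¹ (hx.sub_mem_frameSpace he hv.1), ?_⟩
  have hsymm := hx.isSymmetric.swap_right x
  set a := 2 * T x e₁ v with ha
  set b := 2 * T x e₀ v with hb
  have hquad : T x (a⁻¹ • (v - a • e₀ - b • e₁)) (a⁻¹ • (v - a • e₀ - b • e₁)) = -b / a := by
    simp only [map_sub, map_smul, LinearMap.sub_apply, LinearMap.smul_apply, smul_eq_mul, hv.2,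
      he.left_mem.2, he.right_mem.2, hsymm v, hsymm e₁ e₀]
    field_simp
    linear_combination a * b * he.two_mul_apply - a * hb - b * ha
  rw [chart, hquad]
  match_scalars <;> field_simp <;> ring

theorem exists_chart_coordinates {ι : Type*}
    (e : (ι → K) ≃ₗ[K] frameSpace T x e₀ e₁) :
    ∃ π : V →ₗ[K] (ι → K), ∀ y, π (chart T x e₀ e₁ (e y)) = y := by
  obtain ⟨ρ, hρ⟩ := (frameSpace T x e₀ e₁).subtype.exists_leftInverse_of_injective
    (Submodule.ker_subtype _)
  have hρ (u : frameSpace T x e₀ e₁) : ρ u = u := congr($hρ u)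
  refine ⟨e.symm.toLinearMap ∘ₗ ρ ∘ₗ (LinearMap.id - ((2 : K) • T x e₁).smulRight e₀ -
    ((2 : K) • T x e₀).smulRight e₁), fun y => ?_⟩
  have hchart : chart T x e₀ e₁ (e y) - (2 * T x e₁ (chart T x e₀ e₁ (e y))) • e₀ -
      (2 * T x e₀ (chart T x e₀ e₁ (e y))) • e₁ = e y := by
    rw [hx.two_mul_apply_right_chart he (e y).2, two_mul_apply_left_chart he (e y).2, chart]
    module
  simp only [LinearMap.comp_apply, LinearMap.sub_apply, LinearMap.id_apply,
    LinearMap.smulRight_apply, LinearMap.smul_apply, smul_eq_mul, hchart, hρ]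
  exact e.symm_apply_apply y

end IsGeneralPoint

end Frames

section SexticOfFrame

variable {K : Type*} [Field K] [CharZero K] {V : Type*} [AddCommGroup V] [Module K V]
  [FiniteDimensional K V] {T : V →ₗ[K] V →ₗ[K] V →ₗ[K] K} {x e₀ e₁ : V}
  {ι : Type*} [Finite ι]

theorem IsSymmetric.exists_sextic (hT : IsSymmetric T) (L : (ι → K) →ₗ[K] V)
    {Q : MvPolynomial ι K} (hQ : ∀ y, eval y Q = T x (L y) (L y)) : ∃ p : MvPolynomial ι K,
      (∀ y, eval y p =
        T (chart T x e₀ e₁ (L y)) (chart T x e₀ e₁ (L y)) (chart T x e₀ e₁ (L y))) ∧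
      (scaleHom K ι p).natDegree ≤ 6 ∧ homogeneousComponent 6 p = C (-T e₁ e₁ e₁) * Q ^ 3 ∧
      Q ^ 2 ∣ homogeneousComponent 5 p := by
  have hchart := comp_linear_mem_polyFun
    (chart_mem_polyFun (trilinear_mem_polyFun T) T x e₀ e₁ 1) L
  simp only [one_smul] at hchart
  obtain ⟨p, hp⟩ := exists_eval_eq hchart
  obtain ⟨N, hN⟩ := exists_eval_eq (linear_mem_polyFun ((T.flip e₁).flip e₁ ∘ₗ L))
  have expand (y : ι → K) : ∃ c₀ c₁ c₂ c₃ c₄ c₅ c₆ : K, c₅ = 3 * eval y Q ^ 2 * eval y N ∧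
      c₆ = -T e₁ e₁ e₁ * eval y Q ^ 3 ∧ (scaleHom K ι p).map (eval y) =
        .C c₀ + .C c₁ * .X + .C c₂ * .X ^ 2 + .C c₃ * .X ^ 3 + .C c₄ * .X ^ 4 + .C c₅ * .X ^ 5 +
          .C c₆ * .X ^ 6 :=
    ⟨_, _, _, _, _, _, _, rfl, rfl, Polynomial.funext fun t => by
      rw [eval_scaleHom, hp, map_smul, hT.cubic_chart_smul]
      simp only [Polynomial.eval_add, Polynomial.eval_mul, Polynomial.eval_C, Polynomial.eval_X,
        Polynomial.eval_pow, hQ, hN, LinearMap.comp_apply, LinearMap.flip_apply]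
      rfl⟩
  refine ⟨p, hp, Polynomial.natDegree_le_iff_coeff_eq_zero.mpr fun n hn => ?_, ?_,
    C 3 * N, ?_⟩ <;> refine MvPolynomial.funext fun y => ?_ <;>
    obtain ⟨c₀, c₁, c₂, c₃, c₄, c₅, c₆, h₅, h₆, h⟩ := expand y
  · rw [← Polynomial.coeff_map, h, map_zero]
    refine Polynomial.coeff_eq_zero_of_natDegree_lt (lt_of_le_of_lt ?_ hn)
    compute_degree
  · rw [← scaleHom_coeff, ← Polynomial.coeff_map, h]
    trans c₆
    · simp
    · simp [h₆]
  · rw [← scaleHom_coeff, ← Polynomial.coeff_map, h]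
    trans c₅
    · simp
    · simp only [h₅, map_mul, map_pow, eval_C]
      ring

namespace IsGeneralPoint

variable [IsAlgClosed K] (hx : IsGeneralPoint T x) (he : IsFrame T x e₀ e₁)
include hx he

theorem exists_prime_frameSpace (hV : 6 < finrank K V) (e : (ι → K) ≃ₗ[K] frameSpace T x e₀ e₁) :
    ∃ Q : MvPolynomial ι K, Prime Q ∧ Q.IsHomogeneous 2 ∧ ∀ y, eval y Q = T x (e y) (e y) := by
  have := le_finrank_frameSpace_add_three (T := T) (x := x) (e₀ := e₀) (e₁ := e₁)
  obtain ⟨ℓ, hℓ⟩ := hx.exists_dual_eq_zero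
  refine exists_prime_eval_eq (B := (T x).domRestrict₁₂ _ _) (ℓ := ℓ ∘ₗ Submodule.subtype _)
    (fun v w => hx.isSymmetric.swap_right x v w)
    (fun v hv hℓv => Subtype.ext (hℓ v (fun w hw => ?_) hℓv)) (by omega) e
  obtain ⟨-, h₀, h₁⟩ := mem_frameSpace.mp v.2
  have hsymm := hx.isSymmetric.swap_right x
  have hw' : T x v _ = 0 := congr($hv ⟨_, hx.sub_mem_frameSpace he hw⟩)
  simpa [hsymm v e₀, hsymm v e₁, h₀, h₁] using hw'

theorem exists_mem_frameSpace_cubic_chart_ne_mul (hV : 6 < finrank K V) {g h : V → K}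
    (hg : g ∈ polyFun K V) (hh : h ∈ polyFun K V) (hg_smul : ∀ (t : K) v, g (t • v) = t * g v)
    (hh_smul : ∀ (t : K) v, h (t • v) = t ^ 2 * h v) : ∃ u ∈ frameSpace T x e₀ e₁,
      T (chart T x e₀ e₁ u) (chart T x e₀ e₁ u) (chart T x e₀ e₁ u) ≠
        g (chart T x e₀ e₁ u) * h (chart T x e₀ e₁ u) := by
  obtain ⟨w, hw, hwgh⟩ := hx.exists_mem_tangentQuadric_cubic_ne_mul hV hg hh hg_smul hh_smul
  have hleft : 2 * T x e₁ e₀ ≠ 0 := by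
    rw [hx.isSymmetric.swap_right x e₁, he.two_mul_apply]
    exact one_ne_zero
  obtain ⟨v, hv, hvgh, hv₁⟩ := hx.polyIrreducible_tangentQuadric (by omega) _
    ((polyFun K V).sub_mem (trilinear_mem_polyFun T) ((polyFun K V).mul_mem hg hh)) _
    (linear_mem_polyFun ((2 : K) • T x e₁)) ⟨w, hw, sub_ne_zero.mpr hwgh⟩ ⟨e₀, he.left_mem, hleft⟩
  obtain ⟨u, hu, hvu⟩ := hx.exists_eq_smul_chart he hv hv₁
  refine ⟨u, hu, fun heq => hvgh ?_⟩
  simp only [Pi.sub_apply, Pi.mul_apply]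
  rw [hvu, hg_smul, hh_smul]
  simp only [map_smul, LinearMap.smul_apply, smul_eq_mul, heq]
  ring

omit [Finite ι] in
/-- The homogenisation of a factorisation of the sextic along the chart would write the cubic, on
the tangent quadric, as a product of a linear and a quadratic form. -/
theorem not_forall_cubic_chart_eq_mul (hV : 6 < finrank K V)
    (e : (ι → K) ≃ₗ[K] frameSpace T x e₀ e₁) {Q a₁ b₁ b₂ b₃ : MvPolynomial ι K}
    (hQ : ∀ y, eval y Q = T x (e y) (e y)) (ha₁ : a₁.IsHomogeneous 1) (hb₁ : b₁.IsHomogeneous 1)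
    (hb₂ : b₂.IsHomogeneous 2) (hb₃ : b₃.IsHomogeneous 1) (α a₀ β b₀ : K) :
    ¬ ∀ y, T (chart T x e₀ e₁ (e y)) (chart T x e₀ e₁ (e y)) (chart T x e₀ e₁ (e y)) =
      eval y ((C α * Q + a₁ + C a₀) * (C β * Q ^ 2 + Q * b₃ + b₂ + b₁ + C b₀)) := by
  obtain ⟨π, hπ⟩ := hx.exists_chart_coordinates he e
  let y₀ : V →ₗ[K] K := (2 : K) • T x e₁
  let y₁ : V →ₗ[K] K := (2 : K) • T x e₀
  let g (v : V) : K := a₀ * y₀ v - α * y₁ v + eval (π v) a₁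
  let h (v : V) : K := β * y₁ v ^ 2 - y₁ v * eval (π v) b₃ + eval (π v) b₂ +
    y₀ v * eval (π v) b₁ + b₀ * y₀ v ^ 2
  have heval (b : MvPolynomial ι K) : (fun v => eval (π v) b) ∈ polyFun K V :=
    comp_linear_mem_polyFun (eval_mem_polyFun b) π
  have hlin := linear_mem_polyFun (K := K) (U := V)
  have hconst := const_mem_polyFun (K := K) (U := V)
  have hmul {f f' : V → K} := (polyFun K V).mul_mem (x := f) (y := f')
  have hadd {f f' : V → K} := (polyFun K V).add_mem (x := f) (y := f')
  have hsub {f f' : V → K} := (polyFun K V).sub_mem (x := f) (y := f')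
  have hsq {f : V → K} (hf : f ∈ polyFun K V) := (polyFun K V).pow_mem hf 2
  have hg : g ∈ polyFun K V :=
    hadd (hsub (hmul (hconst a₀) (hlin y₀)) (hmul (hconst α) (hlin y₁))) (heval a₁)
  have hh : h ∈ polyFun K V :=
    hadd (hadd (hadd (hsub (hmul (hconst β) (hsq (hlin y₁))) (hmul (hlin y₁) (heval b₃)))
      (heval b₂)) (hmul (hlin y₀) (heval b₁))) (hmul (hconst b₀) (hsq (hlin y₀)))
  obtain ⟨u, hu, hne⟩ := hx.exists_mem_frameSpace_cubic_chart_ne_mul he hV hg hh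
    (fun t v => by
      simp only [g, map_smul, smul_eq_mul, eval_smul_of_isHomogeneous ha₁]
      ring)
    fun t v => by
      simp only [h, map_smul, smul_eq_mul, eval_smul_of_isHomogeneous hb₁,
        eval_smul_of_isHomogeneous hb₂, eval_smul_of_isHomogeneous hb₃]
      ring
  obtain ⟨y, rfl⟩ : ∃ y, e y = u := ⟨e.symm ⟨u, hu⟩, by simp⟩
  have hy₀ : y₀ (chart T x e₀ e₁ (e y)) = 1 := hx.two_mul_apply_right_chart he hu
  have hy₁ : y₁ (chart T x e₀ e₁ (e y)) = -eval y Q :=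
    (two_mul_apply_left_chart he hu).trans (by rw [hQ])
  have hπy : π (chart T x e₀ e₁ (e y)) = y := hπ y
  intro hfactor
  refine hne ?_
  rw [hfactor y]
  simp only [g, h, hy₀, hy₁, hπy, map_mul, map_add, map_pow, eval_C]
  ring

theorem exists_prime_sextic (hV : 6 < finrank K V) (e : (ι → K) ≃ₗ[K] frameSpace T x e₀ e₁) :
    ∃ Q p : MvPolynomial ι K, (∀ y, eval y Q = T x (e y) (e y)) ∧ Q ≠ 0 ∧ Prime p ∧
      (∀ y, eval y p =
        T (chart T x e₀ e₁ (e y)) (chart T x e₀ e₁ (e y)) (chart T x e₀ e₁ (e y))) ∧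
      (scaleHom K ι p).natDegree ≤ 6 ∧ homogeneousComponent 6 p = C (-T e₁ e₁ e₁) * Q ^ 3 := by
  obtain ⟨Q, hQ_prime, hQ2, hQ⟩ := hx.exists_prime_frameSpace he hV e
  obtain ⟨p, hp, hdeg, h6, h5⟩ := hx.isSymmetric.exists_sextic (e₀ := e₀)
    (Submodule.subtype _ ∘ₗ e.toLinearMap) hQ
  refine ⟨Q, p, hQ, hQ_prime.ne_zero, Irreducible.prime ?_, hp, hdeg, h6⟩
  by_contra hirr
  obtain ⟨α, a₀, β, b₀, a₁, b₁, b₂, b₃, ha₁, hb₁, hb₂, hb₃, rfl⟩ :=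
    exists_factors_of_not_irreducible hQ_prime hQ2 (neg_ne_zero.mpr he.cubic_ne_zero) hdeg h6 h5
      hirr
  exact hx.not_forall_cubic_chart_eq_mul he hV e hQ ha₁ hb₁ hb₂ hb₃ α a₀ β b₀
    fun y => (hp y).symm

end IsGeneralPoint

end SexticOfFrame

section IrreducibleCone

variable {K : Type*} [Field K] [CharZero K] [IsAlgClosed K] {V : Type*} [AddCommGroup V]
  [Module K V] [FiniteDimensional K V] {T : V →ₗ[K] V →ₗ[K] V →ₗ[K] K} {x e₀ e₁ : V}

omit [CharZero K] in
theorem exists_eval_eq_zero_of_prime {ι : Type*} [Finite ι] {f : MvPolynomial ι K}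
    (hf : Prime f) : ∃ y, eval y f = 0 := by
  by_contra! h
  exact hf.not_isUnit (isUnit_of_dvd_one
    (squarefree_dvd_of_forall_eval_eq_zero hf.squarefree fun y hy => absurd hy (h y)))

namespace IsGeneralPoint

variable (hx : IsGeneralPoint T x)
include hx

omit [CharZero K] [IsAlgClosed K] [FiniteDimensional K V] in
theorem smul_chart_mem_lineCone (he : IsFrame T x e₀ e₁) {u : V} (hu : u ∈ frameSpace T x e₀ e₁)
    (h : T (chart T x e₀ e₁ u) (chart T x e₀ e₁ u) (chart T x e₀ e₁ u) = 0) (r : K) :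
    r • chart T x e₀ e₁ u ∈ lineCone T x :=
  smul_mem_lineCone ⟨hx.chart_mem_tangentQuadric he hu, h⟩ r

theorem exists_mem_lineCone_notMem_span (hV : 6 < finrank K V) :
    ∃ z ∈ lineCone T x, z ∉ K ∙ x := by
  obtain ⟨v, hv, hcubic⟩ := hx.exists_mem_tangentQuadric_cubic_ne_mul hV (zero_mem _) (zero_mem _)
    (fun t v => by simp) fun t v => by simp
  have hvx : v ∉ K ∙ x := fun hvx => by
    obtain ⟨t, rfl⟩ := Submodule.mem_span_singleton.mp hvx
    simp [hx.apply_self] at hcubic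
  obtain ⟨e₀, e₁, he, -⟩ := hx.exists_isFrame hV hv hvx hvx
  let e := (finBasis K (frameSpace T x e₀ e₁)).equivFun.symm
  obtain ⟨-, p, -, -, hp_prime, hp, -⟩ := hx.exists_prime_sextic he hV e
  obtain ⟨y, hy⟩ := exists_eval_eq_zero_of_prime hp_prime
  refine ⟨_, hx.smul_chart_mem_lineCone he (e y).2 ((hp y).symm.trans hy) 1, fun h => ?_⟩
  obtain ⟨t, ht⟩ := Submodule.mem_span_singleton.mp h
  have := hx.two_mul_apply_right_chart he (e y).2
  rw [one_smul] at ht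
  simp [← ht, hx.isSymmetric.swap_right x e₁, he.right_mem.1] at this

theorem exists_mem_lineCone_notMem_span_ne_zero (hV : 6 < finrank K V) {g : V → K}
    (hg : g ∈ polyFun K V) {v : V} (hv : v ∈ lineCone T x) (hgv : g v ≠ 0) :
    ∃ w ∈ lineCone T x, w ∉ K ∙ x ∧ g w ≠ 0 := by
  by_cases hvx : v ∈ K ∙ x
  · obtain ⟨t, rfl⟩ := Submodule.mem_span_singleton.mp hvx
    obtain ⟨z, hz, hzx⟩ := hx.exists_mem_lineCone_notMem_span hV
    obtain ⟨s, -, hgs, hs⟩ := polyIrreducible_univ _ (comp_line_mem_polyFun hg (t • x) z) _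
      (id_mem_polyFun (K := K)) ⟨0, trivial, by simpa using hgv⟩ ⟨1, trivial, one_ne_zero⟩
    refine ⟨s • z + t • x, hx.add_smul_mem_lineCone (smul_mem_lineCone hz s) t, fun h => hzx ?_,
      by rwa [add_comm]⟩
    have hsz := (Submodule.add_mem_iff_left _
      (Submodule.smul_mem _ t (Submodule.mem_span_singleton_self x))).mp h
    exact (Submodule.smul_mem_iff _ hs).mp hsz
  · exact ⟨v, hv, hvx, hgv⟩

theorem polyIrreducible_lineCone (hV : 6 < finrank K V) : PolyIrreducible K (lineCone T x) := by
  rintro g hg h hh ⟨v, hv, hgv⟩ ⟨w, hw, hhw⟩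
  obtain ⟨v, hv, hvx, hgv⟩ := hx.exists_mem_lineCone_notMem_span_ne_zero hV hg hv hgv
  obtain ⟨w, hw, hwx, hhw⟩ := hx.exists_mem_lineCone_notMem_span_ne_zero hV hh hw hhw
  obtain ⟨e₀, e₁, he, he₁v, he₁w⟩ := hx.exists_isFrame hV hv.1 hvx hwx
  let e := (finBasis K (frameSpace T x e₀ e₁)).equivFun.symm
  obtain ⟨-, p, -, -, hp_prime, hp, -⟩ := hx.exists_prime_sextic he hV e
  have hchart {z : V} (hz : z ∈ lineCone T x) (hez : T x e₁ z ≠ 0) :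
      ∃ (r : K) (y : _), eval y p = 0 ∧ z = r • chart T x e₀ e₁ (e y) := by
    have hr : 2 * T x e₁ z ≠ 0 := mul_ne_zero two_ne_zero hez
    obtain ⟨u, hu, hzu⟩ := hx.exists_eq_smul_chart he hz.1 hr
    generalize 2 * T x e₁ z = r at hr hzu
    subst hzu
    have hcubic := hz.2
    simp only [map_smul, LinearMap.smul_apply, smul_eq_mul, mul_eq_zero, hr, false_or] at hcubic
    exact ⟨r, e.symm ⟨u, hu⟩, by simpa [hp] using hcubic, by simp⟩
  obtain ⟨r, y, hy, rfl⟩ := hchart hv he₁v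
  obtain ⟨s, y', hy', rfl⟩ := hchart hw he₁w
  have hscale {f : V → K} (hf : f ∈ polyFun K V) (z : V) :
      (fun t : K => f (t • z)) ∈ polyFun K K := by simpa using comp_line_mem_polyFun hf 0 z
  obtain ⟨t, -, hgt, hht⟩ := polyIrreducible_univ _ (hscale hg _) _ (hscale hh _)
    ⟨r, trivial, hgv⟩ ⟨s, trivial, hhw⟩
  have hchart_poly {f : V → K} (hf : f ∈ polyFun K V) :
      (fun y => f (t • chart T x e₀ e₁ (e y))) ∈ polyFun K (Fin _ → K) :=
    comp_linear_mem_polyFun (chart_mem_polyFun hf T x e₀ e₁ t)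
      (Submodule.subtype _ ∘ₗ e.toLinearMap)
  obtain ⟨z, hz, hgz, hhz⟩ := polyIrreducible_zeros hp_prime _ (hchart_poly hg) _
    (hchart_poly hh) ⟨y, hy, hgt⟩ ⟨y', hy', hht⟩
  exact ⟨_, hx.smul_chart_mem_lineCone he (e z).2 ((hp z).symm.trans hz) t, hgz, hhz⟩

end IsGeneralPoint

end IrreducibleCone

section DegreeLe

variable {K : Type*} [Field K] {U : Type*} [AddCommGroup U] [Module K U]

/-- A set of representatives of the lines through the origin contained in the cone `Z`: it counts
the points of the projective set attached to `Z`. -/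
structure IsSystemOfRepresentatives (P : Finset U) (Z : Set U) : Prop where
  ne_zero : ∀ p ∈ P, p ≠ 0
  mem : ∀ p ∈ P, p ∈ Z
  eq_of_mem_span : ∀ p ∈ P, ∀ p' ∈ P, p ∈ K ∙ p' → p = p'
  exists_mem_span : ∀ z ∈ Z, z ≠ 0 → ∃ p ∈ P, z ∈ K ∙ p

theorem PolyIrreducible.exists_prod_ne_zero {S : Set U} (hS : PolyIrreducible K S)
    (hne : S.Nonempty) {ι : Type*} {s : Finset ι} {f : ι → U → K}
    (hf : ∀ i ∈ s, f i ∈ polyFun K U) (hf0 : ∀ i ∈ s, ∃ v ∈ S, f i v ≠ 0) :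
    ∃ v ∈ S, ∏ i ∈ s, f i v ≠ 0 := by
  classical
  induction s using Finset.induction_on with
  | empty => exact hne.imp fun v hv => ⟨hv, by simp⟩
  | insert i s hi ih =>
    simp only [Finset.forall_mem_insert] at hf hf0
    obtain ⟨v, hv, h₁, h₂⟩ := hS _ hf.1 _ (prod_mem_polyFun hf.2) hf0.1 (ih hf.2 hf0.2)
    exact ⟨v, hv, by rw [Finset.prod_insert hi]; exact mul_ne_zero h₁ h₂⟩

theorem exists_apply_self_ne_zero_notMem_span [Infinite K] [FiniteDimensional K U]
    (hU : 2 < finrank K U) {B : U →ₗ[K] U →ₗ[K] K} {u : U} (hB : B u u ≠ 0) (P : Finset U) :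
    ∃ w, B w w ≠ 0 ∧ ∀ p ∈ P, ∀ p' ∈ P, w ∉ Submodule.span K {p, p'} := by
  have hψ (p : U × U) : ∃ ψ : Dual K U, ψ ≠ 0 ∧ Submodule.span K {p.1, p.2} ≤ ψ.ker := by
    refine Submodule.exists_le_ker_of_lt_top _ (lt_top_iff_ne_top.mpr fun h => hU.not_ge ?_)
    classical
    have := finrank_span_finset_le_card (R := K) {p.1, p.2}
    rw [Set.finrank, Finset.coe_pair, h, finrank_top] at this
    exact this.trans Finset.card_le_two
  choose ψ hψ0 hψ using hψ
  have hψ_mem : ∀ p ∈ P ×ˢ P, (fun u => ψ p u) ∈ polyFun K U := fun p _ =>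
    linear_mem_polyFun (ψ p)
  obtain ⟨v, hv⟩ := polyIrreducible_univ.exists_prod_ne_zero Set.univ_nonempty hψ_mem fun p _ =>
    (DFunLike.ne_iff.mp (hψ0 p)).imp fun _ h => ⟨trivial, h⟩
  obtain ⟨w, -, hBw, hψw⟩ := polyIrreducible_univ _ (bilinear_mem_polyFun B) _
    (prod_mem_polyFun hψ_mem) ⟨u, trivial, hB⟩ ⟨v, hv⟩
  exact ⟨w, hBw, fun p hp p' hp' hw =>
    Finset.prod_ne_zero_iff.mp hψw _ (Finset.mk_mem_product hp hp') (hψ (p, p') hw)⟩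

theorem exists_polynomial_natDegree_le_eval_line [Infinite K] [FiniteDimensional K U] {f : U → K}
    {d : ℕ} (hf : f ∈ polyFun K U) (hd : ∀ (t : K) v, f (t • v) = t ^ d * f v) (y u : U) :
    ∃ p : Polynomial K, p.natDegree ≤ d ∧ ∀ t, p.eval t = f (y + t • u) := by
  let e := (finBasis K U).equivFun
  obtain ⟨F, hF, hFf⟩ := exists_isHomogeneous_eval_eq
    (comp_linear_mem_polyFun hf e.symm.toLinearMap) (d := d) fun t v => by simp [hd]
  let line (i : Fin (finrank K U)) : Polynomial K := .C (e y i) + .C (e u i) * .X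
  refine ⟨aeval line F, ?_, fun t => ?_⟩
  · have hline (i) : (line i).natDegree ≤ 1 := by
      simpa [line, add_comm] using Polynomial.natDegree_linear_le (a := e u i) (b := e y i)
    simpa using aeval_natDegree_le F hF.totalDegree_le line hline
  · have hpoint : (fun i => Polynomial.aeval t (line i)) = e (y + t • u) := by
      ext i
      simp [line, -map_mul, Polynomial.coe_aeval_eq_eval, mul_comm t]
    rw [← Polynomial.coe_aeval_eq_eval, comp_aeval_apply, hpoint, aeval_eq_eval, hFf]
    exact congrArg f (e.symm_apply_apply _)

theorem exists_apply_add_smul_ne_zero [Infinite K] {f : U → K} {d : ℕ} (hf : f ∈ polyFun K U)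
    (hd : ∀ (t : K) v, f (t • v) = t ^ d * f v) {v : U} (hv : f v ≠ 0) (y : U) :
    ∃ t : K, f (y + t • v) ≠ 0 := by
  by_contra! h
  have key := apply_zero_of_forall_ne_zero (comp_line_mem_polyFun hf v y) fun r hr => by
    rw [show v + r • y = r • (y + r⁻¹ • v) by rw [smul_add, smul_inv_smul₀ hr, add_comm], hd, h,
      mul_zero]
  exact hv (by simpa using key)

theorem exists_smul_add_smul_eq [FiniteDimensional K U] (hU : finrank K U ≤ 2) {v w : U}
    (hvw : LinearIndependent K ![v, w]) (u : U) : ∃ a b : K, a • v + b • w = u := by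
  have htop := hvw.span_eq_top_of_card_eq_finrank' (by
    simpa using le_antisymm (by simpa using hvw.fintype_card_le_finrank) hU)
  rw [← Submodule.mem_span_pair, ← Matrix.range_cons_cons_empty, htop]
  trivial

namespace IsSystemOfRepresentatives

variable {P : Finset U} {Z : Set U}

theorem card_le_one_of_univ [Infinite K] (hP : IsSystemOfRepresentatives (K := K) P Set.univ) :
    P.card ≤ 1 := by
  refine Finset.card_le_one.mpr fun p hp p' hp' => by_contra fun hpp' => ?_
  have hline (t : K) : ∃ q ∈ P, p + t • p' ∈ K ∙ q := hP.exists_mem_span _ trivial fun h =>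
    hpp' (hP.eq_of_mem_span p hp p' hp' (Submodule.mem_span_singleton.mpr
      ⟨-t, by rw [neg_smul, eq_neg_of_add_eq_zero_left h]⟩))
  choose q hq hspan using hline
  obtain ⟨s, t, hst, hqst⟩ := Finite.exists_ne_map_eq_of_infinite fun t => (⟨q t, hq t⟩ : P)
  obtain hqst : q s = q t := congrArg Subtype.val hqst
  have hp'q : p' ∈ K ∙ q t := by
    have := Submodule.sub_mem _ (hqst ▸ hspan s) (hspan t)
    rw [add_sub_add_left_eq_sub, ← sub_smul] at this
    exact (Submodule.smul_mem_iff _ (sub_ne_zero.mpr hst)).mp this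
  have hpq : p ∈ K ∙ q t :=
    (Submodule.add_mem_iff_left _ (Submodule.smul_mem _ t hp'q)).mp (hspan t)
  exact hpp' ((hP.eq_of_mem_span p hp _ (hq t) hpq).trans
    (hP.eq_of_mem_span p' hp' _ (hq t) hp'q).symm)

theorem card_le_of_finrank_le_two [Infinite K] [FiniteDimensional K U]
    (hP : IsSystemOfRepresentatives (K := K) P Z) (hU : finrank K U ≤ 2) {f : U → K} {d : ℕ}
    (hf : f ∈ polyFun K U) (hd : ∀ (t : K) v, f (t • v) = t ^ d * f v) (hfZ : ∀ z ∈ Z, f z = 0)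
    {v : U} (hv : f v ≠ 0) : P.card ≤ d := by
  classical
  obtain rfl | ⟨p₀, hp₀⟩ := P.eq_empty_or_nonempty
  · simp
  have hli : LinearIndependent K ![p₀, v] := by
    rw [LinearIndependent.pair_iff' (hP.ne_zero p₀ hp₀)]
    rintro a rfl
    exact hv (by rw [hd, hfZ p₀ (hP.mem p₀ hp₀), mul_zero])
  have hpoint : ∀ p ∈ P, ∃ t s : K, s ≠ 0 ∧ s • (p₀ + t • v) = p := fun p hp => by
    obtain ⟨a, b, rfl⟩ := exists_smul_add_smul_eq hU hli p
    have ha : a ≠ 0 := by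
      rintro rfl
      have hb := hfZ _ (hP.mem _ hp)
      rw [zero_smul, zero_add, hd] at hb
      refine hP.ne_zero _ hp ?_
      rw [eq_zero_of_pow_eq_zero ((mul_eq_zero.mp hb).resolve_right hv), zero_smul, zero_smul,
        add_zero]
    exact ⟨b / a, a, ha, by rw [smul_add, smul_smul, mul_div_cancel₀ _ ha]⟩
  choose! t s hs hst using hpoint
  have ht : Set.InjOn t P := fun p hp p' hp' h => hP.eq_of_mem_span p hp p' hp' <|
    Submodule.mem_span_singleton.mpr ⟨s p / s p', calc
      (s p / s p') • p' = (s p / s p') • s p' • (p₀ + t p' • v) := by rw [hst p' hp']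
      _ = s p • (p₀ + t p • v) := by rw [smul_smul, div_mul_cancel₀ _ (hs p' hp'), h]
      _ = p := hst p hp⟩
  obtain ⟨F, hF, hFf⟩ := exists_polynomial_natDegree_le_eval_line hf hd p₀ v
  by_contra! hcard
  obtain ⟨r, hr⟩ := exists_apply_add_smul_ne_zero hf hd hv p₀
  rw [← hFf, F.eq_zero_of_natDegree_lt_card_of_eval_eq_zero' (P.image t) ?_ ?_,
    Polynomial.eval_zero] at hr
  · exact hr rfl
  · simp only [Finset.forall_mem_image]
    intro p hp
    have hp0 := hfZ p (hP.mem p hp)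
    rw [← hst p hp, hd] at hp0
    rw [hFf]
    exact (mul_eq_zero.mp hp0).resolve_left (pow_ne_zero d (hs p hp))
  · rw [Finset.card_image_of_injOn ht]
    exact hF.trans_lt hcard

end IsSystemOfRepresentatives

variable {B : U →ₗ[K] U →ₗ[K] K} {T : U →ₗ[K] U →ₗ[K] U →ₗ[K] K} {w : U}

/-- The resultant, as polynomials in `z`, of the quadric `B (v + z w) (v + z w)` and the cubic
`T (v + z w) (v + z w) (v + z w)`, for `v` orthogonal to `w` and `B w w = -1`: modulo
`z ^ 2 = B v v` the cubic is linear in `z`, and this is its norm. -/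
def projectionSextic (B : U →ₗ[K] U →ₗ[K] K) (T : U →ₗ[K] U →ₗ[K] U →ₗ[K] K) (w v : U) : K :=
  (T v v v + 3 * B v v * T v w w) ^ 2 - B v v * (3 * T v v w + B v v * T w w w) ^ 2

theorem projectionSextic_mem_polyFun [FiniteDimensional K U] :
    projectionSextic B T w ∈ polyFun K U := by
  have hB := bilinear_mem_polyFun B
  have hT₁ := bilinear_mem_polyFun (T.compr₂ (LinearMap.applyₗ w))
  have hT₂ := linear_mem_polyFun ((T.flip w).flip w)
  have hc := const_mem_polyFun (U := U) (3 : K)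
  exact (polyFun K U).sub_mem
    ((polyFun K U).pow_mem ((polyFun K U).add_mem (trilinear_mem_polyFun T)
      ((polyFun K U).mul_mem ((polyFun K U).mul_mem hc hB) hT₂)) 2)
    ((polyFun K U).mul_mem hB ((polyFun K U).pow_mem ((polyFun K U).add_mem
      ((polyFun K U).mul_mem hc hT₁)
      ((polyFun K U).mul_mem hB (const_mem_polyFun (T w w w)))) 2))

theorem projectionSextic_smul (t : K) (v : U) :
    projectionSextic B T w (t • v) = t ^ 6 * projectionSextic B T w v := by
  simp only [projectionSextic, map_smul, LinearMap.smul_apply, smul_eq_mul]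
  ring

theorem apply_add_smul_self_of_orthogonal (hB : ∀ u v, B u v = B v u) (hw : B w w = -1) {v : U}
    (hv : B w v = 0) (z : K) : B (v + z • w) (v + z • w) = B v v - z ^ 2 := by
  simp only [map_add, map_smul, LinearMap.add_apply, LinearMap.smul_apply, smul_eq_mul, hw, hv,
    hB v w]
  ring

theorem projectionSextic_eq_zero_iff [IsAlgClosed K] (hB : ∀ u v, B u v = B v u)
    (hT : IsSymmetric T) (hw : B w w = -1) {v : U} (hv : B w v = 0) :
    projectionSextic B T w v = 0 ↔
      ∃ z : K, B (v + z • w) (v + z • w) = 0 ∧ T (v + z • w) (v + z • w) (v + z • w) = 0 := by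
  simp only [apply_add_smul_self_of_orthogonal hB hw hv, hT.apply_add_smul, projectionSextic,
    sub_eq_zero]
  generalize B v v = b, T v v v = a, T v w w = c, T v v w = d, T w w w = e
  refine ⟨fun h => ?_, fun ⟨z, hz, h⟩ => ?_⟩
  · by_cases hd : 3 * d + b * e = 0
    · obtain ⟨z, rfl⟩ := IsAlgClosed.exists_pow_nat_eq b two_pos
      refine ⟨z, rfl, ?_⟩
      have : a + 3 * z ^ 2 * c = 0 := by simpa [hd] using h
      linear_combination this + z * hd
    · obtain ⟨z, hz⟩ : ∃ z, z * (3 * d + b * e) = -(a + 3 * b * c) := ⟨_, div_mul_cancel₀ _ hd⟩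
      have hzb : b = z ^ 2 := mul_right_cancel₀ (pow_ne_zero 2 hd) (by
        linear_combination -h - (z * (3 * d + b * e) - (a + 3 * b * c)) * hz)
      refine ⟨z, hzb, ?_⟩
      subst hzb
      linear_combination hz
  · subst hz
    linear_combination (a + 3 * z ^ 2 * c - z * (3 * d + z ^ 2 * e)) * h

/-- The projection from `w` onto the orthogonal space of `w`, where `B w w = -1`. -/
def projectionFrom (B : U →ₗ[K] U →ₗ[K] K) {w : U} (hw : B w w = -1) :
    U →ₗ[K] LinearMap.ker (B w) :=
  (LinearMap.id + (B w).smulRight w).codRestrict _ fun u => by simp [hw]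

theorem coe_projectionFrom (hw : B w w = -1) (u : U) :
    (projectionFrom B hw u : U) = u + B w u • w := rfl

theorem projectionFrom_add_smul (hw : B w w = -1) {v : U} (hv : B w v = 0) (z : K) :
    (projectionFrom B hw (v + z • w) : U) = v := by
  simp [coe_projectionFrom, hw, hv]

theorem mem_span_of_projectionFrom_mem_span (hw : B w w = -1) {p p' : U}
    (hpp' : w ∉ Submodule.span K {p, p'})
    (h : projectionFrom B hw p ∈ K ∙ projectionFrom B hw p') : p ∈ K ∙ p' := by
  obtain ⟨a, ha⟩ := Submodule.mem_span_singleton.mp h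
  replace ha := congrArg Subtype.val ha
  rw [SetLike.val_smul, coe_projectionFrom, coe_projectionFrom] at ha
  have hw_smul : (B w p - a * B w p') • w = a • p' - p := by
    linear_combination (norm := module) -ha
  have hc : B w p - a * B w p' = 0 := by_contra fun hc => hpp' <|
    (Submodule.smul_mem_iff _ hc).mp (hw_smul ▸ Submodule.sub_mem _
      (Submodule.smul_mem _ a (Submodule.subset_span (by simp)))
      (Submodule.subset_span (by simp)))
  rw [hc, zero_smul, eq_comm, sub_eq_zero] at hw_smul
  exact Submodule.mem_span_singleton.mpr ⟨a, hw_smul⟩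

theorem IsSystemOfRepresentatives.image_projectionFrom [IsAlgClosed K]
    (hB : ∀ u v, B u v = B v u) (hT : IsSymmetric T) (hw : B w w = -1) {P : Finset U}
    (hP : IsSystemOfRepresentatives (K := K) P {u | B u u = 0 ∧ T u u u = 0})
    (hPw : ∀ p ∈ P, ∀ p' ∈ P, w ∉ Submodule.span K {p, p'}) :
    ∃ P' : Finset (LinearMap.ker (B w)), P'.card = P.card ∧
      IsSystemOfRepresentatives (K := K) P' {v | projectionSextic B T w v = 0} := by
  classical
  refine ⟨P.image (projectionFrom B hw), Finset.card_image_of_injOn ?_, ?_⟩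
  · intro p hp p' hp' h
    refine hP.eq_of_mem_span p hp p' hp' (mem_span_of_projectionFrom_mem_span hw
      (hPw p hp p' hp') ?_)
    rw [h]
    exact Submodule.mem_span_singleton_self _
  refine ⟨?_, ?_, ?_, ?_⟩
  · refine Finset.forall_mem_image.mpr fun p hp h => hP.ne_zero p hp ?_
    have hp0 := mem_span_of_projectionFrom_mem_span hw (p := p) (p' := 0)
      (by simpa [Set.pair_comm p 0] using hPw p hp p hp) (by simp [h])
    simpa using hp0
  · refine Finset.forall_mem_image.mpr fun p hp => ?_
    refine (projectionSextic_eq_zero_iff hB hT hw (projectionFrom B hw p).2).mpr ⟨-B w p, ?_⟩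
    simpa [coe_projectionFrom] using hP.mem p hp
  · refine Finset.forall_mem_image.mpr fun p hp => Finset.forall_mem_image.mpr fun p' hp' h => ?_
    rw [hP.eq_of_mem_span p hp p' hp' (mem_span_of_projectionFrom_mem_span hw
      (hPw p hp p' hp') h)]
  · intro v hv hv0
    obtain ⟨z, hz⟩ := (projectionSextic_eq_zero_iff hB hT hw v.2).mp hv
    have hzv := projectionFrom_add_smul hw v.2 z
    obtain ⟨p, hp, hpz⟩ := hP.exists_mem_span _ hz fun h => hv0 (Subtype.ext (by
      rw [← hzv, h, map_zero]))
    obtain ⟨a, ha⟩ := Submodule.mem_span_singleton.mp hpz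
    refine ⟨_, Finset.mem_image_of_mem _ hp, Submodule.mem_span_singleton.mpr ⟨a, ?_⟩⟩
    rw [← map_smul, ha]
    exact Subtype.ext hzv

namespace IsSystemOfRepresentatives

variable {P : Finset U}

theorem card_le_of_finrank_le_two_of_homogeneous [Infinite K] [FiniteDimensional K U]
    {f : U → K} {d : ℕ} (hP : IsSystemOfRepresentatives (K := K) P {u | f u = 0}) (hd0 : d ≠ 0)
    (hU : finrank K U ≤ 2) (hf : f ∈ polyFun K U)
    (hd : ∀ (t : K) v, f (t • v) = t ^ d * f v) : P.card ≤ d := by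
  by_cases h : ∃ v, f v ≠ 0
  · obtain ⟨v, hv⟩ := h
    exact hP.card_le_of_finrank_le_two hU hf hd (fun _ => id) hv
  · push Not at h
    rw [show {u | f u = 0} = Set.univ from Set.eq_univ_of_forall h] at hP
    exact hP.card_le_one_of_univ.trans (Nat.one_le_iff_ne_zero.mpr hd0)

variable [IsAlgClosed K] [FiniteDimensional K U]

theorem finrank_le_card_add_one {Z : Set U} (hP : IsSystemOfRepresentatives (K := K) P Z)
    {ι : Type*} [Fintype ι] {g : ι → U → K} (hg : ∀ i, g i ∈ polyFun K U) (hg0 : ∀ i, g i 0 = 0)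
    (hgZ : ∀ u, (∀ i, g i u = 0) → u ∈ Z) : finrank K U ≤ Fintype.card ι + 1 := by
  have := IsAlgClosed.instInfinite (K := K)
  obtain ⟨φ, hφ⟩ := Module.exists_dual_forall_apply_ne_zero (K := K) (fun p : P => (p : U))
    fun p => hP.ne_zero p p.2
  by_contra! hU
  obtain ⟨u, hu, hgu⟩ := exists_ne_zero_forall_eq_zero (ι := Option ι) (by simpa using hU)
    (fun i => i.elim φ g) (Option.rec (linear_mem_polyFun φ) hg) (Option.rec (map_zero φ) hg0)
  obtain ⟨p, hp, hup⟩ := hP.exists_mem_span u (hgZ u fun i => hgu (some i)) hu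
  obtain ⟨a, rfl⟩ := Submodule.mem_span_singleton.mp hup
  have hφu : φ (a • p) = 0 := hgu none
  rw [map_smul, smul_eq_mul] at hφu
  exact left_ne_zero_of_smul hu ((mul_eq_zero.mp hφu).resolve_right (hφ ⟨p, hp⟩))

theorem card_le_six_of_finrank_eq_three (hB : ∀ u v, B u v = B v u) (hT : IsSymmetric T)
    (hP : IsSystemOfRepresentatives (K := K) P {u | B u u = 0 ∧ T u u u = 0})
    (hU : finrank K U = 3) {u : U} (hu : B u u ≠ 0) : P.card ≤ 6 := by
  have := IsAlgClosed.instInfinite (K := K)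
  obtain ⟨w, hw, hPw⟩ := exists_apply_self_ne_zero_notMem_span (by omega) hu P
  obtain ⟨r, hr⟩ := IsAlgClosed.exists_pow_nat_eq (-(B w w)⁻¹) two_pos
  have hr0 : r ≠ 0 := by
    rintro rfl
    simp [hw] at hr
  have hrw : B (r • w) (r • w) = -1 := by
    simp only [map_smul, LinearMap.smul_apply, smul_eq_mul]
    rw [← mul_assoc, ← sq, hr, neg_mul, inv_mul_cancel₀ hw]
  obtain ⟨P', hcard, hP'⟩ := hP.image_projectionFrom hB hT hrw fun p hp p' hp' h =>
    hPw p hp p' hp' ((Submodule.smul_mem_iff _ hr0).mp h)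
  have hker : finrank K (LinearMap.ker (B (r • w))) ≤ 2 := by
    have hne : LinearMap.ker (B (r • w)) ≠ ⊤ := fun h => by
      have : r • w ∈ LinearMap.ker (B (r • w)) := h ▸ Submodule.mem_top
      rw [LinearMap.mem_ker, hrw] at this
      exact neg_ne_zero.mpr one_ne_zero this
    have := Submodule.finrank_lt hne
    omega
  rw [← hcard]
  refine hP'.card_le_of_finrank_le_two_of_homogeneous (by norm_num) hker ?_ fun t v => ?_
  · exact comp_linear_mem_polyFun projectionSextic_mem_polyFun (Submodule.subtype _)
  · exact projectionSextic_smul t (v : U)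

theorem card_le_six (hB : ∀ u v, B u v = B v u) (hT : IsSymmetric T)
    (hP : IsSystemOfRepresentatives (K := K) P {u | B u u = 0 ∧ T u u u = 0}) : P.card ≤ 6 := by
  have := IsAlgClosed.instInfinite (K := K)
  have hBpoly := bilinear_mem_polyFun B
  have hTpoly := trilinear_mem_polyFun T
  by_cases h : ∃ u, B u u ≠ 0
  · obtain ⟨u, hu⟩ := h
    have hU : finrank K U ≤ 3 := hP.finrank_le_card_add_one
      (g := ![fun u => B u u, fun u => T u u u]) (by simp [Fin.forall_fin_two, hBpoly, hTpoly])
      (by simp [Fin.forall_fin_two]) (by simp [Fin.forall_fin_two])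
    obtain hU | hU := hU.lt_or_eq
    · have := hP.card_le_of_finrank_le_two (Nat.lt_succ_iff.mp hU) hBpoly (d := 2)
        (fun t v => by simp only [map_smul, LinearMap.smul_apply, smul_eq_mul]; ring)
        (fun z hz => hz.1) hu
      omega
    · exact hP.card_le_six_of_finrank_eq_three hB hT hU hu
  · push Not at h
    simp only [h, true_and] at hP
    have hU : finrank K U ≤ 2 := hP.finrank_le_card_add_one (g := fun _ : Unit => fun u => T u u u)
      (fun _ => hTpoly) (by simp) (by simp)
    have := hP.card_le_of_finrank_le_two_of_homogeneous three_ne_zero hU hTpoly fun t v => by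
      simp only [map_smul, LinearMap.smul_apply, smul_eq_mul]
      ring
    omega

end IsSystemOfRepresentatives

end DegreeLe

section Separability

variable {K : Type*} [Field K] [CharZero K] {σ : Type*} {k : ℕ}

theorem exists_separable_map_eval_of_prime {g : Polynomial (MvPolynomial σ K)} (hg : Prime g)
    (hg0 : g.natDegree ≠ 0) {c : MvPolynomial σ K} (hc : c ≠ 0) :
    ∃ a, (g.map (eval a)).Separable ∧ eval a c ≠ 0 := by
  let R := MvPolynomial σ K
  let L := FractionRing R
  have hinj : Function.Injective (algebraMap R L) := IsFractionRing.injective R L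
  have hsep : (g.map (algebraMap R L)).Separable := by
    let _ : NormalizedGCDMonoid R := Classical.arbitrary _
    have := charZero_of_injective_algebraMap hinj
    exact ((hg.irreducible.isPrimitive hg0).irreducible_iff_irreducible_map_fraction_map.mp
      hg.irreducible).separable
  have hres : g.resultant (Polynomial.derivative g) ≠ 0 := by
    have := Polynomial.resultant_ne_zero _ _ hsep
    rw [Polynomial.derivative_map, Polynomial.natDegree_map_eq_of_injective hinj,
      Polynomial.natDegree_map_eq_of_injective hinj, Polynomial.resultant_map_map] at this
    exact fun h => this (by rw [h, map_zero])
  obtain ⟨u, v, -, -, huv⟩ := Polynomial.exists_mul_add_mul_eq_C_resultant g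
    (Polynomial.derivative g) le_rfl le_rfl (.inl hg0)
  obtain ⟨a, ha⟩ : ∃ a, eval a (g.resultant (Polynomial.derivative g) * c) ≠ 0 := by
    by_contra! h
    exact mul_ne_zero hres hc (MvPolynomial.funext fun a => by rw [h, map_zero])
  rw [map_mul] at ha
  refine ⟨a, ?_, right_ne_zero_of_mul ha⟩
  have bezout := congr(Polynomial.C (eval a (g.resultant (Polynomial.derivative g)))⁻¹ *
    ($huv).map (eval a))
  rw [Polynomial.map_C, ← Polynomial.C_mul, inv_mul_cancel₀ (left_ne_zero_of_mul ha),
    Polynomial.C_1, Polynomial.map_add, Polynomial.map_mul, Polynomial.map_mul,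
    ← Polynomial.derivative_map] at bezout
  exact (Polynomial.separable_def' _).mpr ⟨.C _⁻¹ * u.map (eval a), .C _⁻¹ * v.map (eval a), by
    rw [← bezout]; ring⟩

theorem exists_finset_zeros_of_prime [IsAlgClosed K] {p : MvPolynomial (Fin (k + 1)) K}
    (hp : Prime p) {d : ℕ} (hd : d ≠ 0)
    (hpd : eval (Pi.single 0 1) (homogeneousComponent d p) ≠ 0) :
    ∃ (a : Fin k → K) (s : Finset K), d ≤ s.card ∧
      ∀ t, t ∈ s ↔ eval (Fin.cons t a : Fin (k + 1) → K) p = 0 := by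
  classical
  let g := finSuccEquiv K k p
  have axis : g.map (eval 0) = (scaleHom K _ p).map (eval (Pi.single 0 1)) :=
    Polynomial.funext fun t => by
      rw [eval_scaleHom, ← eval_eq_eval_mv_eval']
      congr 2
      ext i
      cases i using Fin.cases <;> simp
  have hc : g.coeff d ≠ 0 := fun h => hpd <| by
    simpa [scaleHom_coeff, h] using congr(($axis).coeff d).symm
  have hg : Prime g := (MulEquiv.prime_iff (finSuccEquiv K k)).mpr hp
  obtain ⟨a, ha, hac⟩ := exists_separable_map_eval_of_prime hg
    ((Polynomial.le_natDegree_of_ne_zero hc).trans_lt' (by omega)).ne' hc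
  rw [← Polynomial.coeff_map] at hac
  refine ⟨a, (g.map (eval a)).roots.toFinset, ?_, fun t => ?_⟩
  · rw [Multiset.toFinset_card_of_nodup (Polynomial.nodup_roots ha),
      ← (IsAlgClosed.splits _).natDegree_eq_card_roots]
    exact Polynomial.le_natDegree_of_ne_zero hac
  · rw [Multiset.mem_toFinset, Polynomial.mem_roots ha.ne_zero, eval_eq_eval_mv_eval',
      Polynomial.IsRoot.def]

end Separability

section DegreeGe

variable {K : Type*} [Field K] {V : Type*} [AddCommGroup V] [Module K V]
  {T : V →ₗ[K] V →ₗ[K] V →ₗ[K] K} {x e₀ e₁ : V}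

theorem exists_linearEquiv_single_eq [FiniteDimensional K V] {b : V} (hb : b ≠ 0) :
    ∃ (k : ℕ) (e : (Fin (k + 1) → K) ≃ₗ[K] V), e (Pi.single 0 1) = b := by
  obtain ⟨C, hC⟩ := (K ∙ b).exists_isCompl
  have hli (c : K) (z : V) (hz : z ∈ C) (h : c • b + z = 0) : c = 0 := by
    have hcb : c • b ∈ C := by
      rw [eq_neg_of_add_eq_zero_left h]
      exact C.neg_mem hz
    have := Submodule.disjoint_def.mp hC.disjoint _
      (Submodule.smul_mem _ c (Submodule.mem_span_singleton_self b)) hcb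
    exact (smul_eq_zero.mp this).resolve_right hb
  have hspan (z : V) : ∃ c : K, z + c • b ∈ C := by
    obtain ⟨u, hu, w, hw, rfl⟩ := Submodule.mem_sup.mp
      (hC.codisjoint.eq_top ▸ Submodule.mem_top : z ∈ (K ∙ b) ⊔ C)
    obtain ⟨c, rfl⟩ := Submodule.mem_span_singleton.mp hu
    exact ⟨-c, by simpa using hw⟩
  refine ⟨_, (Basis.mkFinCons b (finBasis K C) hli hspan).equivFun.symm, ?_⟩
  simp [Basis.equivFun_symm_apply, Pi.single_apply]

namespace IsGeneralPoint

variable (hx : IsGeneralPoint T x) (he : IsFrame T x e₀ e₁)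
include hx he

theorem apply_self_smul_add_smul_add {u : V} (hu : u ∈ frameSpace T x e₀ e₁) (r c : K) :
    T x (r • e₀ + c • e₁ + u) (r • e₀ + c • e₁ + u) = r * c + T x u u := by
  obtain ⟨-, h₀, h₁⟩ := mem_frameSpace.mp hu
  have hsymm := hx.isSymmetric.swap_right x
  simp only [map_add, map_smul, LinearMap.add_apply, LinearMap.smul_apply, smul_eq_mul,
    he.left_mem.2, he.right_mem.2, hsymm u, hsymm e₁ e₀, h₀, h₁]
  linear_combination r * c * he.two_mul_apply

theorem eq_smul_chart_of_mem_tangentQuadric {u : V} (hu : u ∈ frameSpace T x e₀ e₁) {r c : K}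
    (hr : r ≠ 0) (h : r • e₀ + c • e₁ + r • u ∈ tangentQuadric T x) :
    r • e₀ + c • e₁ + r • u = r • chart T x e₀ e₁ u := by
  have hq := h.2
  rw [hx.apply_self_smul_add_smul_add he ((frameSpace T x e₀ e₁).smul_mem r hu), map_smul,
    LinearMap.map_smul₂, smul_eq_mul, smul_eq_mul, ← mul_add, mul_eq_zero] at hq
  rw [chart, eq_neg_of_add_eq_zero_left (hq.resolve_left hr)]
  module

theorem eq_zero_of_mem_lineCone {b : V} (hb : b ∈ frameSpace T x e₀ e₁) (hbb : T x b b ≠ 0)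
    {c s : K} (h : c • e₁ + s • b ∈ lineCone T x) : c • e₁ + s • b = 0 := by
  have hq := hx.apply_self_smul_add_smul_add he ((frameSpace T x e₀ e₁).smul_mem s hb) 0 c
  rw [zero_smul, zero_add, h.1.2] at hq
  have hs : s = 0 := by simpa [hbb] using hq
  have hc : c = 0 := by simpa [hs, he.cubic_ne_zero] using h.2
  simp [hs, hc]

theorem eq_of_chart_mem_span {u v : V} (hu : u ∈ frameSpace T x e₀ e₁)
    (hv : v ∈ frameSpace T x e₀ e₁) (h : chart T x e₀ e₁ u ∈ K ∙ chart T x e₀ e₁ v) : u = v := by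
  obtain ⟨c, hc⟩ := Submodule.mem_span_singleton.mp h
  have hcu := congr(2 * T x e₁ $hc)
  rw [map_smul, smul_eq_mul, mul_left_comm, hx.two_mul_apply_right_chart he hu,
    hx.two_mul_apply_right_chart he hv, mul_one] at hcu
  have hquad := congr(2 * T x e₀ $hc)
  rw [hcu, one_smul, two_mul_apply_left_chart he hu, two_mul_apply_left_chart he hv] at hquad
  rw [hcu, one_smul, chart, chart, neg_inj.mp hquad] at hc
  exact (add_left_cancel hc).symm

theorem isSystemOfRepresentatives_image_chart [DecidableEq V] {k : ℕ}
    (e : (Fin (k + 1) → K) ≃ₗ[K] frameSpace T x e₀ e₁)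
    (he0 : T x (e (Pi.single 0 1)) (e (Pi.single 0 1)) ≠ 0) {a : Fin k → K} {s : Finset K}
    (hs : ∀ t, t ∈ s ↔ chart T x e₀ e₁ (e (Fin.cons t a)) ∈ lineCone T x) :
    IsSystemOfRepresentatives (K := K) (s.image fun t => chart T x e₀ e₁ (e (Fin.cons t a)))
      {u | u ∈ Submodule.span K {e₀ + (e (Fin.cons 0 a) : V), (e (Pi.single 0 1) : V), e₁} ∧
        u ∈ lineCone T x} := by
  have hcons (t : K) : (e (Fin.cons t a) : V) = e (Fin.cons 0 a) + t • e (Pi.single 0 1) := by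
    rw [← Submodule.coe_smul, ← map_smul, ← Submodule.coe_add, ← map_add]
    congr 2
    ext i
    cases i using Fin.cases <;> simp
  refine ⟨?_, ?_, ?_, fun u ⟨hu, hux⟩ hu0 => ?_⟩ <;> try simp only [Finset.forall_mem_image]
  · intro t _ h0
    simpa [h0] using hx.two_mul_apply_right_chart he (e (Fin.cons t a)).2
  · refine fun t ht => ⟨Submodule.mem_span_triple.mpr
      ⟨1, t, -T x (e (Fin.cons t a)) (e (Fin.cons t a)), ?_⟩, (hs t).mp ht⟩
    rw [chart, hcons t]
    module
  · intro t _ t' _ h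
    rw [hx.eq_of_chart_mem_span he (e _).2 (e _).2 h]
  · obtain ⟨r, s', c, rfl⟩ := Submodule.mem_span_triple.mp hu
    obtain rfl | hr := eq_or_ne r 0
    · have := hx.eq_zero_of_mem_lineCone he (e _).2 he0 (c := c) (s := s')
      simp only [zero_smul, zero_add, add_comm _ (c • e₁)] at hux hu0
      exact absurd (this hux) hu0
    · have split : r • (e₀ + (e (Fin.cons 0 a) : V)) + s' • (e (Pi.single 0 1) : V) + c • e₁ =
          r • e₀ + c • e₁ + r • (e (Fin.cons (s' / r) a) : V) := by
        rw [hcons (s' / r), smul_add r _ (_ • _), smul_smul, mul_div_cancel₀ _ hr]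
        module
      rw [split] at hux ⊢
      have hchart := hx.eq_smul_chart_of_mem_tangentQuadric he (e _).2 hr hux.1
      rw [hchart] at hux ⊢
      refine ⟨_, Finset.mem_image_of_mem _ ((hs _).mpr ?_),
        Submodule.smul_mem _ r (Submodule.mem_span_singleton_self _)⟩
      simpa [smul_smul, inv_mul_cancel₀ hr] using smul_mem_lineCone hux r⁻¹

omit he in
theorem exists_six_le_card [CharZero K] [IsAlgClosed K] [FiniteDimensional K V]
    (hV : 6 < finrank K V) : ∃ (W : Submodule K V) (P : Finset V), 6 ≤ P.card ∧
      IsSystemOfRepresentatives (K := K) P {u | u ∈ W ∧ u ∈ lineCone T x} := by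
  classical
  obtain ⟨v, hv, hvx⟩ := hx.exists_mem_lineCone_notMem_span hV
  obtain ⟨e₀, e₁, he, -⟩ := hx.exists_isFrame hV hv.1 hvx hvx
  let f := (finBasis K (frameSpace T x e₀ e₁)).equivFun.symm
  obtain ⟨Q, hQp, -, hQ⟩ := hx.exists_prime_frameSpace he hV f
  obtain ⟨y, hy⟩ : ∃ y, eval y Q ≠ 0 := by
    by_contra! h
    exact hQp.ne_zero (MvPolynomial.funext fun y => by rw [h, map_zero])
  rw [hQ] at hy
  obtain ⟨k, e, he0⟩ := exists_linearEquiv_single_eq (K := K) (b := f y) fun h =>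
    hy (by rw [h, Submodule.coe_zero, map_zero])
  obtain ⟨Q, p, hQ, -, hp, hpe, -, h6⟩ := hx.exists_prime_sextic he hV e
  rw [← he0] at hy
  obtain ⟨a, s, hs6, hs⟩ := exists_finset_zeros_of_prime hp (d := 6) (by norm_num) <| by
    simp [h6, hQ, he.cubic_ne_zero, hy]
  refine ⟨_, _, ?_, hx.isSystemOfRepresentatives_image_chart he e hy (a := a) (s := s) fun t => ?_⟩
  · rwa [Finset.card_image_of_injective]
    intro t t' (h : chart T x e₀ e₁ (e (Fin.cons t a)) = chart T x e₀ e₁ (e (Fin.cons t' a)))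
    have := e.injective (Subtype.ext (hx.eq_of_chart_mem_span he (e (Fin.cons t a)).2
      (e (Fin.cons t' a)).2 (by rw [h]; exact Submodule.mem_span_singleton_self _)))
    simpa using congr_fun this 0
  · rw [hs, hpe]
    exact ⟨fun h => ⟨hx.chart_mem_tangentQuadric he (e _).2, h⟩, fun h => h.2⟩

end IsGeneralPoint

end DegreeGe

section ProjectiveSets

variable {N : ℕ}

theorem projClosed_empty : ProjClosed (∅ : Set (Pn N)) :=
  ⟨{1}, fun f hf => ⟨0, by rw [Set.mem_singleton_iff.mp hf]; exact isHomogeneous_one _ _⟩,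
    by ext x; simp [projZeros]⟩

theorem projClosed_univ : ProjClosed (Set.univ : Set (Pn N)) :=
  ⟨∅, by simp, by simp [projZeros]⟩

theorem projClosed_inter {V W : Set (Pn N)} (hV : ProjClosed V) (hW : ProjClosed W) :
    ProjClosed (V ∩ W) := by
  obtain ⟨S, hS, rfl⟩ := hV
  obtain ⟨S', hS', rfl⟩ := hW
  refine ⟨S ∪ S', fun f hf => hf.elim (hS f) (hS' f), ?_⟩
  ext x
  simp [projZeros, or_imp, forall_and]

theorem projClosed_union {V W : Set (Pn N)} (hV : ProjClosed V) (hW : ProjClosed W) :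
    ProjClosed (V ∪ W) := by
  obtain ⟨S, hS, rfl⟩ := hV
  obtain ⟨S', hS', rfl⟩ := hW
  refine ⟨Set.image2 (· * ·) S S', ?_, ?_⟩
  · rintro _ ⟨f, hf, g, hg, rfl⟩
    obtain ⟨d, hd⟩ := hS f hf
    obtain ⟨e, he⟩ := hS' g hg
    exact ⟨d + e, hd.mul he⟩
  · ext x
    simp only [projZeros, Set.mem_union, Set.mem_ofPred_eq, Set.forall_mem_image2, map_mul,
      mul_eq_zero]
    refine ⟨fun h f hf g hg => h.imp (· f hf) (· g hg), fun h => ?_⟩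
    by_contra! hcon
    obtain ⟨⟨f, hf, hfx⟩, g, hg, hgx⟩ := hcon
    exact (h f hf g hg).elim hfx hgx

theorem projClosed_hyp {d : ℕ} {f : MvPolynomial (Fin (N + 1)) KK} (hf : f.IsHomogeneous d) :
    ProjClosed (hyp f) :=
  ⟨{f}, fun g hg => ⟨d, by rwa [Set.mem_singleton_iff.mp hg]⟩, by simp [projZeros, hyp]⟩

/-- The restriction of polynomials to the line `t ↦ t • x.rep` over a projective point `x`. Its
kernel is the homogeneous prime ideal of `x`. -/
def lineRestriction (x : Pn N) : MvPolynomial (Fin (N + 1)) KK →+* Polynomial KK :=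
  (Polynomial.mapRingHom (eval x.rep)).comp (scaleHom KK (Fin (N + 1))).toRingHom

theorem lineRestriction_eq_zero_iff {x : Pn N} {f : MvPolynomial (Fin (N + 1)) KK} :
    lineRestriction x f = 0 ↔ ∀ d, eval x.rep (homogeneousComponent d f) = 0 := by
  simp [Polynomial.ext_iff, lineRestriction, scaleHom_coeff]

theorem lineRestriction_eq_zero_iff_of_isHomogeneous {d : ℕ} {x : Pn N}
    {f : MvPolynomial (Fin (N + 1)) KK} (hf : f.IsHomogeneous d) :
    lineRestriction x f = 0 ↔ eval x.rep f = 0 := by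
  simp [lineRestriction, scaleHom_of_isHomogeneous hf]

theorem projClosed_setOf_lineRestriction_eq_zero (f : MvPolynomial (Fin (N + 1)) KK) :
    ProjClosed {x | lineRestriction x f = 0} := by
  refine ⟨Set.range fun d => homogeneousComponent d f, ?_, ?_⟩
  · rintro _ ⟨d, rfl⟩
    exact ⟨d, homogeneousComponent_isHomogeneous d f⟩
  · simp [projZeros, lineRestriction_eq_zero_iff]

/-- The homogeneous vanishing ideal of a set of projective points. -/
def projIdeal (V : Set (Pn N)) : Ideal (MvPolynomial (Fin (N + 1)) KK) :=
  ⨅ x ∈ V, RingHom.ker (lineRestriction x)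

theorem mem_projIdeal {V : Set (Pn N)} {f : MvPolynomial (Fin (N + 1)) KK} :
    f ∈ projIdeal V ↔ ∀ x ∈ V, lineRestriction x f = 0 := by
  simp [projIdeal, RingHom.mem_ker]

theorem subset_of_projIdeal_le {V W : Set (Pn N)} (hW : ProjClosed W)
    (h : projIdeal W ≤ projIdeal V) : V ⊆ W := by
  obtain ⟨S, hS, rfl⟩ := hW
  intro x hx f hf
  obtain ⟨d, hd⟩ := hS f hf
  rw [← lineRestriction_eq_zero_iff_of_isHomogeneous hd]
  refine mem_projIdeal.mp (h (mem_projIdeal.mpr fun y hy => ?_)) x hx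
  exact (lineRestriction_eq_zero_iff_of_isHomogeneous hd).mpr (hy f hf)

theorem projIdeal_lt_of_ssubset {V W : Set (Pn N)} (hV : ProjClosed V) (h : V ⊂ W) :
    projIdeal W < projIdeal V :=
  ⟨fun _ hf => mem_projIdeal.mpr fun x hx => mem_projIdeal.mp hf x (h.1 hx),
    fun hle => h.2 (subset_of_projIdeal_le hV hle)⟩

theorem isPrime_projIdeal {V : Set (Pn N)} (hV : ProjIrred V) : (projIdeal V).IsPrime := by
  refine ⟨fun h => ?_, fun {f g} hfg => ?_⟩
  · obtain ⟨x, hx⟩ := hV.1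
    exact one_ne_zero ((map_one (lineRestriction x)).symm.trans
      (mem_projIdeal.mp (h ▸ Submodule.mem_top) x hx))
  · simp only [mem_projIdeal] at hfg ⊢
    refine hV.2 _ _ (projClosed_setOf_lineRestriction_eq_zero f)
      (projClosed_setOf_lineRestriction_eq_zero g) fun x hx => ?_
    simpa [Set.mem_union] using! mul_eq_zero.mp ((map_mul _ f g).symm.trans (hfg x hx))

theorem projIdeal_lt_ker_constantCoeff {V : Set (Pn N)} (hV : V.Nonempty) :
    projIdeal V < RingHom.ker (constantCoeff (σ := Fin (N + 1)) (R := KK)) := by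
  obtain ⟨x, hx⟩ := hV
  refine lt_of_le_not_ge (fun f hf => ?_) fun hle => x.rep_nonzero (funext fun i => ?_)
  · have := lineRestriction_eq_zero_iff.mp (mem_projIdeal.mp hf x hx) 0
    rwa [homogeneousComponent_zero, eval_C] at this
  · have := mem_projIdeal.mp (hle (x := X i) (by simp [RingHom.mem_ker])) x hx
    rwa [lineRestriction_eq_zero_iff_of_isHomogeneous (isHomogeneous_X KK i), eval_X] at this

theorem krullDim_lt_of_forall_exists_lt {α β : Type*} [Preorder α] [Preorder β] {f : α → β}
    (hf : StrictMono f) (h : ∀ a, ∃ b, f a < b) {j : ℕ}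
    (hβ : Order.krullDim β < ((j + 1 : ℕ) : WithBot ℕ∞)) : Order.krullDim α < j := by
  rw [Order.krullDim_lt_coe_iff] at hβ ⊢
  intro p
  obtain ⟨b, hb⟩ := h p.last
  have hlength : p.length + 1 < j + 1 := hβ ((p.map f hf).snoc b hb)
  lia

theorem projDim_lt_of_forall_exists_ssubset {V W : Set (Pn N)}
    (h : ∀ Z, ProjVariety Z → Z ⊆ V → ∃ Y, ProjVariety Y ∧ Y ⊆ W ∧ Z ⊂ Y) {j : ℕ}
    (hW : projDim W < ((j + 1 : ℕ) : WithBot ℕ∞)) : projDim V < j := by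
  have hVW (Z : {Z // ProjVariety Z ∧ Z ⊆ V}) : Z.1 ⊆ W :=
    let ⟨_, _, hYW, hZY⟩ := h Z Z.2.1 Z.2.2
    hZY.1.trans hYW
  refine krullDim_lt_of_forall_exists_lt
    (α := {Z // ProjVariety Z ∧ Z ⊆ V}) (β := {Z // ProjVariety Z ∧ Z ⊆ W})
    (f := fun Z => ⟨Z, Z.2.1, hVW Z⟩) (fun _ _ hZ => hZ)
    (fun Z => ?_) hW
  obtain ⟨Y, hY, hYW, hZY⟩ := h Z Z.2.1 Z.2.2
  exact ⟨⟨Y, hY, hYW⟩, hZY⟩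

theorem projDim_lt_of_ssubset {V W : Set (Pn N)} (h : V ⊂ W) (hW : ProjVariety W) {j : ℕ}
    (hdim : projDim W < ((j + 1 : ℕ) : WithBot ℕ∞)) : projDim V < j :=
  projDim_lt_of_forall_exists_ssubset
    (fun _ _ hZ => ⟨W, hW, subset_rfl, hZ.trans_ssubset h⟩) hdim

theorem projDim_univ_lt : projDim (Set.univ : Set (Pn N)) < ((N + 1 : ℕ) : WithBot ℕ∞) := by
  have hprime : (RingHom.ker (constantCoeff (σ := Fin (N + 1)) (R := KK))).IsPrime :=
    RingHom.ker_isPrime _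
  rw [projDim, ← Order.krullDim_orderDual]
  refine krullDim_lt_of_forall_exists_lt (α := {W : Set (Pn N) // ProjVariety W ∧ W ⊆ Set.univ}ᵒᵈ)
    (β := PrimeSpectrum (MvPolynomial (Fin (N + 1)) KK))
    (f := fun W => ⟨projIdeal (OrderDual.ofDual W).1, isPrime_projIdeal W.2.1.2⟩)
    (fun _ W hWV => projIdeal_lt_of_ssubset W.2.1.1 hWV)
    (fun W => ⟨⟨_, hprime⟩, projIdeal_lt_ker_constantCoeff W.2.1.2.1⟩) ?_
  rw [← ringKrullDim, MvPolynomial.ringKrullDim_of_isNoetherianRing,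
    ringKrullDim_eq_zero_of_field, Nat.card_fin, zero_add]
  exact_mod_cast Nat.lt_succ_self (N + 1)

theorem exists_finite_sUnion_projVariety {V : Set (Pn N)} (hV : ProjClosed V) :
    ∃ s : Set (Set (Pn N)), s.Finite ∧ (∀ W ∈ s, ProjVariety W) ∧ V = ⋃₀ s := by
  induction hI : projIdeal V using WellFoundedGT.induction generalizing V with
  | _ I ih =>
    subst hI
    obtain rfl | hne := V.eq_empty_or_nonempty
    · exact ⟨∅, Set.finite_empty, by simp, by simp⟩
    by_cases hirr : ProjIrred V
    · exact ⟨{V}, Set.finite_singleton V, by simp [ProjVariety, hV, hirr], by simp⟩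
    simp only [ProjIrred, hne, true_and] at hirr
    push Not at hirr
    obtain ⟨C, D, hC, hD, hcover, hVC, hVD⟩ := hirr
    have decompose (E : Set (Pn N)) (hE : ProjClosed E) (hVE : ¬V ⊆ E) :=
      ih _ (projIdeal_lt_of_ssubset (projClosed_inter hV hE)
        ⟨Set.inter_subset_left, fun h => hVE fun x hx => (h hx).2⟩) (projClosed_inter hV hE) rfl
    obtain ⟨s, hs, hsV, hsC⟩ := decompose C hC hVC
    obtain ⟨t, ht, htV, htD⟩ := decompose D hD hVD
    refine ⟨s ∪ t, hs.union ht, fun W hW => hW.elim (hsV W) (htV W), ?_⟩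
    rw [Set.sUnion_union, ← hsC, ← htD, ← Set.inter_union_distrib_left,
      Set.inter_eq_left.mpr hcover]

theorem projClosed_sUnion {s : Set (Set (Pn N))} (hs : s.Finite) (hc : ∀ W ∈ s, ProjClosed W) :
    ProjClosed (⋃₀ s) := by
  induction s, hs using Set.Finite.induction_on with
  | empty => simpa using projClosed_empty
  | insert _ _ ih =>
    rw [Set.sUnion_insert]
    exact projClosed_union (hc _ (Set.mem_insert _ _))
      (ih fun W hW => hc W (Set.mem_insert_of_mem _ hW))

theorem exists_subset_of_subset_sUnion {V : Set (Pn N)} (hV : ProjIrred V)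
    {s : Set (Set (Pn N))} (hs : s.Finite) (hc : ∀ W ∈ s, ProjClosed W) (h : V ⊆ ⋃₀ s) :
    ∃ W ∈ s, V ⊆ W := by
  induction s, hs using Set.Finite.induction_on with
  | empty =>
    obtain ⟨x, hx⟩ := hV.1
    simpa using h hx
  | @insert W s _ hs ih =>
    have hc' : ∀ Z ∈ s, ProjClosed Z := fun Z hZ => hc Z (Set.mem_insert_of_mem _ hZ)
    rw [Set.sUnion_insert] at h
    obtain hW | hW := hV.2 W _ (hc W (Set.mem_insert _ _)) (projClosed_sUnion hs hc') h
    · exact ⟨W, Set.mem_insert _ _, hW⟩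
    · obtain ⟨Z, hZ, hVZ⟩ := ih hc' hW
      exact ⟨Z, Set.mem_insert_of_mem _ hZ, hVZ⟩

theorem projClosed_setOf_eq_zero {f : (Fin (N + 1) → KK) → KK} (hf : f ∈ polyFun KK _) {d : ℕ}
    (hd : ∀ t y, f (t • y) = t ^ d * f y) : ProjClosed {x : Pn N | f x.rep = 0} := by
  obtain ⟨p, hp, hpe⟩ := exists_isHomogeneous_eval_eq hf hd
  simpa only [hyp, hpe] using projClosed_hyp hp

theorem exists_dual_projDim_inter_lt {V : Set (Pn N)} (hV : ProjClosed V) :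
    ∃ ℓ : Dual KK (Fin (N + 1) → KK), ∀ j : ℕ, projDim V < ((j + 1 : ℕ) : WithBot ℕ∞) →
      projDim (V ∩ {x | ℓ x.rep = 0}) < j := by
  obtain ⟨s, hs, hsV, rfl⟩ := exists_finite_sUnion_projVariety hV
  have : Finite s := hs
  choose pt hpt using fun W : s => (hsV W W.2).2.1
  obtain ⟨ℓ, hℓ⟩ := Module.exists_dual_forall_apply_ne_zero (K := KK)
    (fun W : s => (pt W).rep) fun W => (pt W).rep_nonzero
  refine ⟨ℓ, fun j => projDim_lt_of_forall_exists_ssubset fun Z hZ hZV => ?_⟩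
  obtain ⟨W, hW, hZW⟩ := exists_subset_of_subset_sUnion hZ.2 hs (fun W hW => (hsV W hW).1)
    (hZV.trans Set.inter_subset_left)
  exact ⟨W, hsV W hW, Set.subset_sUnion_of_mem hW, hZW,
    fun h => hℓ ⟨W, hW⟩ (hZV (h (hpt ⟨W, hW⟩))).2⟩

theorem exists_dual_forall_exists_ne_zero {j : ℕ} {V : Set (Pn N)} (hV : ProjClosed V)
    (h : projDim V < j) :
    ∃ ℓ : Fin j → Dual KK (Fin (N + 1) → KK), ∀ y ∈ V, ∃ i, ℓ i y.rep ≠ 0 := by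
  induction j generalizing V with
  | zero =>
    refine ⟨Fin.elim0, fun y hy => ?_⟩
    obtain ⟨s, -, hs, rfl⟩ := exists_finite_sUnion_projVariety hV
    obtain ⟨W, hW, -⟩ := hy
    have : Nonempty {Z // ProjVariety Z ∧ Z ⊆ ⋃₀ s} :=
      ⟨W, hs W hW, Set.subset_sUnion_of_mem hW⟩
    exact absurd h Order.krullDim_nonneg.not_gt
  | succ j ih =>
    obtain ⟨ℓ, hℓ⟩ := exists_dual_projDim_inter_lt hV
    have closed : ProjClosed {y : Pn N | ℓ y.rep = 0} :=
      projClosed_setOf_eq_zero (linear_mem_polyFun ℓ) (d := 1) (by simp)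
    obtain ⟨m, hm⟩ := ih (projClosed_inter hV closed) (hℓ j h)
    refine ⟨Fin.cons ℓ m, fun y hy => ?_⟩
    by_cases hy0 : ℓ y.rep = 0
    · obtain ⟨i, hi⟩ := hm y ⟨hy, hy0⟩
      exact ⟨i.succ, by simpa using hi⟩
    · exact ⟨0, by simpa using hy0⟩

end ProjectiveSets

section Projectivize

variable {N : ℕ} {A B : Set (Fin (N + 1) → KK)}

/-- The points of projective space represented by the vectors of `A`; it is meant for sets `A` which
are unions of lines through the origin, so that the choice of representatives does not matter. -/
def projectivize (A : Set (Fin (N + 1) → KK)) : Set (Pn N) :=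
  {y | y.rep ∈ A}

theorem mk_mem_projectivize (hA : ∀ v ∈ A, ∀ t : KK, t • v ∈ A) {v : Fin (N + 1) → KK}
    (hv : v ≠ 0) : Projectivization.mk KK v hv ∈ projectivize A ↔ v ∈ A := by
  obtain ⟨a, ha⟩ := Projectivization.exists_smul_eq_mk_rep KK v hv
  rw [projectivize, Set.mem_ofPred_eq, ← ha, Units.smul_def]
  refine ⟨fun h => ?_, fun h => hA v h a⟩
  simpa using hA _ h ((a⁻¹ : KKˣ) : KK)

theorem projectivize_ssubset (hA : ∀ v ∈ A, ∀ t : KK, t • v ∈ A)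
    (hB : ∀ v ∈ B, ∀ t : KK, t • v ∈ B) (h : A ⊆ B) {v : Fin (N + 1) → KK} (hv : v ≠ 0)
    (hvB : v ∈ B) (hvA : v ∉ A) : projectivize A ⊂ projectivize B :=
  ⟨fun _ hy => h hy, fun hBA =>
    hvA ((mk_mem_projectivize hA hv).mp (hBA ((mk_mem_projectivize hB hv).mpr hvB)))⟩

theorem eval_eq_zero_of_projectivize_subset_hyp {d : ℕ} {f : MvPolynomial (Fin (N + 1)) KK}
    (hA : ∀ v ∈ A, ∀ t : KK, t • v ∈ A) (hf : f.IsHomogeneous d) (hne : (projectivize A).Nonempty)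
    (h : projectivize A ⊆ hyp f) {v : Fin (N + 1) → KK} (hv : v ∈ A) : eval v f = 0 := by
  obtain ⟨y, hy⟩ := hne
  rcases eq_or_ne v 0 with rfl | hv0
  · have hy0 : eval y.rep f = 0 := h hy
    simpa [hy0] using eval_smul_of_isHomogeneous hf 0 y.rep
  · obtain ⟨a, ha⟩ := Projectivization.exists_smul_eq_mk_rep KK v hv0
    have hmk : eval (Projectivization.mk KK v hv0).rep f = 0 :=
      h ((mk_mem_projectivize hA hv0).mpr hv)
    rw [← ha, Units.smul_def, eval_smul_of_isHomogeneous hf] at hmk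
    exact (mul_eq_zero.mp hmk).resolve_left (pow_ne_zero _ a.ne_zero)

theorem projIrred_projectivize (hA : PolyIrreducible KK A) (hsmul : ∀ v ∈ A, ∀ t : KK, t • v ∈ A)
    (hne : (projectivize A).Nonempty) : ProjIrred (projectivize A) := by
  refine ⟨hne, ?_⟩
  rintro _ _ ⟨S, hS, rfl⟩ ⟨S', hS', rfl⟩ h
  by_contra hcon
  simp only [not_or, Set.not_subset, projZeros, Set.mem_ofPred_eq, not_forall] at hcon
  obtain ⟨⟨y, hy, f, hf, hfy⟩, z, hz, g, hg, hgz⟩ := hcon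
  obtain ⟨d, hd⟩ := hS f hf
  obtain ⟨e, he⟩ := hS' g hg
  obtain ⟨v, hv, hfv, hgv⟩ := hA _ (eval_mem_polyFun f) _ (eval_mem_polyFun g) ⟨_, hy, hfy⟩
    ⟨_, hz, hgz⟩
  have hfg : projectivize A ⊆ hyp (f * g) := fun w hw => by
    rw [hyp, Set.mem_ofPred_eq, map_mul, mul_eq_zero]
    exact (h hw).imp (· f hf) (· g hg)
  have := eval_eq_zero_of_projectivize_subset_hyp hsmul (hd.mul he) hne hfg hv
  rw [map_mul] at this
  exact mul_ne_zero hfv hgv this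

theorem eq_of_rep_mem_span {y z : Pn N} (h : y.rep ∈ KK ∙ z.rep) : y = z := by
  obtain ⟨a, ha⟩ := Submodule.mem_span_singleton.mp h
  rw [← y.mk_rep, ← z.mk_rep, Projectivization.mk_eq_mk_iff']
  exact ⟨a, ha⟩

theorem exists_isSystemOfRepresentatives (hA : ∀ v ∈ A, ∀ t : KK, t • v ∈ A)
    (hfin : (projectivize A).Finite) :
    ∃ P, IsSystemOfRepresentatives (K := KK) P A ∧ P.card = (projectivize A).ncard := by
  classical
  have rep_injective : Function.Injective (Projectivization.rep : Pn N → _) := fun y z h =>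
    eq_of_rep_mem_span (by rw [h]; exact Submodule.mem_span_singleton_self _)
  refine ⟨hfin.toFinset.image Projectivization.rep, ⟨?_, ?_, ?_, fun v hv hv0 => ?_⟩, ?_⟩
  · simpa using fun y _ => y.rep_nonzero
  · simp [projectivize]
  · simpa using fun y _ z _ h => congrArg Projectivization.rep (eq_of_rep_mem_span h)
  · refine ⟨_, Finset.mem_image_of_mem _ (hfin.mem_toFinset.mpr
      ((mk_mem_projectivize hA hv0).mpr hv)), ?_⟩
    obtain ⟨a, ha⟩ := Projectivization.exists_smul_eq_mk_rep KK v hv0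
    exact Submodule.mem_span_singleton.mpr ⟨((a⁻¹ : KKˣ) : KK), by simp [← ha, Units.smul_def]⟩
  · rw [Finset.card_image_of_injective _ rep_injective, Set.ncard_eq_toFinset_card _ hfin]

theorem IsSystemOfRepresentatives.finite_projectivize_and_ncard_eq
    {P : Finset (Fin (N + 1) → KK)} (hP : IsSystemOfRepresentatives (K := KK) P A)
    (hA : ∀ v ∈ A, ∀ t : KK, t • v ∈ A) :
    (projectivize A).Finite ∧ (projectivize A).ncard = P.card := by
  let point (p : P) : Pn N := Projectivization.mk KK p.1 (hP.ne_zero p.1 p.2)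
  have injective : Function.Injective point := fun p p' h => by
    obtain ⟨a, ha⟩ := (Projectivization.mk_eq_mk_iff' KK _ _ _ _).mp h
    exact Subtype.ext (hP.eq_of_mem_span _ p.2 _ p'.2 (Submodule.mem_span_singleton.mpr ⟨a, ha⟩))
  have range_eq : projectivize A = Set.range point := by
    ext y
    refine ⟨fun hy => ?_, ?_⟩
    · obtain ⟨p, hp, hyp⟩ := hP.exists_mem_span y.rep hy y.rep_nonzero
      obtain ⟨a, ha⟩ := Submodule.mem_span_singleton.mp hyp
      refine ⟨⟨p, hp⟩, ?_⟩
      rw [← y.mk_rep]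
      exact ((Projectivization.mk_eq_mk_iff' KK _ _ _ _).mpr ⟨a, ha⟩).symm
    · rintro ⟨p, rfl⟩
      exact (mk_mem_projectivize hA _).mpr (hP.mem _ p.2)
  rw [range_eq]
  refine ⟨Set.finite_range _, ?_⟩
  rw [← Set.image_univ, Set.ncard_image_of_injective _ injective, Set.ncard_univ,
    Nat.card_eq_fintype_card, Fintype.card_coe]

theorem projDeg_projectivize {d : ℕ} (hA : ∀ v ∈ A, ∀ t : KK, t • v ∈ A)
    (hle : ∀ (W : Submodule KK (Fin (N + 1) → KK)) (P : Finset (Fin (N + 1) → KK)),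
      IsSystemOfRepresentatives (K := KK) P {v | v ∈ W ∧ v ∈ A} → P.card ≤ d)
    (hge : ∃ (W : Submodule KK (Fin (N + 1) → KK)) (P : Finset (Fin (N + 1) → KK)),
      d ≤ P.card ∧ IsSystemOfRepresentatives (K := KK) P {v | v ∈ W ∧ v ∈ A}) :
    projDeg (projectivize A) = d := by
  have hsmul (W : Submodule KK (Fin (N + 1) → KK)) :
      ∀ v ∈ {v | v ∈ W ∧ v ∈ A}, ∀ t : KK, t • v ∈ {v | v ∈ W ∧ v ∈ A} :=
    fun v hv t => ⟨W.smul_mem t hv.1, hA v hv.2 t⟩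
  have section_eq (W : Submodule KK (Fin (N + 1) → KK)) :
      projectivize A ∩ planeSet W = projectivize {v | v ∈ W ∧ v ∈ A} :=
    Set.inter_comm _ _
  obtain ⟨W, P, hd, hP⟩ := hge
  obtain ⟨hfin, hcard⟩ := hP.finite_projectivize_and_ncard_eq (hsmul W)
  simp only [projDeg, section_eq]
  refine IsGreatest.csSup_eq ⟨⟨W, hfin, hcard.trans (le_antisymm (hle W P hP) hd)⟩, ?_⟩
  rintro _ ⟨W, hfin, rfl⟩
  obtain ⟨P, hP, hcard⟩ := exists_isSystemOfRepresentatives (hsmul W) hfin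
  exact hcard ▸ hle W P hP

end Projectivize

section Polarization

variable {R ι : Type*} [CommRing R]

theorem pderiv_pderiv_comm (i j : ι) (p : MvPolynomial ι R) :
    pderiv i (pderiv j p) = pderiv j (pderiv i p) := by
  classical
  have : ⁅pderiv (R := R) i, pderiv (R := R) j⁆ = 0 := derivation_ext fun l => by
    simp [Derivation.commutator_apply, pderiv_X, Pi.single_apply, apply_ite]
  simpa [Derivation.commutator_apply, sub_eq_zero] using congr($this p)

variable [Fintype ι]

/-- The derivative of polynomials in the direction of a vector. -/
def dirDeriv : (ι → R) →ₗ[R] MvPolynomial ι R →ₗ[R] MvPolynomial ι R :=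
  ∑ i, (LinearMap.proj i).smulRight (pderiv i).toLinearMap

theorem dirDeriv_apply (u : ι → R) (p : MvPolynomial ι R) :
    dirDeriv u p = ∑ i, u i • pderiv i p := by
  simp [dirDeriv]

theorem dirDeriv_comm (u v : ι → R) (p : MvPolynomial ι R) :
    dirDeriv u (dirDeriv v p) = dirDeriv v (dirDeriv u p) := by
  simp only [dirDeriv_apply, map_sum, Derivation.map_smul]
  rw [Finset.sum_comm]
  exact Finset.sum_congr rfl fun i _ => Finset.sum_congr rfl fun j _ => by
    rw [smul_comm, pderiv_pderiv_comm]

theorem isHomogeneous_dirDeriv {p : MvPolynomial ι R} {d : ℕ} (hp : p.IsHomogeneous d)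
    (u : ι → R) : (dirDeriv u p).IsHomogeneous (d - 1) := by
  rw [dirDeriv_apply]
  exact (homogeneousSubmodule ι R (d - 1)).sum_mem fun i _ => Submodule.smul_mem _ _ hp.pderiv

theorem eval_dirDeriv_self {p : MvPolynomial ι R} {d : ℕ} (hp : p.IsHomogeneous d) (y : ι → R) :
    eval y (dirDeriv y p) = d * eval y p := by
  simpa [dirDeriv_apply, smul_eval] using congr(eval y $(hp.sum_X_mul_pderiv))

variable {K : Type*} [Field K]

/-- The trilinear form with `T v v v = F v`, for a cubic form `F`. -/
def polarization (F : MvPolynomial ι K) : (ι → K) →ₗ[K] (ι → K) →ₗ[K] (ι → K) →ₗ[K] K where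
  toFun u := (dirDeriv.compl₂ (dirDeriv.flip F)).compr₂
    ((6⁻¹ : K) • (aeval (0 : ι → K)).toLinearMap ∘ₗ dirDeriv u)
  map_add' u v := by ext; simp [mul_add]
  map_smul' t u := by ext; simp [mul_left_comm]

variable {F : MvPolynomial ι K}

theorem polarization_apply (u v w : ι → K) :
    polarization F u v w = 6⁻¹ * eval 0 (dirDeriv u (dirDeriv v (dirDeriv w F))) := by
  simp [polarization, aeval_eq_eval]

theorem isSymmetric_polarization : IsSymmetric (polarization F) where
  swap_left u v w := by simp only [polarization_apply, dirDeriv_comm u v]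
  swap_right u v w := by simp only [polarization_apply, dirDeriv_comm v w]

variable [CharZero K]

theorem eval_dirDeriv_eq_polarization (hF : F.IsHomogeneous 3) (y v : ι → K) :
    eval y (dirDeriv v F) = 3 * polarization F y y v := by
  have h₁ := isHomogeneous_dirDeriv hF v
  have h₂ := isHomogeneous_dirDeriv h₁ y
  have h₃ := isHomogeneous_dirDeriv h₂ y
  have constant : eval 0 (dirDeriv y (dirDeriv y (dirDeriv v F))) =
      eval y (dirDeriv y (dirDeriv y (dirDeriv v F))) := by
    simpa using eval_smul_of_isHomogeneous h₃ 0 y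
  rw [polarization_apply, constant, eval_dirDeriv_self h₂, eval_dirDeriv_self h₁]
  push_cast
  ring

theorem eval_eq_polarization (hF : F.IsHomogeneous 3) (y : ι → K) :
    eval y F = polarization F y y y := by
  refine mul_left_cancel₀ (three_ne_zero (α := K)) ?_
  rw [← eval_dirDeriv_eq_polarization hF, eval_dirDeriv_self hF]
  norm_num

theorem eval_pderiv_eq_polarization [DecidableEq ι] (hF : F.IsHomogeneous 3) (y : ι → K) (i : ι) :
    eval y (pderiv i F) = 3 * polarization F y y (Pi.single i 1) := by
  rw [← eval_dirDeriv_eq_polarization hF, dirDeriv_apply]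
  simp [Pi.single_apply]

end Polarization

section ConeOfLines

theorem IsSystemOfRepresentatives.exists_submodule {K V : Type*} [Field K] [AddCommGroup V]
    [Module K V] {P : Finset V} {Z : Set V} (hP : IsSystemOfRepresentatives (K := K) P Z)
    {U : Submodule K V} (hZ : Z ⊆ U) :
    ∃ P' : Finset U, P'.card = P.card ∧
      IsSystemOfRepresentatives (K := K) P' {u : U | (u : V) ∈ Z} := by
  classical
  have mem_span_iff {u u' : U} : u ∈ K ∙ u' ↔ (u : V) ∈ K ∙ (u' : V) := by
    simp only [Submodule.mem_span_singleton, Subtype.ext_iff, Submodule.coe_smul]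
  refine ⟨P.subtype (· ∈ U), ?_, ?_, ?_, ?_, ?_⟩
  · rw [Finset.card_subtype]
    exact congrArg _ (Finset.filter_true_of_mem fun p hp => hZ (hP.mem p hp))
  · intro p hp
    simpa using hP.ne_zero p (Finset.mem_subtype.mp hp)
  · exact fun p hp => hP.mem p (Finset.mem_subtype.mp hp)
  · exact fun p hp p' hp' h => Subtype.ext <| hP.eq_of_mem_span p (Finset.mem_subtype.mp hp) p'
      (Finset.mem_subtype.mp hp') (mem_span_iff.mp h)
  · intro z hz hz0
    obtain ⟨p, hp, hzp⟩ := hP.exists_mem_span z hz (by simpa using hz0)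
    exact ⟨⟨p, hZ (hP.mem p hp)⟩, Finset.mem_subtype.mpr hp, mem_span_iff.mpr hzp⟩

theorem mem_lineCone_iff {K V : Type*} [Field K] [CharZero K] [AddCommGroup V] [Module K V]
    {T : V →ₗ[K] V →ₗ[K] V →ₗ[K] K} (hT : IsSymmetric T) {x : V} (hx : T x x x = 0) {v : V} :
    v ∈ lineCone T x ↔ ∀ w ∈ Submodule.span K {x, v}, T w w w = 0 := by
  constructor
  · rintro ⟨⟨h₁, h₂⟩, h₃⟩ w hw
    obtain ⟨a, b, rfl⟩ := Submodule.mem_span_pair.mp hw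
    rw [hT.apply_add_smul]
    simp [hx, h₁, h₂, h₃]
  · intro h
    have hv : T v v v = 0 := h v (Submodule.subset_span (by simp))
    have line (t : K) : 3 * T x x v * t + 3 * T x v v * t ^ 2 = 0 := by
      have := h (x + t • v) (Submodule.mem_span_pair.mpr ⟨1, t, by simp⟩)
      rw [hT.apply_add_smul, hx, hv] at this
      linear_combination this
    refine ⟨⟨?_, ?_⟩, hv⟩
    · linear_combination (1 / 6) * line 1 - (1 / 6) * line (-1)
    · linear_combination (1 / 6) * line 1 + (1 / 6) * line (-1)

variable {n : ℕ} {T : (Fin (n + 1) → KK) →ₗ[KK] (Fin (n + 1) → KK) →ₗ[KK]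
  (Fin (n + 1) → KK) →ₗ[KK] KK} {F : MvPolynomial (Fin (n + 1)) KK}

theorem coneOfLines_eq_projectivize (hF : F.IsHomogeneous 3) (hFT : ∀ y, eval y F = T y y y)
    {x : Pn n} (hx : IsGeneralPoint T x.rep) (hn : 6 ≤ n) :
    coneOfLines (hyp F) x = projectivize (lineCone T x.rep) := by
  have mem_iff {v} := mem_lineCone_iff hx.isSymmetric hx.apply_self (v := v)
  have mem_coneOfLines {y : Pn n} {v} (hv : v ∈ lineCone T x.rep) (hvx : v ∉ KK ∙ x.rep)
      (hy : y.rep ∈ Submodule.span KK {x.rep, v}) : y ∈ coneOfLines (hyp F) x := by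
    have independent : LinearIndependent KK ![x.rep, v] :=
      (LinearIndependent.pair_iff' x.rep_nonzero).mpr fun a ha =>
        hvx (Submodule.mem_span_singleton.mpr ⟨a, ha⟩)
    refine ⟨Submodule.span KK {x.rep, v}, ?_, fun z hz => ?_, Submodule.subset_span (by simp), hy⟩
    · have := finrank_span_eq_card independent
      rwa [Matrix.range_cons_cons_empty, Fintype.card_fin] at this
    · exact (hFT _).trans (mem_iff.mp hv _ hz)
  ext y
  refine ⟨fun ⟨L, _, hL, hxL, hyL⟩ => mem_iff.mpr fun w hw => ?_, fun hy => ?_⟩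
  · have nonempty : (projectivize (L : Set (Fin (n + 1) → KK))).Nonempty := ⟨x, hxL⟩
    rw [← hFT]
    exact eval_eq_zero_of_projectivize_subset_hyp (fun v hv t => L.smul_mem t hv) hF nonempty hL
      (Submodule.span_le.mpr (Set.pair_subset hxL hyL) hw)
  · by_cases hyx : y.rep ∈ KK ∙ x.rep
    · obtain ⟨v, hv, hvx⟩ := hx.exists_mem_lineCone_notMem_span (by simp; omega)
      exact mem_coneOfLines hv hvx (Submodule.span_mono (by simp) hyx)
    · exact mem_coneOfLines hy hyx (Submodule.subset_span (by simp))

end ConeOfLines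

section GeneralCone

variable {n : ℕ} {T : (Fin (n + 1) → KK) →ₗ[KK] (Fin (n + 1) → KK) →ₗ[KK]
  (Fin (n + 1) → KK) →ₗ[KK] KK} {x : Fin (n + 1) → KK}

theorem le_projDim_projectivize {ι : Type*} [Fintype ι] {g : ι → (Fin (n + 1) → KK) → KK}
    (hg : ∀ i, g i ∈ polyFun KK _) (hg0 : ∀ i, g i 0 = 0)
    (hsmul : ∀ v ∈ {v | ∀ i, g i v = 0}, ∀ t : KK, t • v ∈ {v | ∀ i, g i v = 0})
    (hclosed : ProjClosed (projectivize {v | ∀ i, g i v = 0})) {j : ℕ}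
    (hj : Fintype.card ι + j ≤ n) :
    (j : WithBot ℕ∞) ≤ projDim (projectivize {v | ∀ i, g i v = 0}) := by
  by_contra! hlt
  obtain ⟨ℓ, hℓ⟩ := exists_dual_forall_exists_ne_zero hclosed hlt
  obtain ⟨u, hu0, hu⟩ := exists_ne_zero_forall_eq_zero (K := KK) (by simp; omega)
    (Sum.elim g fun i => ℓ i) (by simp [hg, linear_mem_polyFun]) (by simp [hg0])
  obtain ⟨a, ha⟩ := Projectivization.exists_smul_eq_mk_rep KK u hu0
  obtain ⟨i, hi⟩ := hℓ (Projectivization.mk KK u hu0)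
    ((mk_mem_projectivize hsmul hu0).mpr fun i => hu (.inl i))
  rw [← ha, Units.smul_def, map_smul, show ℓ i u = 0 from hu (.inr i), smul_zero] at hi
  exact hi rfl

theorem projClosed_tangentSpace :
    ProjClosed (projectivize (tangentSpace T x : Set (Fin (n + 1) → KK))) :=
  projClosed_setOf_eq_zero (linear_mem_polyFun (T x x)) (d := 1) (by simp)

theorem projClosed_tangentQuadric : ProjClosed (projectivize (tangentQuadric T x)) :=
  projClosed_inter projClosed_tangentSpace
    (projClosed_setOf_eq_zero (bilinear_mem_polyFun (T x)) (d := 2) fun t y => by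
      simp only [map_smul, LinearMap.smul_apply, smul_eq_mul]
      ring)

theorem projClosed_lineCone : ProjClosed (projectivize (lineCone T x)) :=
  projClosed_inter projClosed_tangentQuadric
    (projClosed_setOf_eq_zero (trilinear_mem_polyFun T) (d := 3) fun t y => by
      simp only [map_smul, LinearMap.smul_apply, smul_eq_mul]
      ring)

namespace IsGeneralPoint

variable (hx : IsGeneralPoint T x)
include hx

theorem mem_lineCone_self : x ∈ lineCone T x :=
  ⟨⟨hx.apply_self, hx.apply_self⟩, hx.apply_self⟩

theorem projVariety_of_lineCone_subset {A : Set (Fin (n + 1) → KK)} (hA : PolyIrreducible KK A)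
    (hclosed : ProjClosed (projectivize A)) (hsmul : ∀ v ∈ A, ∀ t : KK, t • v ∈ A)
    (h : lineCone T x ⊆ A) : ProjVariety (projectivize A) :=
  ⟨hclosed, projIrred_projectivize hA hsmul
    ⟨_, (mk_mem_projectivize hsmul hx.ne_zero).mpr (h hx.mem_lineCone_self)⟩⟩

theorem projVariety_lineCone (hn : 6 ≤ n) : ProjVariety (projectivize (lineCone T x)) :=
  hx.projVariety_of_lineCone_subset (hx.polyIrreducible_lineCone (by simp; omega))
    projClosed_lineCone (fun _ hv => smul_mem_lineCone hv) subset_rfl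

theorem projVariety_tangentSpace :
    ProjVariety (projectivize (tangentSpace T x : Set (Fin (n + 1) → KK))) := by
  refine hx.projVariety_of_lineCone_subset ?_ projClosed_tangentSpace
    (fun v hv t => (tangentSpace T x).smul_mem t hv) fun v hv => hv.1.1
  rw [← Subtype.range_coe (s := (tangentSpace T x : Set (Fin (n + 1) → KK))), ← Set.image_univ]
  exact polyIrreducible_univ.image (tangentSpace T x).subtype

theorem projVariety_tangentQuadric (hn : 4 ≤ n) :
    ProjVariety (projectivize (tangentQuadric T x)) :=
  hx.projVariety_of_lineCone_subset (hx.polyIrreducible_tangentQuadric (by simp; omega))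
    projClosed_tangentQuadric (fun v hv t => smul_mem_tangentQuadric hv t) fun v hv => hv.1

theorem projDim_lineCone_lt (hn : 6 ≤ n) :
    projDim (projectivize (lineCone T x)) < ((n - 2 : ℕ) : WithBot ℕ∞) := by
  obtain ⟨m, rfl⟩ := Nat.exists_eq_add_of_le' hn
  have hV : 6 < finrank KK (Fin (m + 6 + 1) → KK) := by simp
  have univ_variety : ProjVariety (projectivize Set.univ) :=
    hx.projVariety_of_lineCone_subset polyIrreducible_univ projClosed_univ (by simp) (by simp)
  obtain ⟨η, hη⟩ := hx.exists_apply_ne_zero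
  have tangentSpace_ssubset : projectivize (tangentSpace T x : Set (Fin (m + 6 + 1) → KK)) ⊂
      projectivize Set.univ :=
    projectivize_ssubset (fun v hv t => (tangentSpace T x).smul_mem t hv) (by simp) (by simp)
      (by rintro rfl; simp at hη) trivial hη
  obtain ⟨q, hq⟩ := hx.exists_polar_ne_zero (by omega)
  have tangentQuadric_ssubset : projectivize (tangentQuadric T x) ⊂
      projectivize (tangentSpace T x : Set (Fin (m + 6 + 1) → KK)) :=
    projectivize_ssubset (fun v hv t => smul_mem_tangentQuadric hv t)
      (fun v hv t => (tangentSpace T x).smul_mem t hv) (fun v hv => hv.1)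
      (by rintro h; simp [h] at hq) q.2 fun h => hq h.2
  obtain ⟨c, hc, hc0⟩ := hx.exists_mem_tangentQuadric_cubic_ne_mul hV (g := 0) (h := 0)
    (zero_mem _) (zero_mem _) (by simp) (by simp)
  have lineCone_ssubset : projectivize (lineCone T x) ⊂ projectivize (tangentQuadric T x) :=
    projectivize_ssubset (fun v hv t => smul_mem_lineCone hv t)
      (fun v hv t => smul_mem_tangentQuadric hv t) (fun v hv => hv.1)
      (by rintro rfl; simp at hc0) hc fun h => by simp [h.2] at hc0
  exact projDim_lt_of_ssubset lineCone_ssubset (hx.projVariety_tangentQuadric (by omega)) <|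
    projDim_lt_of_ssubset tangentQuadric_ssubset hx.projVariety_tangentSpace <|
    projDim_lt_of_ssubset tangentSpace_ssubset univ_variety projDim_univ_lt

omit hx in
theorem le_projDim_lineCone (hn : 3 ≤ n) :
    ((n - 3 : ℕ) : WithBot ℕ∞) ≤ projDim (projectivize (lineCone T x)) := by
  have lineCone_eq : lineCone T x =
      {v | ∀ i, ![fun v => T x x v, fun v => T x v v, fun v => T v v v] i v = 0} := by
    ext v
    simp [Fin.forall_fin_succ, lineCone, tangentQuadric, and_assoc]
  rw [lineCone_eq]
  refine le_projDim_projectivize ?_ (by simp [Fin.forall_fin_succ]) ?_ ?_ (by simp; omega)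
  · simp [Fin.forall_fin_succ, linear_mem_polyFun, bilinear_mem_polyFun, trilinear_mem_polyFun]
  · rw [← lineCone_eq]
    exact fun v hv t => smul_mem_lineCone hv t
  · rw [← lineCone_eq]
    exact projClosed_lineCone

theorem projDim_lineCone (hn : 6 ≤ n) :
    projDim (projectivize (lineCone T x)) = ((n - 3 : ℕ) : WithBot ℕ∞) := by
  refine le_antisymm (ENat.WithBot.lt_add_one_iff.mp ?_) (le_projDim_lineCone (by omega))
  convert hx.projDim_lineCone_lt hn
  norm_cast
  omega

theorem projDeg_lineCone (hn : 6 ≤ n) : projDeg (projectivize (lineCone T x)) = 6 := by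
  refine projDeg_projectivize (fun v hv t => smul_mem_lineCone hv t) (fun W P hP => ?_)
    (hx.exists_six_le_card (by simp; omega))
  let U := W ⊓ tangentSpace T x
  obtain ⟨P', hcard, hP'⟩ := hP.exists_submodule (U := U) fun v hv => ⟨hv.1, hv.2.1.1⟩
  have preimage_eq : {u : U | (u : Fin (n + 1) → KK) ∈ {v | v ∈ W ∧ v ∈ lineCone T x}} =
      {u : U | (T x).domRestrict₁₂ U U u u = 0 ∧
        (T.compl₁₂ U.subtype U.subtype).compr₂ (LinearMap.lcomp KK KK U.subtype) u u u = 0} :=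
    Set.ext fun u => ⟨fun h => ⟨h.2.1.2, h.2.2⟩, fun h => ⟨u.2.1, ⟨u.2.2, h.1⟩, h.2⟩⟩
  rw [← hcard]
  rw [preimage_eq] at hP'
  exact hP'.card_le_six (fun u v => hx.isSymmetric.swap_right _ _ _)
    ⟨fun u v w => hx.isSymmetric.swap_left _ _ _, fun u v w => hx.isSymmetric.swap_right _ _ _⟩

end IsGeneralPoint

end GeneralCone

section Generic

variable {n : ℕ}

theorem projClosed_setOf_not_separatingLeft
    (T : (Fin (n + 1) → KK) →ₗ[KK] (Fin (n + 1) → KK) →ₗ[KK] (Fin (n + 1) → KK) →ₗ[KK] KK) :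
    ProjClosed {x : Pn n | ¬(T x.rep).SeparatingLeft} := by
  let b := Pi.basisFun KK (Fin (n + 1))
  simp only [LinearMap.separatingLeft_iff_det_ne_zero b, not_not]
  refine projClosed_setOf_eq_zero (f := fun x => (LinearMap.toMatrix₂ b b (T x)).det)
    (d := n + 1) (det_mem_polyFun fun i j => ?_) fun t y => ?_
  · simpa [LinearMap.toMatrix₂_apply] using linear_mem_polyFun ((T.flip (b i)).flip (b j))
  · simp only [map_smul, Matrix.det_smul, Fintype.card_fin]

theorem exists_point_separatingLeft {T : (Fin (n + 1) → KK) →ₗ[KK] (Fin (n + 1) → KK) →ₗ[KK]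
    (Fin (n + 1) → KK) →ₗ[KK] KK} (hT : IsSymmetric T) (hns : IsNonsingular T) (hn : 1 ≤ n) :
    ∃ x : Pn n, T x.rep x.rep x.rep = 0 ∧ (T x.rep).SeparatingLeft := by
  obtain ⟨v, hv0, hv, hsep⟩ := exists_forall_apply_eq_zero_imp_eq_zero hT hns (by simp; omega)
  obtain ⟨a, ha⟩ := Projectivization.exists_smul_eq_mk_rep KK v hv0
  refine ⟨Projectivization.mk KK v hv0, ?_, fun w hw => hsep w (LinearMap.ext fun u => ?_)⟩
  · simp [← ha, Units.smul_def, hv]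
  · simpa [← ha, Units.smul_def] using hw u

end Generic

end CubicCone

open CubicCone in
theorem statement14_general (n : ℕ) (hn : 6 ≤ n)
    (F : MvPolynomial (Fin (n + 1)) KK) (hF : F.IsHomogeneous 3)
    (hns : NonsingularK F) :
    ∃ Wbad : Set (Pn n), ProjClosed Wbad ∧ ¬(hyp F ⊆ Wbad) ∧
      ∀ x ∈ hyp F \ Wbad,
        ProjVariety (coneOfLines (hyp F) x) ∧
        projDeg (coneOfLines (hyp F) x) = 6 ∧
        projDim (coneOfLines (hyp F) x) = (((n - 3 : ℕ) : ENat) : WithBot ENat) := by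
  let T := polarization F
  have hFT : ∀ y, MvPolynomial.eval y F = T y y y := eval_eq_polarization hF
  have hT : IsSymmetric T := isSymmetric_polarization
  have hTns : IsNonsingular T := fun z hz => hns z fun i => by
    rw [eval_pderiv_eq_polarization hF, hz, LinearMap.zero_apply, mul_zero]
  refine ⟨_, projClosed_setOf_not_separatingLeft T, fun hsub => ?_, fun x hx => ?_⟩
  · obtain ⟨x, hx, hsep⟩ := exists_point_separatingLeft hT hTns (by omega)
    exact hsub ((hFT _).trans hx) hsep
  · have general : IsGeneralPoint T x.rep := ⟨hT, hTns, x.rep_nonzero, (hFT _).symm.trans hx.1,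
      fun v hv => not_not.mp hx.2 v fun w => by rw [hv, LinearMap.zero_apply]⟩
    rw [coneOfLines_eq_projectivize hF hFT general hn]
    exact ⟨general.projVariety_lineCone hn, general.projDeg_lineCone hn,
      general.projDim_lineCone hn⟩

/-- **Lemma 10.** Let X ⊂ Pⁿ be a non-singular cubic hypersurface with n ≥ 7.  Then
for generic x ∈ X (all x in the complement in X of some proper closed subset) the
cone C¹ₓ of lines of X through x is geometrically integral, of degree 6 and of
dimension n - 3. -/
theorem statement14 (n : ℕ) (hn : 7 ≤ n)
    (F : MvPolynomial (Fin (n + 1)) KK) (hF : F.IsHomogeneous 3)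
    (hns : NonsingularK F) :
    ∃ Wbad : Set (Pn n), ProjClosed Wbad ∧ ¬(hyp F ⊆ Wbad) ∧
      ∀ x ∈ hyp F \ Wbad,
        ProjVariety (coneOfLines (hyp F) x) ∧
        projDeg (coneOfLines (hyp F) x) = 6 ∧
        projDim (coneOfLines (hyp F) x) = (((n - 3 : ℕ) : ENat) : WithBot ENat) := by
  exact statement14_general n (by omega) F hF hns

end
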